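/- arXiv:2105.09001 — 8 statements merged into one kernel-verified Lean document; each statement's English description precedes it below -/
import Mathlib

section
/- Let n ≥ 5. Every local automorphism of the (n+1)-dimensional complex solvable Leibniz algebra R_0 is an automorphism of R_0. -/
/-!
`R₀` is the `(n+1)`-dimensional complex solvable Leibniz algebra with basis
`e_0, e_1, …, e_n` and nonzero products `[e_i, e_1] = e_{i+1}` for `0 ≤ i ≤ n-1`,
`[e_i, e_0] = -i • e_i` for `1 ≤ i ≤ n`.  We realize it on `Fin (n+1) → ℂ`
(with `e_i = Pi.single i 1`), the bracket being given coordinatewise.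
-/

/-- The bracket of the Leibniz algebra `R₀` on `Fin (n+1) → ℂ`. -/
def bracketR0 (n : ℕ) (u v : Fin (n + 1) → ℂ) : Fin (n + 1) → ℂ := fun k =>
  (if 1 ≤ k.val then u ⟨k.val - 1, lt_of_le_of_lt (Nat.sub_le _ _) k.isLt⟩ * v 1 else 0)
    - (k.val : ℂ) * u k * v 0

/-- An automorphism of `R₀`: a bijective `ℂ`-linear map preserving the bracket. -/
def IsAutR0 (n : ℕ) (φ : (Fin (n + 1) → ℂ) →ₗ[ℂ] (Fin (n + 1) → ℂ)) : Prop :=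
  Function.Bijective φ ∧ ∀ u v, φ (bracketR0 n u v) = bracketR0 n (φ u) (φ v)

/-- Basis vectors of `R₀` indexed by naturals (zero out of range). -/
def eR0 (n i : ℕ) : Fin (n + 1) → ℂ := fun k => if k.val = i then 1 else 0

/-- Matrix coefficients of the automorphism with parameters `α, b`. -/
noncomputable def gR0 (α b : ℂ) (i k : ℕ) : ℂ :=
  if i ≤ k then b ^ i * α ^ (k - i) / ((k - i).factorial : ℂ) else 0

lemma val_one_R0 (n : ℕ) (hn : 5 ≤ n) : ((1 : Fin (n + 1)) : ℕ) = 1 := by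
  obtain ⟨m, rfl⟩ : ∃ m, n = m + 1 := ⟨n - 1, by omega⟩
  rfl

lemma one_eq_R0 (n : ℕ) (hn : 5 ≤ n) : (1 : Fin (n + 1)) = ⟨1, by omega⟩ :=
  Fin.ext (val_one_R0 n hn)

lemma br_e1 (n : ℕ) (hn : 5 ≤ n) (i : ℕ) :
    bracketR0 n (eR0 n i) (eR0 n 1) = eR0 n (i + 1) := by
  funext k
  simp only [bracketR0, eR0, val_one_R0 n hn, Fin.val_zero, zero_ne_one, if_false]
  split_ifs <;> first | omega | simp

lemma br_e0 (n : ℕ) (hn : 5 ≤ n) (i : ℕ) :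
    bracketR0 n (eR0 n i) (eR0 n 0) = (-(i : ℂ)) • eR0 n i := by
  funext k
  simp only [bracketR0, eR0, val_one_R0 n hn, Fin.val_zero, Pi.smul_apply]
  by_cases h : k.val = i <;> simp [h]

lemma gR0_succ (α b : ℂ) (i k : ℕ) : gR0 α b (i + 1) (k + 1) = b * gR0 α b i k := by
  simp only [gR0, Nat.add_le_add_iff_right, Nat.add_sub_add_right]
  split_ifs
  · ring
  · ring

/-- `(k+1-i) g i (k+1) = α g i k`. -/
lemma gR0_step (α b : ℂ) (i k : ℕ) :
    ((k : ℂ) + 1 - i) * gR0 α b i (k + 1) = α * gR0 α b i k := by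
  rcases lt_trichotomy i (k + 1) with h | h | h
  · obtain ⟨d, rfl⟩ : ∃ d, k = i + d := ⟨k - i, by omega⟩
    have h1 : i + d + 1 - i = d + 1 := by omega
    have h2 : i + d - i = d := by omega
    have h3 : ((d.factorial : ℕ) : ℂ) ≠ 0 := by exact_mod_cast d.factorial_ne_zero
    have h4 : (d : ℂ) + 1 ≠ 0 := by exact_mod_cast d.succ_ne_zero
    simp only [gR0, h1, h2, show i ≤ i + d + 1 by omega, show i ≤ i + d by omega, if_true,
      Nat.factorial_succ]
    push_cast
    field_simp
    ring
  · subst h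
    simp [gR0]
  · simp [gR0, show ¬ i ≤ k + 1 by omega, show ¬ i ≤ k by omega]

lemma gR0_zero (α b : ℂ) (i : ℕ) : gR0 α b i 0 = if i = 0 then 1 else 0 := by
  by_cases h : i = 0 <;> simp [gR0, h]

lemma eR0_ne (n : ℕ) (i : ℕ) (h : i ≤ n) : eR0 n i ≠ 0 := by
  intro h0
  have := congrFun h0 ⟨i, by omega⟩
  simp [eR0] at this

lemma aut_form (n : ℕ) (hn : 5 ≤ n) (φ : (Fin (n + 1) → ℂ) →ₗ[ℂ] (Fin (n + 1) → ℂ))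
    (h : IsAutR0 n φ) :
    ∃ α b : ℂ, b ≠ 0 ∧ ∀ i k (hk : k < n + 1), φ (eR0 n i) ⟨k, hk⟩ = gR0 α b i k := by
  obtain ⟨⟨hinj, -⟩, hb⟩ := h
  have H1 : ∀ i, φ (eR0 n (i + 1)) = bracketR0 n (φ (eR0 n i)) (φ (eR0 n 1)) := by
    intro i; rw [← hb, br_e1 n hn]
  have H0 : ∀ i : ℕ, (-(i : ℂ)) • φ (eR0 n i) = bracketR0 n (φ (eR0 n i)) (φ (eR0 n 0)) := by
    intro i; rw [← hb, br_e0 n hn, map_smul]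
  have z : φ (eR0 n 1) 0 = 0 := by
    have := congrFun (H1 0) 0
    simpa [bracketR0] using this
  have S : ∀ i k (hk : k + 1 < n + 1), φ (eR0 n (i + 1)) ⟨k + 1, hk⟩
      = φ (eR0 n i) ⟨k, by omega⟩ * φ (eR0 n 1) 1 := by
    intro i k hk
    have := congrFun (H1 i) ⟨k + 1, hk⟩
    simpa [bracketR0, z] using this
  have S0 : ∀ i, φ (eR0 n (i + 1)) 0 = 0 := by
    intro i
    have := congrFun (H1 i) 0
    simpa [bracketR0] using this
  have b0 : φ (eR0 n 1) 1 ≠ 0 := by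
    intro hb0
    apply eR0_ne n 1 (by omega)
    apply hinj
    rw [map_zero]
    funext ⟨k, hk⟩
    cases k with
    | zero => exact z
    | succ k => rw [S 0 k hk, hb0]; simp
  have c1 : φ (eR0 n 0) 0 = 1 := by
    have := congrFun (H0 1) 1
    simp only [bracketR0, val_one_R0 n hn, Pi.smul_apply, smul_eq_mul] at this
    simp only [le_refl, if_true, Nat.cast_one, Nat.sub_self] at this
    have z' : φ (eR0 n 1) ⟨0, by omega⟩ = 0 := z
    rw [z'] at this
    have h3 : φ (eR0 n 1) 1 * (φ (eR0 n 0) 0 - 1) = 0 := by linear_combination this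
    rcases mul_eq_zero.1 h3 with h | h
    · exact absurd h b0
    · linear_combination h
  refine ⟨φ (eR0 n 0) 1, φ (eR0 n 1) 1, b0, ?_⟩
  intro i
  induction i with
  | zero =>
    intro k
    induction k with
    | zero => intro hk; rw [gR0_zero]; simpa using c1
    | succ k ih =>
      intro hk
      have := congrFun (H0 0) ⟨k + 1, hk⟩
      simp [bracketR0, c1] at this
      have ih' := ih (by omega)
      have st := gR0_step (φ (eR0 n 0) 1) (φ (eR0 n 1) 1) 0 k
      have hk1 : (k : ℂ) + 1 ≠ 0 := by exact_mod_cast k.succ_ne_zero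
      apply mul_left_cancel₀ hk1
      rw [ih'] at this
      push_cast at st
      linear_combination -st + this
  | succ i ih =>
    intro k hk
    cases k with
    | zero => rw [gR0_zero]; simpa using S0 i
    | succ k => rw [S i k hk, ih, gR0_succ]; ring

/-- The bracket operators. -/
lemma form_aut (n : ℕ) (hn : 5 ≤ n) (Φ : (Fin (n + 1) → ℂ) →ₗ[ℂ] (Fin (n + 1) → ℂ))
    (α b : ℂ) (hΦ : ∀ i, i ≤ n → ∀ k (hk : k < n + 1), Φ (eR0 n i) ⟨k, hk⟩ = gR0 α b i k) :
    ∀ u v, Φ (bracketR0 n u v) = bracketR0 n (Φ u) (Φ v) := by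
  have hΦ' : ∀ i k (hk : k < n + 1), Φ (eR0 n i) ⟨k, hk⟩ = gR0 α b i k := by
    intro i k hk
    by_cases h : i ≤ n
    · exact hΦ i h k hk
    · have : eR0 n i = 0 := by
        funext j; simp [eR0]; omega
      rw [this]; simp [gR0, show ¬ i ≤ k by omega]
  have hsum : ∀ u : Fin (n + 1) → ℂ, u = ∑ i : Fin (n + 1), u i • eR0 n i := by
    intro u
    funext k
    simp [eR0, Finset.sum_apply, Fin.val_inj]
  have hl : ∀ v, IsLinearMap ℂ (fun u => bracketR0 n u v) := by
    intro v
    constructor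
    · intro x y; funext k; simp only [bracketR0, Pi.add_apply]; split_ifs <;> ring
    · intro c x; funext k; simp only [bracketR0, Pi.smul_apply, smul_eq_mul]; split_ifs <;> ring
  have hr : ∀ u, IsLinearMap ℂ (fun v => bracketR0 n u v) := by
    intro v
    constructor
    · intro x y; funext k; simp only [bracketR0, Pi.add_apply]; split_ifs <;> ring
    · intro c x; funext k; simp only [bracketR0, Pi.smul_apply, smul_eq_mul]; split_ifs <;> ring
  let B : (Fin (n + 1) → ℂ) →ₗ[ℂ] (Fin (n + 1) → ℂ) →ₗ[ℂ] (Fin (n + 1) → ℂ) :=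
    LinearMap.mk₂ ℂ (bracketR0 n) (fun x y v => (hl v).map_add x y)
      (fun c x v => (hl v).map_smul c x) (fun u x y => (hr u).map_add x y)
      (fun c u x => (hr u).map_smul c x)
  have key : ∀ i j : ℕ, Φ (bracketR0 n (eR0 n i) (eR0 n j))
      = bracketR0 n (Φ (eR0 n i)) (Φ (eR0 n j)) := by
    intro i j
    have a0 : ∀ j, Φ (eR0 n j) 0 = gR0 α b j 0 := fun j => hΦ' j 0 (by omega)
    have a1 : ∀ j, Φ (eR0 n j) 1 = gR0 α b j 1 := fun j => by
      rw [one_eq_R0 n hn]; exact hΦ' j 1 (by omega)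
    funext ⟨k, hk⟩
    rcases j with _ | _ | j
    · rw [br_e0 n hn]
      simp only [bracketR0, a0, a1, map_smul, Pi.smul_apply, smul_eq_mul, hΦ']
      rcases k with _ | k
      · simp [gR0_zero]
      · have st := gR0_step α b i k
        have x0 : gR0 α b 0 0 = 1 := by simp [gR0]
        have x1 : gR0 α b 0 1 = α := by simp [gR0]
        simp only [x0, x1, Nat.add_sub_cancel, Nat.le_add_left, if_true, zero_add]
        push_cast
        linear_combination st
    · rw [br_e1 n hn]
      simp only [bracketR0, a0, a1, hΦ']
      rcases k with _ | k
      · simp [gR0_zero]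
      · rw [gR0_succ]
        simp [gR0]
        ring
    · have : bracketR0 n (eR0 n i) (eR0 n (j + 1 + 1)) = 0 := by
        funext k
        have q : ¬ 1 = j + 1 + 1 := by omega
        simp only [bracketR0, eR0, val_one_R0 n hn, q]
        simp
      rw [this]
      simp only [bracketR0, a0, a1, hΦ']
      simp [gR0]
  intro u v
  have e1 : Φ (B u v) = B (Φ u) (Φ v) := by
    rw [hsum u, hsum v]
    simp only [map_sum, map_smul, LinearMap.sum_apply, LinearMap.smul_apply]
    refine Finset.sum_congr rfl fun i _ => ?_
    congr 1
    refine Finset.sum_congr rfl fun j _ => ?_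
    congr 1
    exact key j i
  exact e1

/-- Every local automorphism of `R₀` is an automorphism. -/
theorem every_local_automorphism_of_R0_is_automorphism
    (n : ℕ) (hn : 5 ≤ n)
    (Φ : (Fin (n + 1) → ℂ) →ₗ[ℂ] (Fin (n + 1) → ℂ))
    (hloc : ∀ a : Fin (n + 1) → ℂ, ∃ φ, IsAutR0 n φ ∧ Φ a = φ a) :
    IsAutR0 n Φ := by
  have hinj : Function.Injective Φ := by
    rw [injective_iff_map_eq_zero]
    intro a ha
    obtain ⟨φ, hφ, h⟩ := hloc a
    exact hφ.1.1 (by rw [← h, ha, map_zero])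
  refine ⟨⟨hinj, LinearMap.injective_iff_surjective.1 hinj⟩, ?_⟩
  have single : ∀ i, ∃ α b : ℂ, b ≠ 0 ∧ ∀ k (hk : k < n + 1),
      Φ (eR0 n i) ⟨k, hk⟩ = gR0 α b i k := by
    intro i
    obtain ⟨φ, hφ, h⟩ := hloc (eR0 n i)
    obtain ⟨α, b, hb, hf⟩ := aut_form n hn φ hφ
    exact ⟨α, b, hb, fun k hk => by rw [h, hf]⟩
  have pair : ∀ i j (t : ℂ), ∃ A B : ℂ, B ≠ 0 ∧ ∀ k (hk : k < n + 1),
      Φ (eR0 n i) ⟨k, hk⟩ + t * Φ (eR0 n j) ⟨k, hk⟩ = gR0 A B i k + t * gR0 A B j k := by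
    intro i j t
    obtain ⟨φ, hφ, h⟩ := hloc (eR0 n i + t • eR0 n j)
    obtain ⟨α, b, hb, hf⟩ := aut_form n hn φ hφ
    refine ⟨α, b, hb, fun k hk => ?_⟩
    have := congrFun h ⟨k, hk⟩
    simpa [hf] using this
  obtain ⟨α, b, hb, h0⟩ := single 0
  obtain ⟨γ, β, hβ, h1⟩ := single 1
  have hγ : γ = α := by
    by_contra hne
    obtain ⟨A, B, hB, h⟩ := pair 0 1 (2 * (γ - α) / β)
    have q1 := h 1 (by omega)
    have q2 := h 2 (by omega)
    have q3 := h 3 (by omega)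
    rw [h0, h1] at q1 q2 q3
    obtain ⟨t, ht⟩ : ∃ t, t = 2 * (γ - α) / β := ⟨_, rfl⟩
    have ht2 : t * β = 2 * (γ - α) := by rw [ht]; field_simp
    rw [← ht] at q1 q2 q3
    simp [gR0, Nat.factorial] at q1 q2 q3
    obtain ⟨g, rfl⟩ : ∃ g, γ = α + g := ⟨γ - α, by ring⟩
    obtain ⟨d, rfl⟩ : ∃ d, A = α + d := ⟨A - α, by ring⟩
    have e1 : t * B = 2 * g - d := by linear_combination ht2 - q1
    have e0 : t * β = 2 * g := by linear_combination ht2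
    have e2 : d ^ 2 = 4 * g * (d - g) := by
      linear_combination (2 : ℂ) * q2 - 2 * (α + g) * e0 + 2 * (α + d) * e1
    have e3 : g ^ 3 = d ^ 2 * g - d ^ 3 / 3 := by
      linear_combination q3 - (α + g) ^ 2 / 2 * e0 + (α + d) ^ 2 / 2 * e1 - α / 2 * e2
    have hg : g ^ 3 = 0 := by
      linear_combination (-3 : ℂ) * e3 + (d + g) * e2
    exact hne (by rw [pow_eq_zero_iff (by norm_num)] at hg; rw [hg]; ring)
  subst hγ
  apply form_aut n hn Φ γ β
  intro j hj
  rcases Nat.lt_or_ge j 2 with hj2 | hj2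
  · interval_cases j
    · intro k hk; rw [h0]; simp [gR0]
    · exact h1
  have hc : ∃ c, ∀ k (hk : k < n + 1), Φ (eR0 n j) ⟨k, hk⟩ = gR0 γ c j k := by
    obtain ⟨A, B, hB, h⟩ := pair 0 j 1
    obtain ⟨α', b', hb', h'⟩ := single j
    have q1 := h 1 (by omega)
    rw [h0, h'] at q1
    simp [gR0, show ¬ j ≤ 1 by omega] at q1
    subst q1
    refine ⟨B, fun k hk => ?_⟩
    have := h k hk
    rw [h0] at this
    simp only [gR0, pow_zero] at this ⊢
    linear_combination this
  obtain ⟨c, hc⟩ := hc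
  have hcj : c ^ j = β ^ j := by
    obtain ⟨A, B, hB, h⟩ := pair 1 j 1
    have q1 := h 1 (by omega)
    have q2 := h 2 (by omega)
    have q3 := h 3 (by omega)
    have q4 := h 4 (by omega)
    have qj := h j (by omega)
    rw [h1, hc] at q1 q2 q3 q4 qj
    simp [gR0, show ¬ j ≤ 1 by omega] at q1
    subst q1
    have hA : A = γ := by
      rcases Nat.lt_or_ge 2 j with hj3 | hj3
      · simp [gR0, show ¬ j ≤ 2 by omega] at q2
        rcases q2 with q2 | q2
        · exact q2.symm
        · exact absurd q2 hB
      · obtain rfl : j = 2 := by omega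
        simp [gR0, Nat.factorial] at q2 q3 q4
        obtain ⟨d, rfl⟩ : ∃ d, A = γ + d := ⟨A - γ, by ring⟩
        have e2 : c ^ 2 = β * d + β ^ 2 := by linear_combination q2
        have e3 : β * d ^ 2 / 2 + β ^ 2 * d = 0 := by
          linear_combination γ * e2 - q3
        have e4 : β * d ^ 3 / 6 + β ^ 2 * d ^ 2 / 2 = 0 := by
          linear_combination γ ^ 2 / 2 * e2 - q4 - γ * e3
        have e5 : (β * β * β) * d = 0 := by
          linear_combination (β + d) * e3 - 3 * e4
        have : d = 0 := by
          rcases mul_eq_zero.1 e5 with h | h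
          · simp [hB] at h
          · exact h
        rw [this]; ring
    subst hA
    simp [gR0] at qj
    exact qj
  intro k hk
  rw [hc]
  simp only [gR0, hcj]
end

section
/- Let n ≥ 5. Every local automorphism of the (n+2)-dimensional complex solvable Leibniz algebra R_1 is an automorphism of R_1. -/
/-!
`R₁` is the `(n+2)`-dimensional complex solvable Leibniz algebra with basis
`e_1, …, e_n, x, y` and nonzero products `[e_i, e_1] = e_{i+1}` for `2 ≤ i ≤ n-1`,
`[e_1, x] = e_1`, `[x, e_1] = -e_1`, `[e_i, x] = (i-1) • e_i` for `2 ≤ i ≤ n`,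
`[e_i, y] = e_i` for `2 ≤ i ≤ n`.  We realize it on `Fin (n+2) → ℂ`, where
`x = Pi.single 0 1`, `e_i = Pi.single i 1` for `1 ≤ i ≤ n` and
`y = Pi.single (Fin.last (n+1)) 1`, the bracket being given coordinatewise.
-/

/-- The bracket of the Leibniz algebra `R₁` on `Fin (n+2) → ℂ`. -/
def bracketR1 (n : ℕ) (u v : Fin (n + 2) → ℂ) : Fin (n + 2) → ℂ := fun k =>
  if k.val = 1 then u 1 * v 0 - u 0 * v 1
  else if 2 ≤ k.val ∧ k.val ≤ n then
    (if 3 ≤ k.val then u ⟨k.val - 1, lt_of_le_of_lt (Nat.sub_le _ _) k.isLt⟩ * v 1 else 0)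
      + ((k.val : ℂ) - 1) * u k * v 0 + u k * v (Fin.last (n + 1))
  else 0

/-- An automorphism of `R₁`: a bijective `ℂ`-linear map preserving the bracket. -/
def IsAutR1 (n : ℕ) (φ : (Fin (n + 2) → ℂ) →ₗ[ℂ] (Fin (n + 2) → ℂ)) : Prop :=
  Function.Bijective φ ∧ ∀ u v, φ (bracketR1 n u v) = bracketR1 n (φ u) (φ v)

namespace R1aux

/-- Basis vectors indexed by natural numbers. -/
def E (n k : ℕ) : Fin (n + 2) → ℂ := fun j => if j.val = k then 1 else 0

/-- Coordinates indexed by natural numbers. -/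
noncomputable def C (n k : ℕ) : (Fin (n + 2) → ℂ) →ₗ[ℂ] ℂ :=
  if h : k < n + 2 then LinearMap.proj ⟨k, h⟩ else 0

lemma C_apply {n k : ℕ} (h : k < n + 2) (v : Fin (n + 2) → ℂ) : C n k v = v ⟨k, h⟩ := by
  simp [C, h]

lemma C_E {n k j : ℕ} (h : k < n + 2) : C n k (E n j) = if k = j then 1 else 0 := by
  simp [C_apply h, E]

lemma ext_C {n : ℕ} {u v : Fin (n + 2) → ℂ} (h : ∀ k, k < n + 2 → C n k u = C n k v) :
    u = v := by
  funext ⟨k, hk⟩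
  simpa [C_apply hk] using h k hk

lemma ext_cases {n : ℕ} {u v : Fin (n + 2) → ℂ} (h0 : C n 0 u = C n 0 v)
    (h1 : C n 1 u = C n 1 v) (h2 : C n 2 u = C n 2 v)
    (hk : ∀ k, 3 ≤ k → k ≤ n → C n k u = C n k v)
    (hl : C n (n+1) u = C n (n+1) v) : u = v := by
  apply ext_C
  intro k hk'
  rcases Nat.lt_or_ge k 3 with h | h
  · interval_cases k <;> assumption
  · rcases Nat.lt_or_ge n k with h' | h'
    · obtain rfl : k = n + 1 := by omega
      exact hl
    · exact hk k h h'

variable {n : ℕ}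

lemma v_zero (v : Fin (n + 2) → ℂ) : v 0 = C n 0 v := by
  rw [C_apply (by omega)]; rfl
lemma v_one (v : Fin (n + 2) → ℂ) : v 1 = C n 1 v := by
  rw [C_apply (by omega)]; rfl
lemma v_last (v : Fin (n + 2) → ℂ) : v (Fin.last (n + 1)) = C n (n+1) v := by
  rw [C_apply (by omega)]; rfl

lemma br0 (u v : Fin (n + 2) → ℂ) : C n 0 (bracketR1 n u v) = 0 := by
  rw [C_apply (by omega)]; simp [bracketR1]

lemma brl (hn : 5 ≤ n) (u v : Fin (n + 2) → ℂ) : C n (n+1) (bracketR1 n u v) = 0 := by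
  rw [C_apply (by omega)]; simp [bracketR1]; omega

lemma br1 (u v : Fin (n + 2) → ℂ) :
    C n 1 (bracketR1 n u v) = C n 1 u * C n 0 v - C n 0 u * C n 1 v := by
  rw [C_apply (by omega)]; simp [bracketR1, v_zero, v_one]

lemma br2 (hn : 5 ≤ n) (u v : Fin (n + 2) → ℂ) :
    C n 2 (bracketR1 n u v) = C n 2 u * C n 0 v + C n 2 u * C n (n+1) v := by
  rw [C_apply (by omega)]
  have : 2 ≤ n := by omega
  simp only [bracketR1, v_zero, v_one, v_last, C_apply (show 2 < n + 2 by omega)]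
  simp [this]
  left
  norm_num

lemma brk {k : ℕ} (h3 : 3 ≤ k) (hk : k ≤ n) (u v : Fin (n + 2) → ℂ) :
    C n k (bracketR1 n u v) = C n (k-1) u * C n 1 v + ((k:ℂ) - 1) * C n k u * C n 0 v
      + C n k u * C n (n+1) v := by
  rw [C_apply (show k < n + 2 by omega)]
  have h1 : k ≠ 1 := by omega
  have h2 : 2 ≤ k := by omega
  simp only [bracketR1, v_zero, v_one, v_last, C_apply (show k < n + 2 by omega),
    C_apply (show k - 1 < n + 2 by omega)]
  simp [h1, h2, h3, hk]

lemma expand (v : Fin (n + 2) → ℂ) : v = ∑ k ∈ Finset.range (n+2), C n k v • E n k := by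
  apply ext_C
  intro k hk
  rw [map_sum, Finset.sum_eq_single k]
  · simp [C_E hk]
  · intro b _ hb
    simp [C_E hk, hb.symm]
  · simp; omega

lemma map_expand (φ : (Fin (n + 2) → ℂ) →ₗ[ℂ] (Fin (n + 2) → ℂ)) (v : Fin (n + 2) → ℂ) (j : ℕ) :
    C n j (φ v) = ∑ k ∈ Finset.range (n+2), C n k v * C n j (φ (E n k)) := by
  conv_lhs => rw [expand v]
  simp

lemma bE1 (hn : 5 ≤ n) {i : ℕ} (h2 : 2 ≤ i) (hi : i < n) :
    bracketR1 n (E n i) (E n 1) = E n (i+1) := by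
  apply ext_cases
  · rw [br0, C_E (by omega)]; simp
  · rw [br1, C_E (by omega), C_E (by omega), C_E (by omega), C_E (by omega), C_E (by omega)]
    simp [show (1:ℕ) ≠ i by omega, show i ≠ 0 by omega, show 0 ≠ i by omega]
  · rw [br2 hn, C_E (by omega), C_E (by omega), C_E (by omega), C_E (by omega)]
    simp; split_ifs <;> first | omega | simp
  · intro k h3 hk
    rw [brk h3 hk]
    rw [C_E (by omega), C_E (by omega), C_E (by omega), C_E (by omega), C_E (by omega), C_E (by omega)]
    simp; split_ifs <;> first | omega | simp
  · rw [brl hn, C_E (by omega)]; split_ifs <;> first | omega | simp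

lemma bEx (hn : 5 ≤ n) {i : ℕ} (h2 : 2 ≤ i) (hi : i ≤ n) :
    bracketR1 n (E n i) (E n 0) = ((i:ℂ)-1) • E n i := by
  apply ext_cases
  · rw [br0, map_smul, C_E (by omega)]; simp; omega
  · rw [br1, map_smul, C_E (by omega), C_E (by omega), C_E (by omega), C_E (by omega)]
    simp [show (1:ℕ) ≠ i by omega]
  · rw [br2 hn, map_smul, C_E (by omega), C_E (by omega), C_E (by omega)]
    simp; split_ifs with h
    · rw [← h]; norm_num
    · rfl
  · intro k h3 hk
    rw [brk h3 hk, map_smul]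
    rw [C_E (by omega), C_E (by omega), C_E (by omega), C_E (by omega), C_E (by omega)]
    simp; split_ifs with h
    · rw [h]
    · rfl
  · rw [brl hn, map_smul, C_E (by omega)]; split_ifs <;> first | omega | simp

lemma bEy (hn : 5 ≤ n) {i : ℕ} (h2 : 2 ≤ i) (hi : i ≤ n) :
    bracketR1 n (E n i) (E n (n+1)) = E n i := by
  apply ext_cases
  · rw [br0, C_E (by omega)]; simp; omega
  · rw [br1, C_E (by omega), C_E (by omega), C_E (by omega), C_E (by omega)]
    simp; split_ifs <;> first | omega | simp
  · rw [br2 hn, C_E (by omega), C_E (by omega), C_E (by omega)]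
    simp
  · intro k h3 hk
    rw [brk h3 hk]
    rw [C_E (by omega), C_E (by omega), C_E (by omega), C_E (by omega), C_E (by omega)]
    simp; omega
  · rw [brl hn, C_E (by omega)]; split_ifs <;> first | omega | simp

/-- left multiplication by x -/
lemma bxv (hn : 5 ≤ n) (v : Fin (n + 2) → ℂ) :
    bracketR1 n (E n 0) v = - C n 1 v • E n 1 := by
  apply ext_cases
  · rw [br0, map_smul, C_E (by omega)]; simp
  · rw [br1, map_smul, C_E (by omega), C_E (by omega), C_E (by omega)]; simp
  · rw [br2 hn, map_smul, C_E (by omega), C_E (by omega)]; simp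
  · intro k h3 hk
    rw [brk h3 hk, map_smul, C_E (by omega), C_E (by omega), C_E (by omega),
      if_neg (by omega), if_neg (by omega), if_neg (by omega)]; simp
  · rw [brl hn, map_smul, C_E (by omega)]; split_ifs <;> first | omega | simp

lemma b1v (hn : 5 ≤ n) (v : Fin (n + 2) → ℂ) :
    bracketR1 n (E n 1) v = C n 0 v • E n 1 := by
  apply ext_cases
  · rw [br0, map_smul, C_E (by omega)]; simp
  · rw [br1, map_smul, C_E (by omega), C_E (by omega)]; simp
  · rw [br2 hn, map_smul, C_E (by omega)]; simp
  · intro k h3 hk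
    rw [brk h3 hk, map_smul, C_E (by omega), C_E (by omega),
      if_neg (by omega), if_neg (by omega)]; simp
  · rw [brl hn, map_smul, C_E (by omega)]; split_ifs <;> first | omega | simp

lemma byv (hn : 5 ≤ n) (v : Fin (n + 2) → ℂ) :
    bracketR1 n (E n (n+1)) v = 0 := by
  apply ext_cases
  · rw [br0]; simp
  · rw [br1, C_E (by omega), C_E (by omega), if_neg (by omega), if_neg (by omega)]; simp
  · rw [br2 hn, C_E (by omega), if_neg (by omega)]; simp
  · intro k h3 hk
    rw [brk h3 hk, C_E (by omega), C_E (by omega),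
      if_neg (by omega), if_neg (by omega)]; simp
  · rw [brl hn]; simp

theorem aut_struct (hn : 5 ≤ n) {φ : (Fin (n + 2) → ℂ) →ₗ[ℂ] (Fin (n + 2) → ℂ)}
    (h : IsAutR1 n φ) : ∃ a b c : ℂ, a ≠ 0 ∧ b ≠ 0 ∧ φ (E n 0) = E n 0 + c • E n 1 ∧
      φ (E n 1) = a • E n 1 ∧ φ (E n (n+1)) = E n (n+1) ∧
      (∀ i, 2 ≤ i → i ≤ n → C n 0 (φ (E n i)) = 0 ∧ C n 1 (φ (E n i)) = 0 ∧
        C n (n+1) (φ (E n i)) = 0) ∧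
      (∀ i k, 2 ≤ i → i ≤ n → 3 ≤ k → k ≤ n →
        ((k:ℂ) - i) * C n k (φ (E n i)) = - c * C n (k-1) (φ (E n i))) ∧
      (∀ i, 3 ≤ i → i ≤ n → C n 2 (φ (E n i)) = 0) ∧ C n 2 (φ (E n 2)) = b ∧
      (∀ i k, 2 ≤ i → i < n → 3 ≤ k → k ≤ n →
        C n k (φ (E n (i+1))) = a * C n (k-1) (φ (E n i))) := by
  obtain ⟨hbij, hbr⟩ := h
  have hC10 : C n 1 (E n 0) = 0 := by rw [C_E (by omega)]; simp
  have hC00 : C n 0 (E n 0) = 1 := by rw [C_E (by omega)]; simp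
  have hC01 : C n 0 (E n 1) = 0 := by rw [C_E (by omega)]; simp
  have hC11 : C n 1 (E n 1) = 1 := by rw [C_E (by omega)]; simp
  have hC0l : C n 0 (E n (n+1)) = 0 := by rw [C_E (by omega)]; simp
  have hC1l : C n 1 (E n (n+1)) = 0 := by rw [C_E (by omega), if_neg (by omega)]
  -- relations
  have r1x : φ (E n 1) = bracketR1 n (φ (E n 1)) (φ (E n 0)) := by
    rw [← hbr, b1v hn, hC00, one_smul]
  have r11 : bracketR1 n (φ (E n 1)) (φ (E n 1)) = 0 := by
    rw [← hbr, b1v hn, hC01, zero_smul, map_zero]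
  have r1y : bracketR1 n (φ (E n 1)) (φ (E n (n+1))) = 0 := by
    rw [← hbr, b1v hn, hC0l, zero_smul, map_zero]
  have rx1 : bracketR1 n (φ (E n 0)) (φ (E n 1)) = - φ (E n 1) := by
    rw [← hbr, bxv hn, hC11]; simp
  have rxx : bracketR1 n (φ (E n 0)) (φ (E n 0)) = 0 := by
    rw [← hbr, bxv hn, hC10]; simp
  have rxy : bracketR1 n (φ (E n 0)) (φ (E n (n+1))) = 0 := by
    rw [← hbr, bxv hn, hC1l]; simp
  have ry : ∀ v, bracketR1 n (φ (E n (n+1))) (φ v) = 0 := by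
    intro v; rw [← hbr, byv hn, map_zero]
  have riy : ∀ i, 2 ≤ i → i ≤ n → φ (E n i) = bracketR1 n (φ (E n i)) (φ (E n (n+1))) := by
    intro i h2 hi; rw [← hbr, bEy hn h2 hi]
  have rix : ∀ i, 2 ≤ i → i ≤ n →
      bracketR1 n (φ (E n i)) (φ (E n 0)) = ((i:ℂ)-1) • φ (E n i) := by
    intro i h2 hi; rw [← hbr, bEx hn h2 hi, map_smul]
  have ri1 : ∀ i, 2 ≤ i → i < n →
      φ (E n (i+1)) = bracketR1 n (φ (E n i)) (φ (E n 1)) := by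
    intro i h2 hi; rw [← hbr, bE1 hn h2 hi]
  have rxi : ∀ i, 2 ≤ i → i ≤ n → bracketR1 n (φ (E n 0)) (φ (E n i)) = 0 := by
    intro i h2 hi; rw [← hbr, bxv hn, C_E (by omega), if_neg (by omega)]; simp
  -- coordinates 0, n+1
  have p0 : C n 0 (φ (E n 1)) = 0 := by rw [r1x, br0]
  have pl : C n (n+1) (φ (E n 1)) = 0 := by rw [r1x, brl hn]
  have q0 : ∀ i, 2 ≤ i → i ≤ n → C n 0 (φ (E n i)) = 0 := by
    intro i h2 hi; rw [riy i h2 hi, br0]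
  have ql : ∀ i, 2 ≤ i → i ≤ n → C n (n+1) (φ (E n i)) = 0 := by
    intro i h2 hi; rw [riy i h2 hi, brl hn]
  have q1 : ∀ i, 2 ≤ i → i ≤ n → C n 1 (φ (E n i)) = 0 := by
    intro i h2 hi
    rcases Nat.lt_or_ge 2 i with h | h
    · obtain ⟨j, rfl⟩ : ∃ j, i = j + 1 := ⟨i - 1, by omega⟩
      rw [ri1 j (by omega) (by omega), br1, p0, q0 j (by omega) (by omega)]; simp
    · obtain rfl : i = 2 := by omega
      have e1 := congrArg (C n 1) (rix 2 le_rfl hi)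
      have e2 := congrArg (C n 1) (rxi 2 le_rfl hi)
      rw [br1, q0 2 le_rfl hi] at e1 e2
      simp at e1 e2
      norm_num at e1
      rcases e2 with e | e
      · rw [e] at e1; simpa using e1.symm
      · exact e
  have pre : ∀ j, 1 ≤ j → j ≤ 2 → ∃ z, φ z = E n j ∧ C n 0 z = 0 ∧ C n (n+1) z = 0 := by
    intro j h1 h2
    obtain ⟨s, hs⟩ := hbij.2 (E n j)
    obtain ⟨t, ht⟩ := hbij.2 (E n 0)
    have : bracketR1 n (E n j) (E n 0) = E n j := by
      interval_cases j
      · rw [b1v hn, hC00, one_smul]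
      · rw [bEx hn (by omega) (by omega)]; norm_num
    exact ⟨bracketR1 n s t, by rw [hbr, hs, ht, this], br0 _ _, brl hn _ _⟩
  have hp1 : C n 1 (φ (E n 1)) ≠ 0 := by
    obtain ⟨z, hz, hz0, hzl⟩ := pre 1 le_rfl (by omega)
    have := map_expand φ z 1
    rw [hz, hC11, Finset.sum_eq_single 1] at this
    · intro h; rw [h] at this; simp at this
    · intro k hk hk1
      simp at hk
      rcases Nat.lt_or_ge k 1 with h | h
      · obtain rfl : k = 0 := by omega
        rw [hz0, zero_mul]
      · rcases Nat.lt_or_ge n k with h' | h'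
        · obtain rfl : k = n + 1 := by omega
          rw [hzl, zero_mul]
        · rw [q1 k (by omega) h', mul_zero]
    · intro h; simp at h
  have w0 : C n 0 (φ (E n 0)) = 1 := by
    have := congrArg (C n 1) r1x
    rw [br1, p0] at this
    apply mul_left_cancel₀ hp1
    linear_combination -this
  have u0 : C n 0 (φ (E n (n+1))) = 0 := by
    have := congrArg (C n 1) r1y
    rw [br1, p0] at this
    simpa [hp1] using this
  have p2 : C n 2 (φ (E n 1)) = 0 := by
    have := congrArg (C n 2) rx1
    rw [br2 hn, p0, pl] at this
    simpa using this
  have pk : ∀ k, 2 ≤ k → k < n → C n k (φ (E n 1)) = 0 := by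
    intro k h2 hk
    have := congrArg (C n (k+1)) r11
    rw [brk (by omega) (by omega), p0, pl] at this
    simpa [hp1] using this
  have wk : ∀ k, 2 ≤ k → k < n → C n k (φ (E n 0)) * C n 1 (φ (E n 1)) = - C n (k+1) (φ (E n 1)) := by
    intro k h2 hk
    have := congrArg (C n (k+1)) rx1
    rw [brk (by omega) (by omega), p0, pl] at this
    simpa using this
  have q2 : ∀ i, 3 ≤ i → i ≤ n → C n 2 (φ (E n i)) = 0 := by
    intro i h3 hi
    obtain ⟨j, rfl⟩ : ∃ j, i = j + 1 := ⟨i - 1, by omega⟩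
    rw [ri1 j (by omega) (by omega), br2 hn, p0, pl]; simp
  have hb : C n 2 (φ (E n 2)) ≠ 0 := by
    obtain ⟨z, hz, hz0, hzl⟩ := pre 2 (by omega) le_rfl
    have := map_expand φ z 2
    rw [hz, C_E (by omega), if_pos rfl, Finset.sum_eq_single 2] at this
    · intro h; rw [h] at this; simp at this
    · intro k hk hk1
      simp at hk
      rcases Nat.lt_or_ge k 2 with h | h
      · interval_cases k
        · rw [hz0, zero_mul]
        · rw [p2, mul_zero]
      · rcases Nat.lt_or_ge n k with h' | h'
        · obtain rfl : k = n + 1 := by omega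
          rw [hzl, zero_mul]
        · rw [q2 k (by omega) h', mul_zero]
    · intro h; simp at h; omega
  have wl : C n (n+1) (φ (E n 0)) = 0 := by
    have := congrArg (C n 2) (rix 2 le_rfl (by omega))
    rw [br2 hn, w0, map_smul] at this
    apply mul_left_cancel₀ hb
    norm_num at this ⊢
    rcases this with h | h
    · exact absurd h hb
    · right; exact h
  have pn : C n n (φ (E n 1)) = 0 := by
    have := congrArg (C n n) r1x
    rw [brk (by omega) (by omega), w0, wl, pk (n-1) (by omega) (by omega)] at this
    have h5 : (n:ℂ) - 2 ≠ 0 := by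
      rw [sub_ne_zero]; exact_mod_cast (by omega : n ≠ 2)
    apply mul_left_cancel₀ h5
    linear_combination -this
  have wk' : ∀ k, 2 ≤ k → k < n → C n k (φ (E n 0)) = 0 := by
    intro k h2 hk
    have := wk k h2 hk
    have h0 : C n (k+1) (φ (E n 1)) = 0 := by
      rcases Nat.lt_or_ge (k+1) n with h | h
      · exact pk _ (by omega) h
      · obtain rfl : n = k + 1 := by omega
        exact pn
    rw [h0] at this
    simpa [hp1] using this
  have wn : C n n (φ (E n 0)) = 0 := by
    have := congrArg (C n n) rxx
    rw [brk (by omega) (by omega), w0, wl, wk' (n-1) (by omega) (by omega)] at this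
    have h5 : (n:ℂ) - 1 ≠ 0 := by
      rw [sub_ne_zero]; exact_mod_cast (by omega : n ≠ 1)
    simpa [h5] using this
  have u1 : C n 1 (φ (E n (n+1))) = 0 := by
    have := congrArg (C n 1) rxy
    rw [br1, w0, u0] at this
    simpa using this
  have ul : C n (n+1) (φ (E n (n+1))) = 1 := by
    have := congrArg (C n 2) (riy 2 le_rfl (by omega))
    rw [br2 hn, u0] at this
    apply mul_left_cancel₀ hb
    linear_combination -this
  have u2 : C n 2 (φ (E n (n+1))) = 0 := by
    have := congrArg (C n 2) (ry (E n (n+1)))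
    rw [br2 hn, u0, ul] at this
    simpa using this
  have uk : ∀ k, 3 ≤ k → k ≤ n → C n k (φ (E n (n+1))) = 0 := by
    intro k h2 hk
    have := congrArg (C n k) (ry (E n (n+1)))
    rw [brk h2 hk, u0, ul, u1] at this
    simpa using this
  refine ⟨C n 1 (φ (E n 1)), C n 2 (φ (E n 2)), C n 1 (φ (E n 0)), hp1, hb, ?_, ?_, ?_, ?_, ?_,
    q2, rfl, ?_⟩
  · apply ext_cases
    · simp [w0, hC00, hC01]
    · simp [hC10, hC11]
    · rw [wk' 2 le_rfl (by omega), map_add, map_smul, C_E (by omega), C_E (by omega)]; simp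
    · intro k h3 hk
      rw [map_add, map_smul, C_E (by omega), C_E (by omega), if_neg (by omega), if_neg (by omega)]
      rcases Nat.lt_or_ge k n with h | h
      · rw [wk' k (by omega) h]; simp
      · obtain rfl : k = n := by omega
        rw [wn]; simp
    · rw [wl, map_add, map_smul, C_E (by omega), C_E (by omega), if_neg (by omega),
        if_neg (by omega)]; simp
  · apply ext_cases
    · simp [p0, hC01]
    · simp [hC11]
    · rw [p2, map_smul, C_E (by omega)]; simp
    · intro k h3 hk
      rw [map_smul, C_E (by omega), if_neg (by omega)]
      rcases Nat.lt_or_ge k n with h | h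
      · rw [pk k (by omega) h]; simp
      · obtain rfl : k = n := by omega
        rw [pn]; simp
    · rw [pl, map_smul, C_E (by omega), if_neg (by omega)]; simp
  · apply ext_cases
    · rw [u0, hC0l]
    · rw [u1, hC1l]
    · rw [u2, C_E (by omega), if_neg (by omega)]
    · intro k h3 hk
      rw [uk k h3 hk, C_E (by omega), if_neg (by omega)]
    · rw [ul, C_E (by omega), if_pos rfl]
  · intro i h2 hi
    exact ⟨q0 i h2 hi, q1 i h2 hi, ql i h2 hi⟩
  · intro i k h2 hi h3 hk
    have := congrArg (C n k) (rix i h2 hi)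
    rw [brk h3 hk, w0, wl, map_smul, smul_eq_mul] at this
    linear_combination this
  · intro i k h2 hi h3 hk
    rw [ri1 i h2 hi, brk h3 hk, p0, pl]
    ring

/-- diagonal coefficients of an automorphism -/
lemma diag {φ : (Fin (n + 2) → ℂ) →ₗ[ℂ] (Fin (n + 2) → ℂ)} {a b : ℂ}
    (hb : C n 2 (φ (E n 2)) = b)
    (hs : ∀ i k, 2 ≤ i → i < n → 3 ≤ k → k ≤ n →
        C n k (φ (E n (i+1))) = a * C n (k-1) (φ (E n i))) :
    ∀ j, j + 2 ≤ n → C n (j+2) (φ (E n (j+2))) = b * a ^ j := by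
  intro j
  induction j with
  | zero => intro _; simpa using hb
  | succ j ih =>
    intro hj
    have := hs (j+2) (j+1+2) (by omega) (by omega) (by omega) hj
    rw [show j + 1 + 2 = j + 2 + 1 by omega] at this ⊢
    rw [this, Nat.add_sub_cancel, ih (by omega)]
    ring

/-- off-diagonal coefficients vanish when `c = 0` -/
lemma offdiag {φ : (Fin (n + 2) → ℂ) →ₗ[ℂ] (Fin (n + 2) → ℂ)} {c : ℂ} (hc : c = 0)
    (h0 : ∀ i, 2 ≤ i → i ≤ n → C n 0 (φ (E n i)) = 0 ∧ C n 1 (φ (E n i)) = 0 ∧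
        C n (n+1) (φ (E n i)) = 0)
    (hr : ∀ i k, 2 ≤ i → i ≤ n → 3 ≤ k → k ≤ n →
        ((k:ℂ) - i) * C n k (φ (E n i)) = - c * C n (k-1) (φ (E n i)))
    (h2 : ∀ i, 3 ≤ i → i ≤ n → C n 2 (φ (E n i)) = 0) {i : ℕ} (hi2 : 2 ≤ i) (hi : i ≤ n) :
    φ (E n i) = C n i (φ (E n i)) • E n i := by
  obtain ⟨a0, a1, al⟩ := h0 i hi2 hi
  apply ext_cases
  · rw [a0, map_smul, C_E (by omega), if_neg (by omega)]; simp
  · rw [a1, map_smul, C_E (by omega), if_neg (by omega)]; simp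
  · rw [map_smul, C_E (by omega)]
    split_ifs with h
    · subst h; simp
    · rw [h2 i (by omega) hi]; simp
  · intro k h3 hk
    rw [map_smul, C_E (by omega)]
    split_ifs with h
    · subst h; simp
    · have := hr i k hi2 hi h3 hk
      have hne : (k:ℂ) - i ≠ 0 := by rw [sub_ne_zero]; exact_mod_cast h
      rw [hc] at this
      simpa [hne] using this
  · rw [al, map_smul, C_E (by omega), if_neg (by omega)]; simp

theorem local_fix (hn : 5 ≤ n) (Ψ : (Fin (n + 2) → ℂ) →ₗ[ℂ] (Fin (n + 2) → ℂ))
    (hloc : ∀ a : Fin (n + 2) → ℂ, ∃ φ, IsAutR1 n φ ∧ Ψ a = φ a)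
    (hfix : Ψ (E n 0 + E n 2 + E n 3) = E n 0 + E n 2 + E n 3) : ∀ v, Ψ v = v := by
  have hy : Ψ (E n (n+1)) = E n (n+1) := by
    obtain ⟨φ, hφ, e⟩ := hloc (E n (n+1))
    obtain ⟨a, b, c, -, -, -, -, h, -⟩ := aut_struct hn hφ
    rw [e, h]
  obtain ⟨α, h1⟩ : ∃ α : ℂ, Ψ (E n 1) = α • E n 1 := by
    obtain ⟨φ, hφ, e⟩ := hloc (E n 1)
    obtain ⟨a, b, c, -, -, -, h, -⟩ := aut_struct hn hφ
    exact ⟨a, by rw [e, h]⟩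
  have hi1 : ∀ i, 2 ≤ i → i ≤ n → C n 1 (Ψ (E n i)) = 0 := by
    intro i h2 hi
    obtain ⟨φ, hφ, e⟩ := hloc (E n i)
    obtain ⟨a, b, c, -, -, -, -, -, h, -⟩ := aut_struct hn hφ
    rw [e]; exact (h i h2 hi).2.1
  have hx : Ψ (E n 0) = E n 0 := by
    obtain ⟨φ, hφ, e⟩ := hloc (E n 0)
    obtain ⟨a, b, c, -, -, h, -⟩ := aut_struct hn hφ
    rw [h] at e
    have := congrArg (C n 1) hfix
    simp only [map_add, hi1 2 le_rfl (by omega), hi1 3 (by omega) (by omega), e] at this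
    simp [C_E (show 1 < n + 2 by omega)] at this
    rw [e, this]; simp
  have hi : ∀ i, 2 ≤ i → i ≤ n → ∃ β : ℂ, Ψ (E n i) = β • E n i := by
    intro i h2 hi
    obtain ⟨φ, hφ, e⟩ := hloc (E n 0 + E n i)
    obtain ⟨a, b, c, -, -, hx', -, -, h0, hr, hq2, -⟩ := aut_struct hn hφ
    rw [map_add, map_add, hx, hx'] at e
    have hc : c = 0 := by
      have := congrArg (C n 1) e
      simp only [map_add, hi1 i h2 hi, (h0 i h2 hi).2.1] at this
      simpa [C_E (show 1 < n + 2 by omega)] using this.symm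
    have := offdiag hc h0 hr hq2 h2 hi
    refine ⟨_, Eq.trans ?_ this⟩
    rw [hc] at e
    simpa using e
  have h23 : Ψ (E n 2) = E n 2 ∧ Ψ (E n 3) = E n 3 := by
    obtain ⟨β, hβ⟩ := hi 2 le_rfl (by omega)
    obtain ⟨γ, hγ⟩ := hi 3 (by omega) (by omega)
    rw [map_add, map_add, hx, hβ, hγ] at hfix
    have e2 := congrArg (C n 2) hfix
    have e3 := congrArg (C n 3) hfix
    simp [C_E (show 2 < n + 2 by omega), C_E (show 3 < n + 2 by omega)] at e2 e3
    rw [hβ, hγ, e2, e3]; simp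
  obtain ⟨h2, h3⟩ := h23
  have hik : ∀ i, 4 ≤ i → i ≤ n → Ψ (E n i) = E n i := by
    intro i h4 hin
    obtain ⟨β, hβ⟩ := hi i (by omega) hin
    obtain ⟨φ, hφ, e⟩ := hloc (E n 0 + E n 2 + E n 3 + E n i)
    obtain ⟨a, b, c, -, -, hx', -, -, h0, hr, hq2, hb, hs⟩ := aut_struct hn hφ
    simp only [map_add, hx, hx', h2, h3, hβ] at e
    have hc : c = 0 := by
      have := congrArg (C n 1) e
      simp only [map_add, (h0 i (by omega) hin).2.1, (h0 2 le_rfl (by omega)).2.1,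
        (h0 3 (by omega) (by omega)).2.1, map_smul, C_E (show 1 < n + 2 by omega)] at this
      rw [if_neg (show 1 ≠ i by omega)] at this
      simpa using this.symm
    obtain ⟨j, rfl⟩ : ∃ j, i = j + 2 := ⟨i - 2, by omega⟩
    rw [offdiag hc h0 hr hq2 le_rfl (by omega),
      offdiag hc h0 hr hq2 (show 2 ≤ 3 by omega) (by omega),
      offdiag hc h0 hr hq2 (show 2 ≤ j + 2 by omega) (by omega), hb, diag hb hs j hin,
      diag hb hs 1 (by omega)] at e
    have e2 := congrArg (C n 2) e
    have e3 := congrArg (C n 3) e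
    have ei := congrArg (C n (j+2)) e
    simp only [map_add, map_smul, C_E (show 2 < n + 2 by omega), C_E (show 3 < n + 2 by omega),
      C_E (show j + 2 < n + 2 by omega)] at e2 e3 ei
    rw [if_neg (show 2 ≠ j + 2 by omega)] at e2
    rw [if_neg (show 3 ≠ j + 2 by omega)] at e3
    rw [if_neg (show j + 2 ≠ 0 by omega), if_neg (show j + 2 ≠ 1 by omega),
      if_neg (show j + 2 ≠ 2 by omega), if_neg (show j + 2 ≠ 3 by omega)] at ei
    simp at e2 e3 ei
    subst e2
    simp at e3
    subst e3
    simp at ei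
    rw [hβ, ei, one_smul]
  have hα : α = 1 := by
    obtain ⟨φ, hφ, e⟩ := hloc (E n 1 + E n 2 + E n 3)
    obtain ⟨a, b, c, ha, hb0, hx', h1', -, h0, hr, hq2, hb, hs⟩ := aut_struct hn hφ
    simp only [map_add, h1, h1', h2, h3] at e
    have r23 := hr 2 3 (by omega) (by omega) (by omega) (by omega)
    have r24 := hr 2 4 (by omega) (by omega) (by omega) (by omega)
    have r25 := hr 2 5 (by omega) (by omega) (by omega) (by omega)
    have s3 := hs 2 3 (by omega) (by omega) (by omega) (by omega)
    have s4 := hs 2 4 (by omega) (by omega) (by omega) (by omega)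
    have s5 := hs 2 5 (by omega) (by omega) (by omega) (by omega)
    have hq := hq2 3 (by omega) (by omega)
    have c1 := congrArg (C n 1) e
    have c2 := congrArg (C n 2) e
    have c3 := congrArg (C n 3) e
    have c4 := congrArg (C n 4) e
    have c5 := congrArg (C n 5) e
    simp [(h0 2 le_rfl (by omega)).2.1,
        (h0 3 (by omega) (by omega)).2.1, C_E (show 1 < n + 2 by omega)] at c1
    norm_num at s3 s4 s5 r23 r24 r25
    simp [hb, hq, C_E (show 2 < n + 2 by omega)] at c2
    simp [C_E (show 3 < n + 2 by omega)] at c3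
    simp [C_E (show 4 < n + 2 by omega)] at c4
    simp [C_E (show 5 < n + 2 by omega)] at c5
    subst c2
    subst c1
    rw [hb] at s3 r23
    rw [s3] at c3
    rw [s4] at c4
    rw [s5] at c5
    rw [r23] at c3 c4 r24
    have t4 : c * (c - 2 * α) = 0 := by linear_combination -2 * c4 - r24
    have t5 : c ^ 2 * (c - 3 * α) = 0 := by
      linear_combination 6 * c5 + 2 * r25 - (c - 3 * α) * r24
    rcases mul_eq_zero.1 t4 with hc | hc
    · subst hc; linear_combination -c3
    · exfalso
      have hc' : c = 2 * α := by linear_combination hc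
      rw [hc'] at t5
      apply ha
      have : α ^ 3 = 0 := by linear_combination -t5 / 4
      exact pow_eq_zero_iff (by norm_num) |>.1 this
  have key : ∀ k, k < n + 2 → Ψ (E n k) = E n k := by
    intro k hk
    rcases Nat.lt_or_ge k 4 with h | h
    · interval_cases k
      · exact hx
      · rw [h1, hα, one_smul]
      · exact h2
      · exact h3
    · rcases Nat.lt_or_ge n k with h' | h'
      · obtain rfl : k = n + 1 := by omega
        exact hy
      · exact hik k h h'
  intro v
  conv_lhs => rw [expand v]
  conv_rhs => rw [expand v]
  rw [map_sum]
  apply Finset.sum_congr rfl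
  intro k hk
  rw [map_smul, key k (Finset.mem_range.1 hk)]

end R1aux

/-- Every local automorphism of `R1` is an automorphism. -/
theorem every_local_automorphism_of_R1_is_automorphism
    (n : ℕ) (hn : 5 ≤ n)
    (Φ : (Fin (n + 2) → ℂ) →ₗ[ℂ] (Fin (n + 2) → ℂ))
    (hloc : ∀ a : Fin (n + 2) → ℂ, ∃ φ, IsAutR1 n φ ∧ Φ a = φ a) :
    IsAutR1 n Φ := by
  obtain ⟨φ, hφ, e⟩ := hloc (R1aux.E n 0 + R1aux.E n 2 + R1aux.E n 3)
  let ψ := LinearEquiv.ofBijective φ hφ.1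
  have hψ : ∀ v, ψ v = φ v := fun v => rfl
  have hid : ∀ v, (ψ.symm.toLinearMap ∘ₗ Φ) v = v := by
    apply R1aux.local_fix hn
    · intro a
      obtain ⟨χ, hχ, ea⟩ := hloc a
      refine ⟨ψ.symm.toLinearMap ∘ₗ χ, ⟨?_, ?_⟩, by simp [ea]⟩
      · simpa using ψ.symm.bijective.comp hχ.1
      · intro u v
        apply ψ.injective
        simp only [LinearMap.comp_apply, LinearEquiv.coe_coe, LinearEquiv.apply_symm_apply]
        rw [hψ, hφ.2, ← hψ, ← hψ, LinearEquiv.apply_symm_apply, LinearEquiv.apply_symm_apply,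
          hχ.2]
    · rw [LinearMap.comp_apply, e, ← hψ]
      simp
  have : Φ = φ := by
    ext1 v
    apply LinearMap.ext
    intro t
    have := congrArg ψ (hid (LinearMap.single ℂ (fun _ => ℂ) v t))
    rw [LinearMap.comp_apply, LinearEquiv.coe_coe, LinearEquiv.apply_symm_apply, hψ] at this
    simpa using this
  rw [this]
  exact hφ
end

section
/- Let n ≥ 5. Every local automorphism of the (n+2)-dimensional complex solvable Leibniz algebra R_2 is an automorphism of R_2. -/
/-!
`R₂` is the `(n+2)`-dimensional complex solvable Leibniz algebra with basis
`e_1, …, e_n, x, y` and nonzero products `[e_1, e_1] = e_3`,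
`[e_i, e_1] = e_{i+1}` for `3 ≤ i ≤ n-1`, `[e_1, x] = e_1`, `[x, e_1] = -e_1`,
`[e_i, x] = (i-1) • e_i` for `3 ≤ i ≤ n`, `[e_2, y] = e_2`, `[y, e_2] = -e_2`.
We realize it on `Fin (n+2) → ℂ`, where `x = Pi.single 0 1`,
`e_i = Pi.single i 1` for `1 ≤ i ≤ n` and `y = Pi.single (Fin.last (n+1)) 1`,
the bracket being given coordinatewise.
-/

/-- The bracket of the Leibniz algebra `R₂` on `Fin (n+2) → ℂ`. -/
def bracketR2 (n : ℕ) (u v : Fin (n + 2) → ℂ) : Fin (n + 2) → ℂ := fun k =>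
  if k.val = 1 then u 1 * v 0 - u 0 * v 1
  else if k.val = 2 then u 2 * v (Fin.last (n + 1)) - u (Fin.last (n + 1)) * v 2
  else if 3 ≤ k.val ∧ k.val ≤ n then
    (if 4 ≤ k.val then u ⟨k.val - 1, lt_of_le_of_lt (Nat.sub_le _ _) k.isLt⟩ * v 1
      else u 1 * v 1)
      + ((k.val : ℂ) - 1) * u k * v 0
  else 0

/-- An automorphism of `R₂`: a bijective `ℂ`-linear map preserving the bracket. -/
def IsAutR2 (n : ℕ) (φ : (Fin (n + 2) → ℂ) →ₗ[ℂ] (Fin (n + 2) → ℂ)) : Prop :=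
  Function.Bijective φ ∧ ∀ u v, φ (bracketR2 n u v) = bracketR2 n (φ u) (φ v)

set_option linter.all false
set_option linter.unusedSimpArgs false
set_option linter.unusedVariables false

/-- Coordinates of a vector indexed by natural numbers. -/
def co2 (n : ℕ) (v : Fin (n + 2) → ℂ) (j : ℕ) : ℂ := if h : j < n + 2 then v ⟨j, h⟩ else 0

/-- Basis vectors indexed by natural numbers. -/
def bs2 (n : ℕ) (k : ℕ) : Fin (n + 2) → ℂ := fun j => if j.val = k then 1 else 0

theorem co2_ext {n : ℕ} {u v : Fin (n + 2) → ℂ} (h : ∀ j, j < n + 2 → co2 n u j = co2 n v j) :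
    u = v := by
  funext ⟨j, hj⟩
  have := h j hj
  simpa [co2, hj] using this

theorem co2_add (n : ℕ) (u v : Fin (n + 2) → ℂ) (j : ℕ) :
    co2 n (u + v) j = co2 n u j + co2 n v j := by
  unfold co2; split_ifs <;> simp

theorem co2_neg (n : ℕ) (u : Fin (n + 2) → ℂ) (j : ℕ) :
    co2 n (-u) j = - co2 n u j := by
  unfold co2; split_ifs <;> simp

theorem co2_zero (n : ℕ) (j : ℕ) : co2 n 0 j = 0 := by
  unfold co2; split_ifs <;> simp

theorem co2_smul (n : ℕ) (c : ℂ) (u : Fin (n + 2) → ℂ) (j : ℕ) :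
    co2 n (c • u) j = c * co2 n u j := by
  unfold co2; split_ifs <;> simp

theorem co2_bs2 (n k j : ℕ) : co2 n (bs2 n k) j = if j = k ∧ j < n + 2 then 1 else 0 := by
  unfold co2 bs2; grind

theorem co2_br_zero (n : ℕ) (u v : Fin (n + 2) → ℂ) : co2 n (bracketR2 n u v) 0 = 0 := by
  simp [co2, bracketR2]

theorem co2_br_last (n : ℕ) (hn : 5 ≤ n) (u v : Fin (n + 2) → ℂ) :
    co2 n (bracketR2 n u v) (n + 1) = 0 := by
  have h1 : n ≠ 0 := by omega
  have h2 : n ≠ 1 := by omega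
  simp [co2, bracketR2, h1, h2]

theorem co2_br_one (n : ℕ) (hn : 5 ≤ n) (u v : Fin (n + 2) → ℂ) :
    co2 n (bracketR2 n u v) 1 = co2 n u 1 * co2 n v 0 - co2 n u 0 * co2 n v 1 := by
  simp [co2, bracketR2]

theorem co2_br_two (n : ℕ) (hn : 5 ≤ n) (u v : Fin (n + 2) → ℂ) :
    co2 n (bracketR2 n u v) 2 =
      co2 n u 2 * co2 n v (n + 1) - co2 n u (n + 1) * co2 n v 2 := by
  have h : 2 < n + 2 := by omega
  have e : (2 : Fin (n + 2)) = ⟨2, h⟩ := by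
    apply Fin.ext; exact Nat.mod_eq_of_lt h
  have e' : Fin.last (n + 1) = ⟨n + 1, by omega⟩ := rfl
  simp only [co2, bracketR2, e, e']
  simp [h]

theorem co2_br_three (n : ℕ) (hn : 5 ≤ n) (u v : Fin (n + 2) → ℂ) :
    co2 n (bracketR2 n u v) 3 = co2 n u 1 * co2 n v 1 + 2 * co2 n u 3 * co2 n v 0 := by
  have h : 3 < n + 2 := by omega
  have h' : 3 ≤ n := by omega
  simp [co2, bracketR2, h, h']
  norm_num

theorem co2_br_ge (n : ℕ) (k : ℕ) (hk : 4 ≤ k) (hkn : k ≤ n)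
    (u v : Fin (n + 2) → ℂ) :
    co2 n (bracketR2 n u v) k =
      co2 n u (k - 1) * co2 n v 1 + ((k : ℂ) - 1) * co2 n u k * co2 n v 0 := by
  have h : k < n + 2 := by omega
  have h0 : k - 1 < n + 2 := by omega
  have h1 : k ≠ 1 := by omega
  have h2 : k ≠ 2 := by omega
  have h3 : 3 ≤ k := by omega
  simp [co2, bracketR2, h, h0, h1, h2, h3, hk, hkn]

/-- Extensionality adapted to the bracket. -/
theorem co2_ext' {n : ℕ} {u v : Fin (n + 2) → ℂ}
    (h0 : co2 n u 0 = co2 n v 0) (h1 : co2 n u 1 = co2 n v 1) (h2 : co2 n u 2 = co2 n v 2)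
    (h3 : co2 n u 3 = co2 n v 3) (hk : ∀ k, 4 ≤ k → k ≤ n → co2 n u k = co2 n v k)
    (hl : co2 n u (n + 1) = co2 n v (n + 1)) : u = v := by
  apply co2_ext
  intro j hj
  by_cases e0 : j = 0
  · subst e0; exact h0
  by_cases e1 : j = 1
  · subst e1; exact h1
  by_cases e2 : j = 2
  · subst e2; exact h2
  by_cases e3 : j = 3
  · subst e3; exact h3
  by_cases el : j = n + 1
  · subst el; exact hl
  exact hk j (by omega) (by omega)

theorem tab_e1_x (n : ℕ) (hn : 5 ≤ n) : bracketR2 n (bs2 n 1) (bs2 n 0) = bs2 n 1 := by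
  apply co2_ext' <;> try intro k hk hkn
  all_goals try simp only [co2_br_zero, co2_br_one n hn, co2_br_two n hn, co2_br_three n hn,
    co2_br_last n hn, co2_neg, co2_zero, co2_bs2]
  all_goals try rw [co2_br_ge n _ hk hkn]
  all_goals try simp only [co2_bs2]
  all_goals grind

theorem tab_x_x (n : ℕ) (hn : 5 ≤ n) : bracketR2 n (bs2 n 0) (bs2 n 0) = 0 := by
  apply co2_ext' <;> try intro k hk hkn
  all_goals try simp only [co2_br_zero, co2_br_one n hn, co2_br_two n hn, co2_br_three n hn,
    co2_br_last n hn, co2_neg, co2_zero, co2_bs2]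
  all_goals try rw [co2_br_ge n _ hk hkn]
  all_goals try simp only [co2_bs2]
  all_goals grind

theorem tab_x_e1 (n : ℕ) (hn : 5 ≤ n) : bracketR2 n (bs2 n 0) (bs2 n 1) = -bs2 n 1 := by
  apply co2_ext' <;> try intro k hk hkn
  all_goals try simp only [co2_br_zero, co2_br_one n hn, co2_br_two n hn, co2_br_three n hn,
    co2_br_last n hn, co2_neg, co2_zero, co2_bs2]
  all_goals try rw [co2_br_ge n _ hk hkn]
  all_goals try simp only [co2_bs2]
  all_goals grind

theorem tab_e1_e1 (n : ℕ) (hn : 5 ≤ n) : bracketR2 n (bs2 n 1) (bs2 n 1) = bs2 n 3 := by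
  apply co2_ext' <;> try intro k hk hkn
  all_goals try simp only [co2_br_zero, co2_br_one n hn, co2_br_two n hn, co2_br_three n hn,
    co2_br_last n hn, co2_neg, co2_zero, co2_bs2]
  all_goals try rw [co2_br_ge n _ hk hkn]
  all_goals try simp only [co2_bs2]
  all_goals grind

theorem tab_e1_y (n : ℕ) (hn : 5 ≤ n) : bracketR2 n (bs2 n 1) (bs2 n (n+1)) = 0 := by
  apply co2_ext' <;> try intro k hk hkn
  all_goals try simp only [co2_br_zero, co2_br_one n hn, co2_br_two n hn, co2_br_three n hn,
    co2_br_last n hn, co2_neg, co2_zero, co2_bs2]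
  all_goals try rw [co2_br_ge n _ hk hkn]
  all_goals try simp only [co2_bs2]
  all_goals grind

theorem tab_y_e1 (n : ℕ) (hn : 5 ≤ n) : bracketR2 n (bs2 n (n+1)) (bs2 n 1) = 0 := by
  apply co2_ext' <;> try intro k hk hkn
  all_goals try simp only [co2_br_zero, co2_br_one n hn, co2_br_two n hn, co2_br_three n hn,
    co2_br_last n hn, co2_neg, co2_zero, co2_bs2]
  all_goals try rw [co2_br_ge n _ hk hkn]
  all_goals try simp only [co2_bs2]
  all_goals grind

theorem tab_y_x (n : ℕ) (hn : 5 ≤ n) : bracketR2 n (bs2 n (n+1)) (bs2 n 0) = 0 := by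
  apply co2_ext' <;> try intro k hk hkn
  all_goals try simp only [co2_br_zero, co2_br_one n hn, co2_br_two n hn, co2_br_three n hn,
    co2_br_last n hn, co2_neg, co2_zero, co2_bs2]
  all_goals try rw [co2_br_ge n _ hk hkn]
  all_goals try simp only [co2_bs2]
  all_goals grind

theorem tab_e2_y (n : ℕ) (hn : 5 ≤ n) : bracketR2 n (bs2 n 2) (bs2 n (n+1)) = bs2 n 2 := by
  apply co2_ext' <;> try intro k hk hkn
  all_goals try simp only [co2_br_zero, co2_br_one n hn, co2_br_two n hn, co2_br_three n hn,
    co2_br_last n hn, co2_neg, co2_zero, co2_bs2]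
  all_goals try rw [co2_br_ge n _ hk hkn]
  all_goals try simp only [co2_bs2]
  all_goals grind

theorem tab_e2_x (n : ℕ) (hn : 5 ≤ n) : bracketR2 n (bs2 n 2) (bs2 n 0) = 0 := by
  apply co2_ext' <;> try intro k hk hkn
  all_goals try simp only [co2_br_zero, co2_br_one n hn, co2_br_two n hn, co2_br_three n hn,
    co2_br_last n hn, co2_neg, co2_zero, co2_bs2]
  all_goals try rw [co2_br_ge n _ hk hkn]
  all_goals try simp only [co2_bs2]
  all_goals grind

theorem tab_x_y (n : ℕ) (hn : 5 ≤ n) : bracketR2 n (bs2 n 0) (bs2 n (n+1)) = 0 := by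
  apply co2_ext' <;> try intro k hk hkn
  all_goals try simp only [co2_br_zero, co2_br_one n hn, co2_br_two n hn, co2_br_three n hn,
    co2_br_last n hn, co2_neg, co2_zero, co2_bs2]
  all_goals try rw [co2_br_ge n _ hk hkn]
  all_goals try simp only [co2_bs2]
  all_goals grind

theorem tab_ek_e1 (n : ℕ) (hn : 5 ≤ n) (i : ℕ) (h3 : 3 ≤ i) (hi : i < n) :
    bracketR2 n (bs2 n i) (bs2 n 1) = bs2 n (i + 1) := by
  apply co2_ext' <;> try intro k hk hkn
  all_goals try simp only [co2_br_zero, co2_br_one n hn, co2_br_two n hn, co2_br_three n hn,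
    co2_br_last n hn, co2_neg, co2_zero, co2_bs2]
  all_goals try rw [co2_br_ge n _ hk hkn]
  all_goals try simp only [co2_bs2]
  all_goals grind

set_option maxHeartbeats 4000000 in
/-- The shape of an automorphism of `R₂`. -/
theorem aut_shape (n : ℕ) (hn : 5 ≤ n) (φ : (Fin (n + 2) → ℂ) →ₗ[ℂ] (Fin (n + 2) → ℂ))
    (hφ : IsAutR2 n φ) : ∃ α t β γ : ℂ, α ≠ 0 ∧ β ≠ 0 ∧
      (co2 n (φ (bs2 n 0)) 0 = 1 ∧ co2 n (φ (bs2 n 0)) 1 = -t ∧ co2 n (φ (bs2 n 0)) 2 = 0 ∧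
        co2 n (φ (bs2 n 0)) (n + 1) = 0 ∧ co2 n (φ (bs2 n 0)) 3 = -t ^ 2 / 2 ∧
        co2 n (φ (bs2 n 0)) 4 = -t ^ 3 / 6) ∧
      (co2 n (φ (bs2 n 1)) 0 = 0 ∧ co2 n (φ (bs2 n 1)) 1 = α ∧ co2 n (φ (bs2 n 1)) 2 = 0 ∧
        co2 n (φ (bs2 n 1)) (n + 1) = 0 ∧ co2 n (φ (bs2 n 1)) 3 = α * t ∧
        co2 n (φ (bs2 n 1)) 4 = α * t ^ 2 / 2 ∧ co2 n (φ (bs2 n 1)) 5 = α * t ^ 3 / 6) ∧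
      (t = 0 → φ (bs2 n 0) = bs2 n 0) ∧
      (t = 0 → φ (bs2 n 1) = α • bs2 n 1) ∧
      (φ (bs2 n (n + 1)) = γ • bs2 n 2 + bs2 n (n + 1)) ∧
      (φ (bs2 n 2) = β • bs2 n 2) ∧
      (∀ k, 3 ≤ k → k ≤ n → co2 n (φ (bs2 n k)) 0 = 0 ∧ co2 n (φ (bs2 n k)) 1 = 0 ∧
        co2 n (φ (bs2 n k)) k = α ^ (k - 1) ∧
        (∀ j, 3 ≤ j → j < k → co2 n (φ (bs2 n k)) j = 0) ∧
        (t = 0 → φ (bs2 n k) = α ^ (k - 1) • bs2 n k)) ∧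
      co2 n (φ (bs2 n 3)) 4 = α ^ 2 * t ∧ co2 n (φ (bs2 n 3)) 5 = α ^ 2 * t ^ 2 / 2 := by
  obtain ⟨⟨hinj, -⟩, hb⟩ := hφ
  have nz : ∀ k, k < n + 2 → φ (bs2 n k) ≠ 0 := by
    intro k hk h
    have h2 := hinj (h.trans (map_zero φ).symm)
    have h3 := congrArg (fun v => co2 n v k) h2
    simp [co2_bs2, co2_zero, hk] at h3
  have B1 := fun u v => co2_br_one n hn u v
  have B2 := fun u v => co2_br_two n hn u v
  have B3 := fun u v => co2_br_three n hn u v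
  have B0 := fun u v => co2_br_zero n u v
  have BL := fun u v => co2_br_last n hn u v
  have Bk := fun k hk hkn u v => co2_br_ge n k hk hkn u v
  have r1 := hb (bs2 n 1) (bs2 n 0)
  have r2 := hb (bs2 n 0) (bs2 n 0)
  have r4 := hb (bs2 n 1) (bs2 n 1)
  have r5 := hb (bs2 n 1) (bs2 n (n + 1))
  have r6 := hb (bs2 n (n + 1)) (bs2 n 1)
  have r7 := hb (bs2 n (n + 1)) (bs2 n 0)
  have r8 := hb (bs2 n 2) (bs2 n (n + 1))
  have r9 := hb (bs2 n 2) (bs2 n 0)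
  have r10 := hb (bs2 n 0) (bs2 n (n + 1))
  have r11 := fun k h3 hk => hb (bs2 n k) (bs2 n 1) ▸ congrArg φ (tab_ek_e1 n hn k h3 hk).symm
  rw [tab_e1_x n hn] at r1
  rw [tab_x_x n hn, map_zero] at r2
  rw [tab_e1_e1 n hn] at r4
  rw [tab_e1_y n hn, map_zero] at r5
  rw [tab_y_e1 n hn, map_zero] at r6
  rw [tab_y_x n hn, map_zero] at r7
  rw [tab_e2_y n hn] at r8
  rw [tab_e2_x n hn, map_zero] at r9
  rw [tab_x_y n hn, map_zero] at r10
  have nz1 := nz 1 (by omega)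
  have nz2 := nz 2 (by omega)
  have nz3 := nz 3 (by omega)
  generalize hX : φ (bs2 n 0) = X at *
  generalize hE : φ (bs2 n 1) = E at *
  generalize hY : φ (bs2 n (n + 1)) = Y at *
  generalize hF : φ (bs2 n 2) = F at *
  have cc : ∀ {u v : Fin (n + 2) → ℂ}, u = v → ∀ j, co2 n u j = co2 n v j := by
    rintro u v rfl j; rfl
  have E0 : co2 n E 0 = 0 := by rw [r1, B0]
  have EL : co2 n E (n + 1) = 0 := by rw [r1, BL]
  have F0 : co2 n F 0 = 0 := by rw [r8, B0]
  have FL : co2 n F (n + 1) = 0 := by rw [r8, BL]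
  have Ea : co2 n E 1 ≠ 0 := by
    intro h
    apply nz3
    rw [r4]
    apply co2_ext' <;> try intro k hk hkn
    all_goals try simp only [B0, B1, B2, B3, BL, co2_zero, E0, EL, h]
    all_goals try rw [Bk k hk hkn]
    all_goals simp [E0, h]
  have X0 : co2 n X 0 = 1 := by
    have := cc r1 1
    rw [B1, E0] at this
    apply mul_left_cancel₀ Ea
    linear_combination -this
  obtain ⟨α, hα⟩ : ∃ α, co2 n E 1 = α := ⟨_, rfl⟩
  obtain ⟨t, ht⟩ : ∃ t, co2 n X 1 = -t := ⟨-co2 n X 1, by simp⟩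
  rw [hα] at Ea
  -- Y
  have Y0 : co2 n Y 0 = 0 := by
    have := cc r5 1
    rw [B1, E0, hα, co2_zero] at this
    apply mul_left_cancel₀ Ea
    linear_combination -this
  have Y1 : co2 n Y 1 = 0 := by
    have := cc r5 3
    rw [B3, Y0, hα, co2_zero] at this
    apply mul_left_cancel₀ Ea
    linear_combination -this
  have Yk : ∀ k, 3 ≤ k → k ≤ n → co2 n Y k = 0 := by
    intro k h3 hk
    rcases Nat.lt_or_ge k n with h | h
    · have := cc r6 (k + 1)
      rw [Bk (k + 1) (by omega) (by omega), E0, hα, co2_zero] at this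
      simp only [Nat.add_sub_cancel] at this
      apply mul_right_cancel₀ Ea
      linear_combination -this
    · have hkn : k = n := by omega
      subst hkn
      have h1 := cc r6 k
      have h2 := cc r7 k
      rw [Bk k (by omega) (by omega), E0, hα, co2_zero] at h1
      rw [Bk k (by omega) (by omega), X0, ht, co2_zero] at h2
      have h3 : co2 k Y (k - 1) = 0 := by
        apply mul_right_cancel₀ Ea
        linear_combination -h1
      rw [h3] at h2
      have h4 : ((k : ℂ) - 1) ≠ 0 := by
        rw [sub_ne_zero]; exact_mod_cast (by omega : k ≠ 1)
      apply mul_left_cancel₀ h4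
      linear_combination -h2
  -- F
  have F1 : co2 n F 1 = 0 := by rw [r8, B1, Y0, Y1]; ring
  have F3 : co2 n F 3 = 0 := by rw [r8, B3, Y0, Y1]; ring
  have Fk : ∀ k, 4 ≤ k → k ≤ n → co2 n F k = 0 := by
    intro k hk hkn; rw [r8, Bk k hk hkn, Y0, Y1]; ring
  have hFF : F = co2 n F 2 • bs2 n 2 := by
    apply co2_ext' <;> try intro k hk hkn
    all_goals try simp only [co2_smul, co2_bs2, F0, F1, F3, FL]
    all_goals try rw [Fk k hk hkn]
    all_goals grind
  have F2 : co2 n F 2 ≠ 0 := by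
    intro h; rw [h, zero_smul] at hFF; exact nz2 hFF
  have YL : co2 n Y (n + 1) = 1 := by
    have := cc r8 2
    rw [B2, FL] at this
    apply mul_left_cancel₀ F2
    linear_combination -this
  have XL : co2 n X (n + 1) = 0 := by
    have := cc r9 2
    rw [B2, FL, co2_zero] at this
    apply mul_left_cancel₀ F2
    linear_combination -this
  have E2 : co2 n E 2 = 0 := by
    have := cc r1 2
    rw [B2, EL, XL] at this
    linear_combination this
  have X2 : co2 n X 2 = 0 := by
    have := cc r10 2
    rw [B2, YL, XL, co2_zero] at this
    linear_combination -this
  have X3 : co2 n X 3 = -t ^ 2 / 2 := by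
    have := cc r2 3
    rw [B3, X0, ht, co2_zero] at this
    linear_combination -this / 2
  have X4 : co2 n X 4 = -t ^ 3 / 6 := by
    have := cc r2 4
    rw [Bk 4 (by omega) (by omega), X0, ht, co2_zero] at this
    norm_num at this
    rw [X3] at this
    linear_combination -this / 3
  have E3 : co2 n E 3 = α * t := by
    have := cc r1 3
    rw [B3, X0, hα, ht] at this
    linear_combination -this
  have E4 : co2 n E 4 = α * t ^ 2 / 2 := by
    have := cc r1 4
    rw [Bk 4 (by omega) (by omega), X0, ht] at this
    norm_num at this
    rw [E3] at this
    linear_combination -this / 2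
  have E5 : co2 n E 5 = α * t ^ 3 / 6 := by
    have := cc r1 5
    rw [Bk 5 (by omega) (by omega), X0, ht] at this
    norm_num at this
    rw [E4] at this
    linear_combination -this / 3
  have Et : t = 0 → E = α • bs2 n 1 := by
    intro h0
    apply co2_ext' <;> try intro k hk hkn
    all_goals try simp only [co2_smul, co2_bs2, E0, hα, E2, E3, EL]
    case hk =>
      have := cc r1 k
      rw [Bk k hk hkn, X0, ht, h0] at this
      have h4 : ((k : ℂ) - 2) ≠ 0 := by
        rw [sub_ne_zero]; exact_mod_cast (by omega : k ≠ 2)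
      have h5 : co2 n E k = 0 := by
        apply mul_left_cancel₀ h4
        linear_combination -this
      rw [h5]
      grind
    all_goals grind
  have Xt : t = 0 → X = bs2 n 0 := by
    intro h0
    apply co2_ext' <;> try intro k hk hkn
    all_goals try simp only [co2_bs2, X0, ht, X2, X3, XL]
    case hk =>
      have := cc r2 k
      rw [Bk k hk hkn, X0, ht, h0, co2_zero] at this
      have h4 : ((k : ℂ) - 1) ≠ 0 := by
        rw [sub_ne_zero]; exact_mod_cast (by omega : k ≠ 1)
      have h5 : co2 n X k = 0 := by
        apply mul_left_cancel₀ h4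
        linear_combination -this
      rw [h5]
      grind
    all_goals grind
  have K : ∀ k, 3 ≤ k → k ≤ n → co2 n (φ (bs2 n k)) 0 = 0 ∧ co2 n (φ (bs2 n k)) 1 = 0 ∧
        co2 n (φ (bs2 n k)) k = α ^ (k - 1) ∧
        (∀ j, 3 ≤ j → j < k → co2 n (φ (bs2 n k)) j = 0) ∧
        (t = 0 → φ (bs2 n k) = α ^ (k - 1) • bs2 n k) := by
    intro k h3
    induction k, h3 using Nat.le_induction with
    | base =>
      intro _
      rw [r4]
      refine ⟨B0 _ _, by rw [B1, E0]; ring, by rw [B3, E0, hα]; ring, by intros; omega, ?_⟩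
      intro h0
      rw [Et h0, ← tab_e1_e1 n hn]
      apply co2_ext' <;> try intro k hk hkn
      all_goals try simp only [co2_smul, B0, B1, B2, B3, BL]
      all_goals try rw [Bk k hk hkn, Bk k hk hkn]
      all_goals try simp only [co2_smul]
      all_goals simp [co2_bs2]
      all_goals grind
    | succ k h3 ih =>
      intro hk
      obtain ⟨i0, i1, i2, i3, i4⟩ := ih (by omega)
      rw [← tab_ek_e1 n hn k h3 (by omega), hb, hE]
      refine ⟨B0 _ _, by rw [B1, E0, i0]; ring, ?_, ?_, ?_⟩
      · rw [Bk _ (by omega) hk, E0, hα, Nat.add_sub_cancel, i2]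
        obtain ⟨m, rfl⟩ : ∃ m, k = m + 1 := ⟨k - 1, by omega⟩
        simp [pow_succ]
      · intro j hj hjk
        rcases Nat.lt_or_ge 3 j with h | h
        · rw [Bk j (by omega) (by omega), i3 (j - 1) (by omega) (by omega), E0]; ring
        · have : j = 3 := by omega
          subst this
          rw [B3, i1, E0]; ring
      · intro h0
        rw [i4 h0, Et h0]
        obtain ⟨m, rfl⟩ : ∃ m, k = m + 1 := ⟨k - 1, by omega⟩
        simp only [Nat.add_sub_cancel]
        rw [pow_succ]
        apply co2_ext' <;> try intro k hk hkn
        all_goals try simp only [co2_smul, B0, B1, B2, B3, BL]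
        all_goals try rw [Bk k hk hkn, Bk k hk hkn]
        all_goals try simp only [co2_smul]
        all_goals ring
  refine ⟨α, t, co2 n F 2, co2 n Y 2, Ea, F2, ⟨X0, ht, X2, XL, X3, X4⟩,
    ⟨E0, hα, E2, EL, E3, E4, E5⟩, Xt, Et, ?_, hFF, K, ?_, ?_⟩
  · apply co2_ext' <;> try intro k hk hkn
    all_goals try simp only [co2_add, co2_smul, co2_bs2, Y0, Y1, YL]
    all_goals try rw [Yk _ (by omega) (by omega)]
    all_goals generalize co2 n Y 2 = c
    all_goals clear K Xt Et Bk B0 B1 B2 B3 BL r11 cc nz Yk Fk hFF nz1 nz2 nz3 hb hinj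
    all_goals grind
  · rw [r4, Bk 4 (by omega) (by omega), E0, hα]
    norm_num
    rw [E3]; ring
  · rw [r4, Bk 5 (by omega) (by omega), E0, hα]
    norm_num
    rw [E4]; ring

/-- The diagonal coefficients. -/
noncomputable def dg2 (n : ℕ) (α β : ℂ) (k : ℕ) : ℂ :=
  if k = 0 then 1 else if k = n + 1 then 1 else if k = 1 then α else if k = 2 then β
  else α ^ (k - 1)

/-- A diagonal linear map. -/
noncomputable def dgMap2 (n : ℕ) (α β : ℂ) : (Fin (n + 2) → ℂ) →ₗ[ℂ] (Fin (n + 2) → ℂ) where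
  toFun v := fun k => dg2 n α β k.val * v k
  map_add' u v := by funext k; simp [mul_add]
  map_smul' c v := by funext k; simp; ring

theorem co2_dgMap2 (n : ℕ) (α β : ℂ) (v : Fin (n + 2) → ℂ) (j : ℕ) :
    co2 n (dgMap2 n α β v) j = dg2 n α β j * co2 n v j := by
  unfold co2; split_ifs <;> simp [dgMap2]

theorem dgMap2_aut (n : ℕ) (hn : 5 ≤ n) (α β : ℂ) (hα : α ≠ 0) (hβ : β ≠ 0) :
    IsAutR2 n (dgMap2 n α β) := by
  have hd : ∀ k, dg2 n α β k ≠ 0 := by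
    intro k; unfold dg2; split_ifs <;> simp [hα, hβ]
  have hinj : Function.Injective (dgMap2 n α β) := by
    intro u v h
    funext k
    exact mul_left_cancel₀ (hd k.val) (congrFun h k)
  refine ⟨⟨hinj, LinearMap.injective_iff_surjective.mp hinj⟩, ?_⟩
  intro u v
  have d0 : dg2 n α β 0 = 1 := by simp [dg2]
  have d1 : dg2 n α β 1 = α := by simp [dg2]; omega
  have d2 : dg2 n α β 2 = β := by unfold dg2; grind
  have d3 : dg2 n α β 3 = α ^ 2 := by unfold dg2; grind
  have dl : dg2 n α β (n + 1) = 1 := by simp [dg2]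
  apply co2_ext'
  · simp only [co2_br_zero, co2_dgMap2, mul_zero]
  · simp only [co2_br_one n hn, co2_dgMap2, d0, d1]; ring
  · simp only [co2_br_two n hn, co2_dgMap2, d2, dl]; ring
  · simp only [co2_br_three n hn, co2_dgMap2, d0, d1, d3]; ring
  · intro k hk hkn
    have e1 : dg2 n α β k = α ^ (k - 2) * α := by
      rw [← pow_succ]; unfold dg2; grind
    have e2 : dg2 n α β (k - 1) = α ^ (k - 2) := by
      unfold dg2; grind
    rw [co2_dgMap2, co2_br_ge n k hk hkn, co2_br_ge n k hk hkn]
    simp only [co2_dgMap2, d0, d1, e1, e2]; ring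
  · simp only [co2_br_last n hn, co2_dgMap2, mul_zero]

set_option maxHeartbeats 4000000 in
theorem local_normalized (n : ℕ) (hn : 5 ≤ n)
    (Ψ : (Fin (n + 2) → ℂ) →ₗ[ℂ] (Fin (n + 2) → ℂ))
    (hloc : ∀ a : Fin (n + 2) → ℂ, ∃ φ, IsAutR2 n φ ∧ Ψ a = φ a)
    (hx : Ψ (bs2 n 0) = bs2 n 0) (hy : Ψ (bs2 n (n + 1)) = bs2 n (n + 1)) :
    IsAutR2 n Ψ := by
  have cc : ∀ {u v : Fin (n + 2) → ℂ}, u = v → ∀ j, co2 n u j = co2 n v j := by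
    rintro u v rfl j; rfl
  have c0 : ∀ j, j ≠ 0 → co2 n (bs2 n 0) j = 0 := by
    intro j hj; simp [co2_bs2, hj]
  obtain ⟨α, hα, hE⟩ : ∃ α : ℂ, α ≠ 0 ∧ Ψ (bs2 n 1) = α • bs2 n 1 := by
    obtain ⟨φ, hφ, he⟩ := hloc (bs2 n 1)
    obtain ⟨α, t, -, -, hα, -, -, ⟨-, e1, -, -, e3, e4, -⟩, -, et, -⟩ := aut_shape n hn φ hφ
    refine ⟨α, hα, ?_⟩
    rw [he]
    apply et
    by_contra ht
    obtain ⟨φ', hφ', he'⟩ := hloc (bs2 n 0 + (t / α) • bs2 n 1)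
    obtain ⟨α', t', -, -, hα', -, ⟨-, x1, -, -, x3, x4⟩, ⟨-, f1, -, -, f3, f4, -⟩, -⟩ :=
      aut_shape n hn φ' hφ'
    rw [map_add, map_add, map_smul, map_smul, hx, he] at he'
    have q1 := cc he' 1
    have q3 := cc he' 3
    have q4 := cc he' 4
    simp only [co2_add, co2_smul, x1, x3, x4, f1, f3, f4, e1, e3, e4, c0 1 (by norm_num),
      c0 3 (by norm_num), c0 4 (by norm_num)] at q1 q3 q4
    obtain ⟨w, hw⟩ : ∃ w, t / α = w := ⟨_, rfl⟩
    have hw' : w * α = t := by rw [← hw]; field_simp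
    rw [hw] at q1 q3 q4
    have s1 : w * α' = t + t' := by linear_combination hw' - q1
    have s3 : t ^ 2 = t' ^ 2 / 2 + t * t' := by
      linear_combination q3 + t' * s1 - t * hw'
    have s4 : t ^ 3 / 2 = t' ^ 3 / 3 + t * t' ^ 2 / 2 := by
      linear_combination q4 + t' ^ 2 / 2 * s1 - t ^ 2 / 2 * hw'
    have s5 : t' ^ 2 * (t' - 3 * t) = 0 := by
      linear_combination -12 * s4 + 6 * (t + t') * s3
    rcases mul_eq_zero.mp s5 with h | h
    · have h' : t' = 0 := by simpa using h
      rw [h'] at s3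
      exact ht (by simpa using s3)
    · have h' : t' = 3 * t := by linear_combination h
      rw [h'] at s3
      have : t ^ 2 = 0 := by linear_combination -s3 * (2 / 13)
      exact ht (by simpa using this)
  obtain ⟨β, hβ, hF⟩ : ∃ β : ℂ, β ≠ 0 ∧ Ψ (bs2 n 2) = β • bs2 n 2 := by
    obtain ⟨φ, hφ, he⟩ := hloc (bs2 n 2)
    obtain ⟨α, t, β, -, hα, hβ, -, -, -, -, -, h, -⟩ := aut_shape n hn φ hφ
    exact ⟨β, hβ, by rw [he, h]⟩
  have hK : ∀ k, 3 ≤ k → k ≤ n → Ψ (bs2 n k) = α ^ (k - 1) • bs2 n k := by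
    intro k h3 hk
    obtain ⟨μ, hμ⟩ : ∃ μ : ℂ, Ψ (bs2 n k) = μ • bs2 n k := by
      obtain ⟨φ, hφ, he⟩ := hloc (bs2 n k)
      obtain ⟨α1, t1, -, -, -, -, -, -, -, -, -, -, hk1, -⟩ := aut_shape n hn φ hφ
      obtain ⟨φ', hφ', he'⟩ := hloc (bs2 n 0 + bs2 n k)
      obtain ⟨α2, t2, -, -, -, -, ⟨-, x1, -⟩, -, xt, -, -, -, hk2, -⟩ := aut_shape n hn φ' hφ'
      obtain ⟨-, a1, -⟩ := hk1 k h3 hk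
      obtain ⟨-, b1, -, -, b5⟩ := hk2 k h3 hk
      rw [map_add, map_add, hx] at he'
      have q1 := cc he' 1
      rw [co2_add, co2_add, he, a1, b1, x1, c0 1 (by norm_num)] at q1
      have ht : t2 = 0 := by linear_combination q1
      rw [xt ht, b5 ht] at he'
      exact ⟨_, add_left_cancel he'⟩
    obtain ⟨φ, hφ, he⟩ := hloc (bs2 n 1 + bs2 n k)
    obtain ⟨α1, t, -, -, ha1, -, -, ⟨-, e1, -, -, e3, e4, e5⟩, -, et, -, -, hk1, g4, g5⟩ :=
      aut_shape n hn φ hφ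
    obtain ⟨-, a1, a2, a3, a4⟩ := hk1 k h3 hk
    rw [map_add, map_add, hE, hμ] at he
    have q1 := cc he 1
    have q3 := cc he 3
    have q4 := cc he 4
    have q5 := cc he 5
    simp only [co2_add, co2_smul, co2_bs2] at q1 q3 q4 q5
    rw [e1, a1] at q1
    rw [e3] at q3
    rw [e4] at q4
    rw [e5] at q5
    have hα1 : α = α1 := by
      have : ¬ (1 = k) := by omega
      simpa [this] using q1
    subst hα1
    have ht : t = 0 := by
      by_cases hk3 : k = 3
      · subst hk3
        rw [g4] at q4
        rw [g5] at q5
        norm_num at q4 q5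
        by_contra ht
        have p4 : t / 2 + α = 0 := by
          apply mul_left_cancel₀ (mul_ne_zero hα ht)
          linear_combination -q4
        have p5 : t / 6 + α / 2 = 0 := by
          apply mul_left_cancel₀ (mul_ne_zero hα (pow_ne_zero 2 ht))
          linear_combination -q5
        apply ht
        linear_combination 6 * p4 - 12 * p5
      · rw [a3 3 (by norm_num) (by omega)] at q3
        have : ¬ (3 = k) := by omega
        simp [this] at q3
        tauto
    rw [et ht, a4 ht] at he
    rw [hμ]
    exact add_left_cancel he
  have hΨ : Ψ = dgMap2 n α β := by
    apply (Pi.basisFun ℂ (Fin (n + 2))).ext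
    rintro ⟨k, hk⟩
    have hb : (Pi.basisFun ℂ (Fin (n + 2))) ⟨k, hk⟩ = bs2 n k := by
      funext j
      simp [bs2, Pi.single_apply, Fin.ext_iff]
    rw [hb]
    have hD : dgMap2 n α β (bs2 n k) = dg2 n α β k • bs2 n k := by
      apply co2_ext
      intro j _
      rw [co2_dgMap2, co2_smul, co2_bs2]
      split_ifs with h
      · rw [h.1]
      · simp
    rw [hD]
    unfold dg2
    split_ifs with h0 hl h1 h2
    · rw [h0, hx, one_smul]
    · rw [hl, hy, one_smul]
    · rw [h1, hE]
    · rw [h2, hF]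
    · exact hK k (by omega) (by omega)
  rw [hΨ]
  exact dgMap2_aut n hn α β hα hβ

theorem IsAutR2.comp2 {n : ℕ} {φ ψ : (Fin (n + 2) → ℂ) →ₗ[ℂ] (Fin (n + 2) → ℂ)}
    (hφ : IsAutR2 n φ) (hψ : IsAutR2 n ψ) : IsAutR2 n (φ.comp ψ) := by
  refine ⟨?_, ?_⟩
  · simpa using hφ.1.comp hψ.1
  · intro u v
    simp [hψ.2, hφ.2]

theorem IsAutR2.exists_inv {n : ℕ} {φ : (Fin (n + 2) → ℂ) →ₗ[ℂ] (Fin (n + 2) → ℂ)}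
    (hφ : IsAutR2 n φ) : ∃ ψ : (Fin (n + 2) → ℂ) →ₗ[ℂ] (Fin (n + 2) → ℂ), IsAutR2 n ψ ∧
      (∀ v, ψ (φ v) = v) ∧ (∀ v, φ (ψ v) = v) := by
  let e := LinearEquiv.ofBijective φ hφ.1
  have h1 : ∀ v, e.symm (φ v) = v := fun v => e.symm_apply_apply v
  have h2 : ∀ v, φ (e.symm v) = v := fun v => e.apply_symm_apply v
  refine ⟨e.symm.toLinearMap, ⟨e.symm.bijective, ?_⟩, h1, h2⟩
  intro u v
  apply hφ.1.1
  change φ (e.symm _) = φ (bracketR2 n (e.symm u) (e.symm v))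
  rw [h2, hφ.2, h2, h2]

/-- Every local automorphism of `R2` is an automorphism. -/
theorem every_local_automorphism_of_R2_is_automorphism
    (n : ℕ) (hn : 5 ≤ n)
    (Φ : (Fin (n + 2) → ℂ) →ₗ[ℂ] (Fin (n + 2) → ℂ))
    (hloc : ∀ a : Fin (n + 2) → ℂ, ∃ φ, IsAutR2 n φ ∧ Φ a = φ a) :
    IsAutR2 n Φ := by
  obtain ⟨φ, hφ, he⟩ := hloc (bs2 n 0 + bs2 n (n + 1))
  obtain ⟨ψ, hψ, h1, h2⟩ := hφ.exists_inv
  have hl : ∀ a, ∃ θ, IsAutR2 n θ ∧ (ψ.comp Φ) a = θ a := by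
    intro a
    obtain ⟨θ, hθ, h⟩ := hloc a
    exact ⟨ψ.comp θ, hψ.comp2 hθ, by simp [h]⟩
  have hs : (ψ.comp Φ) (bs2 n 0) + (ψ.comp Φ) (bs2 n (n + 1)) = bs2 n 0 + bs2 n (n + 1) := by
    rw [← map_add (ψ.comp Φ), LinearMap.comp_apply, he, h1]
  have hxy : (ψ.comp Φ) (bs2 n 0) = bs2 n 0 ∧
      (ψ.comp Φ) (bs2 n (n + 1)) = bs2 n (n + 1) := by
    obtain ⟨φx, hφx, hex⟩ := hl (bs2 n 0)
    obtain ⟨φy, hφy, hey⟩ := hl (bs2 n (n + 1))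
    obtain ⟨-, -, -, -, -, -, ⟨-, -, x2, xl, -⟩, -⟩ := aut_shape n hn φx hφx
    obtain ⟨-, -, -, γ, -, -, -, -, -, -, hy, -⟩ := aut_shape n hn φy hφy
    rw [hy] at hey
    rw [← hex] at x2
    rw [hey] at hs ⊢
    have hγ : γ = 0 := by
      have := congrArg (fun v => co2 n v 2) hs
      simp only [co2_add, co2_smul, x2, co2_bs2] at this
      grind
    rw [hγ] at hs ⊢
    simp only [zero_smul, zero_add] at hs ⊢
    exact ⟨add_right_cancel hs, trivial⟩
  have hA := local_normalized n hn (ψ.comp Φ) hl hxy.1 hxy.2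
  have hc : Φ = φ.comp (ψ.comp Φ) := by
    refine LinearMap.ext fun v => ?_
    exact (h2 (Φ v)).symm
  rw [hc]
  exact hφ.comp2 hA
end

section
/- Let n ≥ 5. Every local automorphism of the (n+2)-dimensional complex solvable Leibniz algebra R_3 is an automorphism of R_3. -/
/-!
`R₃` is the `(n+2)`-dimensional complex solvable Leibniz algebra with basis
`e_1, …, e_n, x, y` and nonzero products `[e_1, e_1] = e_3`,
`[e_i, e_1] = e_{i+1}` for `3 ≤ i ≤ n-1`, `[e_1, x] = e_1`, `[x, e_1] = -e_1`,
`[e_i, x] = (i-1) • e_i` for `3 ≤ i ≤ n`, `[e_2, y] = e_2`.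
We realize it on `Fin (n+2) → ℂ`, where `x = Pi.single 0 1`,
`e_i = Pi.single i 1` for `1 ≤ i ≤ n` and `y = Pi.single (Fin.last (n+1)) 1`,
the bracket being given coordinatewise.
-/

/-- The bracket of the Leibniz algebra `R₃` on `Fin (n+2) → ℂ`. -/
def bracketR3 (n : ℕ) (u v : Fin (n + 2) → ℂ) : Fin (n + 2) → ℂ := fun k =>
  if k.val = 1 then u 1 * v 0 - u 0 * v 1
  else if k.val = 2 then u 2 * v (Fin.last (n + 1))
  else if 3 ≤ k.val ∧ k.val ≤ n then
    (if 4 ≤ k.val then u ⟨k.val - 1, lt_of_le_of_lt (Nat.sub_le _ _) k.isLt⟩ * v 1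
      else u 1 * v 1)
      + ((k.val : ℂ) - 1) * u k * v 0
  else 0

/-- An automorphism of `R₃`: a bijective `ℂ`-linear map preserving the bracket. -/
def IsAutR3 (n : ℕ) (φ : (Fin (n + 2) → ℂ) →ₗ[ℂ] (Fin (n + 2) → ℂ)) : Prop :=
  Function.Bijective φ ∧ ∀ u v, φ (bracketR3 n u v) = bracketR3 n (φ u) (φ v)

/-- natural-number-indexed coordinates -/
def co {n : ℕ} (u : Fin (n + 2) → ℂ) (j : ℕ) : ℂ := if h : j < n + 2 then u ⟨j, h⟩ else 0

/-- basis vectors -/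
def E (n k : ℕ) : Fin (n + 2) → ℂ := fun j => if j.val = k then 1 else 0

lemma co_ext {n : ℕ} {u v : Fin (n + 2) → ℂ} (h : ∀ j, j ≤ n + 1 → co u j = co v j) : u = v := by
  funext j
  have := h j.val (by omega)
  simpa [co] using this

lemma co_E {n k : ℕ} (j : ℕ) (hj : j ≤ n + 1) : co (E n k) j = if j = k then 1 else 0 := by
  have : j < n + 2 := by omega
  simp [co, E, this]

lemma co_add {n : ℕ} (u v : Fin (n + 2) → ℂ) (j : ℕ) : co (u + v) j = co u j + co v j := by
  unfold co; split_ifs <;> simp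

lemma co_smul {n : ℕ} (t : ℂ) (u : Fin (n + 2) → ℂ) (j : ℕ) : co (t • u) j = t * co u j := by
  unfold co; split_ifs <;> simp

lemma co_zero {n : ℕ} (j : ℕ) : co (0 : Fin (n + 2) → ℂ) j = 0 := by
  unfold co; split_ifs <;> simp

lemma br_co {n : ℕ} (hn : 5 ≤ n) (u v : Fin (n + 2) → ℂ) (j : ℕ) (hj : j ≤ n + 1) :
    co (bracketR3 n u v) j =
      if j = 1 then co u 1 * co v 0 - co u 0 * co v 1
      else if j = 2 then co u 2 * co v (n + 1)
      else if 3 ≤ j ∧ j ≤ n then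
        (if 4 ≤ j then co u (j - 1) * co v 1 else co u 1 * co v 1)
          + ((j : ℂ) - 1) * co u j * co v 0
      else 0 := by
  have h1 : ∀ w : Fin (n + 2) → ℂ, w 1 = co w 1 := by
    intro w
    simp only [co, show 1 < n + 2 by omega, dif_pos]; congr 1
  have h0 : ∀ w : Fin (n + 2) → ℂ, w 0 = co w 0 := by
    intro w
    simp only [co, show 0 < n + 2 by omega, dif_pos]; congr 1
  have h2 : ∀ w : Fin (n + 2) → ℂ, w 2 = co w 2 := by
    intro w
    simp only [co, show 2 < n + 2 by omega, dif_pos]; congr 1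
    apply Fin.ext
    simp [Nat.mod_eq_of_lt (show 2 < n + 2 by omega)]
  have hl : ∀ w : Fin (n + 2) → ℂ, w (Fin.last (n + 1)) = co w (n + 1) := by
    intro w
    simp only [co, show n + 1 < n + 2 by omega, dif_pos]; congr 1
  have hj' : j < n + 2 := by omega
  have e : co (bracketR3 n u v) j = bracketR3 n u v ⟨j, hj'⟩ := by simp [co, hj']
  have e2 : co u j = u ⟨j, hj'⟩ := by simp [co, hj']
  have e3 : co u (j - 1) = u ⟨j - 1, by omega⟩ := by simp [co, show j - 1 < n + 2 by omega]
  rw [e, e2, e3]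
  simp only [bracketR3, h1, h0, h2, hl]


lemma br0 {n : ℕ} (hn : 5 ≤ n) (u v : Fin (n + 2) → ℂ) : co (bracketR3 n u v) 0 = 0 := by
  rw [br_co hn _ _ _ (by omega)]; simp
lemma br1 {n : ℕ} (hn : 5 ≤ n) (u v : Fin (n + 2) → ℂ) : co (bracketR3 n u v) 1 = co u 1 * co v 0 - co u 0 * co v 1 := by
  rw [br_co hn _ _ _ (by omega)]; simp
lemma br2 {n : ℕ} (hn : 5 ≤ n) (u v : Fin (n + 2) → ℂ) : co (bracketR3 n u v) 2 = co u 2 * co v (n + 1) := by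
  rw [br_co hn _ _ _ (by omega)]; simp
lemma br3 {n : ℕ} (hn : 5 ≤ n) (u v : Fin (n + 2) → ℂ) : co (bracketR3 n u v) 3 = co u 1 * co v 1 + 2 * co u 3 * co v 0 := by
  rw [br_co hn _ _ _ (by omega)]; simp [show 3 ≤ n by omega]; norm_num
lemma brs {n : ℕ} (hn : 5 ≤ n) (u v : Fin (n + 2) → ℂ) (j : ℕ) (h3 : 3 ≤ j) (hj : j + 1 ≤ n) :
    co (bracketR3 n u v) (j + 1) = co u j * co v 1 + j * co u (j + 1) * co v 0 := by
  rw [br_co hn _ _ _ (by omega), if_neg (by omega), if_neg (by omega), if_pos (by omega),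
    if_pos (by omega)]; simp
lemma brl {n : ℕ} (hn : 5 ≤ n) (u v : Fin (n + 2) → ℂ) : co (bracketR3 n u v) (n + 1) = 0 := by
  rw [br_co hn _ _ _ (by omega), if_neg (by omega), if_neg (by omega), if_neg (by omega)]
lemma cases_idx {n : ℕ} {P : ℕ → Prop} (h0 : P 0) (h1 : P 1) (h2 : P 2) (h3 : P 3)
    (hs : ∀ j, 3 ≤ j → j + 1 ≤ n → P (j + 1)) (hl : P (n + 1)) : ∀ j, j ≤ n + 1 → P j := by
  intro j hj
  rcases j with _ | _ | _ | _ | j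
  · exact h0
  · exact h1
  · exact h2
  · exact h3
  · by_cases h : j + 3 + 1 ≤ n
    · exact hs (j + 3) (by omega) h
    · have : j + 1 + 1 + 1 + 1 = n + 1 := by omega
      rw [this]; exact hl

/-- the entries of an automorphism -/
structure Par {n : ℕ} (φ : (Fin (n + 2) → ℂ) →ₗ[ℂ] (Fin (n + 2) → ℂ)) (a c β : ℂ) : Prop where
  ha : a ≠ 0
  y : φ (E n (n + 1)) = E n (n + 1)
  e2 : φ (E n 2) = β • E n 2
  p0 : co (φ (E n 1)) 0 = 0
  p1 : co (φ (E n 1)) 1 = a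
  p2 : co (φ (E n 1)) 2 = 0
  pj : ∀ i, i + 3 ≤ n → co (φ (E n 1)) (i + 3) = a * ((-c) ^ (i + 1) / (i + 1).factorial)
  pl : co (φ (E n 1)) (n + 1) = 0
  q0 : co (φ (E n 0)) 0 = 1
  q1 : co (φ (E n 0)) 1 = c
  q2 : co (φ (E n 0)) 2 = 0
  qj : ∀ i, i + 3 ≤ n → co (φ (E n 0)) (i + 3) = -((-c) ^ (i + 2) / (i + 2).factorial)
  ql : co (φ (E n 0)) (n + 1) = 0
  r0 : ∀ k, k + 3 ≤ n → co (φ (E n (k + 3))) 0 = 0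
  r1 : ∀ k, k + 3 ≤ n → co (φ (E n (k + 3))) 1 = 0
  r2 : ∀ k, k + 3 ≤ n → co (φ (E n (k + 3))) 2 = 0
  rj : ∀ k i, k + 3 ≤ n → i + 3 ≤ n → co (φ (E n (k + 3))) (i + 3) =
    if i < k then 0 else a ^ (k + 2) * ((-c) ^ (i - k) / (i - k).factorial)
  rl : ∀ k, k + 3 ≤ n → co (φ (E n (k + 3))) (n + 1) = 0

lemma fac_ne (i : ℕ) : ((i.factorial : ℕ) : ℂ) ≠ 0 := by exact_mod_cast i.factorial_ne_zero

lemma exists_par {n : ℕ} (hn : 5 ≤ n) (φ : (Fin (n + 2) → ℂ) →ₗ[ℂ] (Fin (n + 2) → ℂ))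
    (h : IsAutR3 n φ) : ∃ a c β, Par φ a c β := by
  obtain ⟨⟨hinj, hsur⟩, hbr⟩ := h
  have n0 : n ≠ 0 := by omega
  have n1 : n ≠ 1 := by omega
  have n2 : n ≠ 2 := by omega
  -- products of basis elements
  have by0 : ∀ v, bracketR3 n (E n (n + 1)) v = 0 := by
    intro v
    apply co_ext
    apply cases_idx
    · rw [br0 hn, co_zero]
    · rw [br1 hn, co_zero, co_E _ (by omega), co_E _ (by omega)]; simp; intro; omega
    · rw [br2 hn, co_zero, co_E _ (by omega)]; simp [show 2 ≠ n + 1 by omega]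
    · rw [br3 hn, co_zero, co_E _ (by omega), co_E _ (by omega)]
      rw [if_neg (by omega), if_neg (by omega)]; ring
    · intro j h3 hj
      rw [brs hn _ _ j h3 hj, co_zero, co_E _ (by omega), co_E _ (by omega)]
      rw [if_neg (by omega), if_neg (by omega)]; ring
    · rw [brl hn, co_zero]
  have gen : ∀ i k (w : Fin (n + 2) → ℂ), (∀ j, j ≤ n + 1 →
      (if j = 1 then (if 1 = i then 1 else 0) * (if 0 = k then 1 else 0) -
        (if 0 = i then 1 else 0) * (if 1 = k then 1 else 0)
      else if j = 2 then (if 2 = i then 1 else 0) * (if n + 1 = k then 1 else 0)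
      else if 3 ≤ j ∧ j ≤ n then
        (if 4 ≤ j then (if j - 1 = i then 1 else 0) * (if 1 = k then 1 else 0)
          else (if 1 = i then 1 else 0) * (if 1 = k then 1 else 0))
          + ((j : ℂ) - 1) * (if j = i then 1 else 0) * (if 0 = k then 1 else 0)
      else 0) = co w j) → bracketR3 n (E n i) (E n k) = w := by
    intro i k w H
    apply co_ext
    intro j hj
    rw [← H j hj, br_co hn _ _ _ hj]
    rw [co_E 1 (by omega), co_E 0 (by omega), co_E 1 (by omega), co_E 0 (by omega),
      co_E 2 (by omega), co_E (n+1) (by omega), co_E (j-1) (by omega), co_E j (by omega)]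
  have b2y : bracketR3 n (E n 2) (E n (n + 1)) = E n 2 := by
    apply gen; intro j hj; rw [co_E _ hj]; split_ifs <;> first | omega | contradiction | simp
  have b0y : bracketR3 n (E n 0) (E n (n + 1)) = 0 := by
    apply gen; intro j hj; rw [co_zero]; split_ifs <;> first | omega | contradiction | simp
  have b1y : bracketR3 n (E n 1) (E n (n + 1)) = 0 := by
    apply gen; intro j hj; rw [co_zero]; split_ifs <;> first | omega | contradiction | simp
  have b20 : bracketR3 n (E n 2) (E n 0) = 0 := by
    apply gen; intro j hj; rw [co_zero]; split_ifs <;> first | omega | contradiction | simp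
  have b10 : bracketR3 n (E n 1) (E n 0) = E n 1 := by
    apply gen; intro j hj; rw [co_E _ hj]; split_ifs <;> first | omega | contradiction | simp
  have b00 : bracketR3 n (E n 0) (E n 0) = 0 := by
    apply gen; intro j hj; rw [co_zero]; split_ifs <;> first | omega | contradiction | simp
  have b11 : bracketR3 n (E n 1) (E n 1) = E n 3 := by
    apply gen; intro j hj; rw [co_E _ hj]; split_ifs <;> first | omega | contradiction | simp
  have bk1 : ∀ k, k + 4 ≤ n → bracketR3 n (E n (k + 3)) (E n 1) = E n (k + 4) := by
    intro k hk
    apply gen; intro j hj; rw [co_E _ hj]; split_ifs <;> first | omega | contradiction | simp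
  have hEne : ∀ k, k ≤ n + 1 → E n k ≠ 0 := by
    intro k hk h0
    have := congrArg (fun w => co w k) h0
    simp [co_E k hk, co_zero] at this
  have hφne : ∀ k, k ≤ n + 1 → φ (E n k) ≠ 0 := by
    intro k hk h0
    exact hEne k hk (hinj (by rw [h0, map_zero]))
  -- image of y
  have Y : ∀ w, bracketR3 n (φ (E n (n + 1))) w = 0 := by
    intro w
    obtain ⟨v, rfl⟩ := hsur w
    rw [← hbr, by0, map_zero]
  have y1 : co (φ (E n (n + 1))) 1 = 0 := by
    have := br1 hn (φ (E n (n + 1))) (E n 0)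
    rw [Y, co_zero, co_E _ (by omega), co_E _ (by omega)] at this
    simpa using this.symm
  have y0 : co (φ (E n (n + 1))) 0 = 0 := by
    have := br1 hn (φ (E n (n + 1))) (E n 1)
    rw [Y, co_zero, co_E _ (by omega), co_E _ (by omega)] at this
    simpa using this.symm
  have y2 : co (φ (E n (n + 1))) 2 = 0 := by
    have := br2 hn (φ (E n (n + 1))) (E n (n + 1))
    rw [Y, co_zero, co_E _ (by omega)] at this
    simpa using this.symm
  have y3 : co (φ (E n (n + 1))) 3 = 0 := by
    have := br3 hn (φ (E n (n + 1))) (E n 0)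
    rw [Y, co_zero, co_E _ (by omega), co_E _ (by omega)] at this
    simpa using this.symm
  have yj : ∀ j, 3 ≤ j → j + 1 ≤ n → co (φ (E n (n + 1))) (j + 1) = 0 := by
    intro j h3 hj
    have := brs hn (φ (E n (n + 1))) (E n 0) j h3 hj
    rw [Y, co_zero, co_E _ (by omega), co_E _ (by omega)] at this
    have hj0 : (j : ℂ) ≠ 0 := by exact_mod_cast (by omega : j ≠ 0)
    simpa [hj0] using this.symm
  have hY : φ (E n (n + 1)) = (co (φ (E n (n + 1))) (n + 1)) • E n (n + 1) := by
    apply co_ext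
    apply cases_idx
    · rw [y0, co_smul, co_E _ (by omega), if_neg (by omega), mul_zero]
    · rw [y1, co_smul, co_E _ (by omega), if_neg (by omega), mul_zero]
    · rw [y2, co_smul, co_E _ (by omega), if_neg (by omega), mul_zero]
    · rw [y3, co_smul, co_E _ (by omega), if_neg (by omega), mul_zero]
    · intro j h3 hj
      rw [yj j h3 hj, co_smul, co_E _ (by omega), if_neg (by omega), mul_zero]
    · rw [co_smul, co_E _ (by omega)]; simp
  have F2 : φ (E n 2) = bracketR3 n (φ (E n 2)) (φ (E n (n + 1))) := by rw [← hbr, b2y]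
  have h2 : φ (E n 2) = (co (φ (E n 2)) 2) • E n 2 := by
    apply co_ext
    apply cases_idx
    · rw [co_smul, co_E _ (by omega), if_neg (by omega), mul_zero, F2, br0 hn]
    · rw [co_smul, co_E _ (by omega), if_neg (by omega), mul_zero, F2, br1 hn, y0, y1]; ring
    · rw [co_smul, co_E _ (by omega)]; simp
    · rw [co_smul, co_E _ (by omega), if_neg (by omega), mul_zero, F2, br3 hn, y0, y1]; ring
    · intro j h3 hj
      rw [co_smul, co_E _ (by omega), if_neg (by omega), mul_zero, F2, brs hn _ _ j h3 hj, y0, y1]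
      ring
    · rw [co_smul, co_E _ (by omega), if_neg (by omega), mul_zero, F2, brl hn]
  set β := co (φ (E n 2)) 2 with hβ
  have hβ0 : β ≠ 0 := by
    intro h0
    rw [h0, zero_smul] at h2
    exact hφne 2 (by omega) h2
  have yl : co (φ (E n (n + 1))) (n + 1) = 1 := by
    have := br2 hn (φ (E n 2)) (φ (E n (n + 1)))
    rw [← F2, ← hβ] at this
    exact mul_left_cancel₀ hβ0 (by rw [← this, mul_one])
  rw [yl, one_smul] at hY
  -- second coordinates
  have q2 : co (φ (E n 0)) 2 = 0 := by
    have := br2 hn (φ (E n 0)) (φ (E n (n + 1)))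
    rw [← hbr, b0y, map_zero, co_zero, yl] at this
    simpa using this.symm
  have p2 : co (φ (E n 1)) 2 = 0 := by
    have := br2 hn (φ (E n 1)) (φ (E n (n + 1)))
    rw [← hbr, b1y, map_zero, co_zero, yl] at this
    simpa using this.symm
  have ql : co (φ (E n 0)) (n + 1) = 0 := by
    have := br2 hn (φ (E n 2)) (φ (E n 0))
    rw [← hbr, b20, map_zero, co_zero, ← hβ] at this
    simpa [hβ0] using this.symm
  have F1 : φ (E n 1) = bracketR3 n (φ (E n 1)) (φ (E n 0)) := by rw [← hbr, b10]
  have p0 : co (φ (E n 1)) 0 = 0 := by rw [F1, br0 hn]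
  have pl : co (φ (E n 1)) (n + 1) = 0 := by rw [F1, brl hn]
  have F3 : φ (E n 3) = bracketR3 n (φ (E n 1)) (φ (E n 1)) := by rw [← hbr, b11]
  have ha : co (φ (E n 1)) 1 ≠ 0 := by
    intro h0
    apply hφne 3 (by omega)
    apply co_ext
    rw [F3]
    apply cases_idx
    · rw [br0 hn, co_zero]
    · rw [br1 hn, co_zero, h0]; ring
    · rw [br2 hn, co_zero, p2]; ring
    · rw [br3 hn, co_zero, h0, p0]; ring
    · intro j h3 hj
      rw [brs hn _ _ j h3 hj, co_zero, h0, p0]; ring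
    · rw [brl hn, co_zero]
  have q0 : co (φ (E n 0)) 0 = 1 := by
    have := br1 hn (φ (E n 1)) (φ (E n 0))
    rw [← F1, p0] at this
    exact mul_left_cancel₀ ha (by linear_combination -this)
  set a := co (φ (E n 1)) 1 with hadef
  set c := co (φ (E n 0)) 1 with hcdef
  have pj : ∀ i, i + 3 ≤ n → co (φ (E n 1)) (i + 3) = a * ((-c) ^ (i + 1) / (i + 1).factorial) := by
    intro i
    induction i with
    | zero =>
      intro _
      have := br3 hn (φ (E n 1)) (φ (E n 0))
      rw [← F1, q0, ← hadef, ← hcdef] at this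
      simp only [Nat.zero_add, pow_one, Nat.factorial_one, Nat.cast_one]
      linear_combination -this
    | succ i ih =>
      intro hi
      have := brs hn (φ (E n 1)) (φ (E n 0)) (i + 3) (by omega) (by omega)
      rw [← F1, q0, ← hcdef, ih (by omega)] at this
      have hi2 : ((i : ℂ) + 1 + 1) ≠ 0 := by exact_mod_cast (by omega : i + 1 + 1 ≠ 0)
      have hf := fac_ne (i + 1)
      rw [show i + 1 + 3 = i + 3 + 1 by ring, Nat.factorial_succ (i + 1)]
      push_cast at this ⊢
      generalize co (φ (E n 1)) (i + 3 + 1) = X at *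
      generalize ((i + 1).factorial : ℂ) = f at *
      field_simp at this ⊢
      ring_nf at this ⊢
      linear_combination -this
  have qj : ∀ i, i + 3 ≤ n → co (φ (E n 0)) (i + 3) = -((-c) ^ (i + 2) / (i + 2).factorial) := by
    intro i
    induction i with
    | zero =>
      intro _
      have := br3 hn (φ (E n 0)) (φ (E n 0))
      rw [← hbr, b00, map_zero, co_zero, q0, ← hcdef] at this
      simp only [Nat.zero_add, Nat.factorial_two, Nat.cast_ofNat]
      linear_combination -this / 2
    | succ i ih =>
      intro hi
      have := brs hn (φ (E n 0)) (φ (E n 0)) (i + 3) (by omega) (by omega)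
      rw [← hbr, b00, map_zero, co_zero, q0, ← hcdef, ih (by omega)] at this
      have hi2 : ((i : ℂ) + 2 + 1) ≠ 0 := by exact_mod_cast (by omega : i + 2 + 1 ≠ 0)
      have hf := fac_ne (i + 2)
      rw [show i + 1 + 3 = i + 3 + 1 by ring, show i + 1 + 2 = i + 2 + 1 by ring,
        Nat.factorial_succ (i + 2)]
      push_cast at this ⊢
      generalize co (φ (E n 0)) (i + 3 + 1) = X at *
      generalize ((i + 2).factorial : ℂ) = f at *
      field_simp at this ⊢
      ring_nf at this ⊢
      linear_combination -this
  have R : ∀ k, k + 3 ≤ n → co (φ (E n (k + 3))) 0 = 0 ∧ co (φ (E n (k + 3))) 1 = 0 ∧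
      co (φ (E n (k + 3))) 2 = 0 ∧ co (φ (E n (k + 3))) (n + 1) = 0 ∧
      ∀ i, i + 3 ≤ n → co (φ (E n (k + 3))) (i + 3) =
        if i < k then 0 else a ^ (k + 2) * ((-c) ^ (i - k) / (i - k).factorial) := by
    intro k
    induction k with
    | zero =>
      intro _
      rw [Nat.zero_add, F3]
      refine ⟨br0 hn _ _, ?_, ?_, brl hn _ _, ?_⟩
      · rw [br1 hn, p0]; ring
      · rw [br2 hn, p2]; ring
      · intro i hi
        rcases i with _ | i
        · rw [Nat.zero_add, br3 hn, p0, ← hadef]; simp; ring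
        · rw [show i + 1 + 3 = i + 3 + 1 by ring, brs hn _ _ (i + 3) (by omega) (by omega), p0,
            pj i (by omega), ← hadef]
          simp; ring
    | succ k ih =>
      intro hk
      obtain ⟨i0, i1, i2, i3, i4⟩ := ih (by omega)
      have Fk : φ (E n (k + 1 + 3)) = bracketR3 n (φ (E n (k + 3))) (φ (E n 1)) := by
        rw [← hbr, bk1 k (by omega)]
      rw [Fk]
      refine ⟨br0 hn _ _, ?_, ?_, brl hn _ _, ?_⟩
      · rw [br1 hn, p0, i0]; ring
      · rw [br2 hn, i2]; ring
      · intro i hi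
        rcases i with _ | i
        · rw [Nat.zero_add, br3 hn, p0, i1]; simp
        · rw [show i + 1 + 3 = i + 3 + 1 by ring, brs hn _ _ (i + 3) (by omega) (by omega), p0,
            i4 i (by omega), ← hadef]
          by_cases hik : i < k
          · simp [hik]
          · simp [hik]; ring
  exact ⟨a, c, β, ha, hY, h2, p0, hadef.symm, p2, pj, pl, q0, hcdef.symm, q2, qj, ql,
    fun k hk => (R k hk).1, fun k hk => (R k hk).2.1, fun k hk => (R k hk).2.2.1,
    fun k i hk hi => (R k hk).2.2.2.2 i hi, fun k hk => (R k hk).2.2.2.1⟩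

lemma lin_ext {n : ℕ} {φ ψ : (Fin (n + 2) → ℂ) →ₗ[ℂ] (Fin (n + 2) → ℂ)}
    (h : ∀ k, k ≤ n + 1 → φ (E n k) = ψ (E n k)) : φ = ψ := by
  apply (Pi.basisFun ℂ (Fin (n + 2))).ext
  intro i
  have e : (Pi.basisFun ℂ (Fin (n + 2))) i = E n i.val := by
    funext j
    simp [E, Pi.single_apply, Fin.ext_iff]
  rw [e]
  exact h i.val (by omega)

/-- Every local automorphism of `R3` is an automorphism. -/
theorem every_local_automorphism_of_R3_is_automorphism
    (n : ℕ) (hn : 5 ≤ n)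
    (Φ : (Fin (n + 2) → ℂ) →ₗ[ℂ] (Fin (n + 2) → ℂ))
    (hloc : ∀ a : Fin (n + 2) → ℂ, ∃ φ, IsAutR3 n φ ∧ Φ a = φ a) :
    IsAutR3 n Φ := by
  have hl : ∀ v : Fin (n + 2) → ℂ, ∃ φ a c β, IsAutR3 n φ ∧ Par φ a c β ∧ Φ v = φ v := by
    intro v
    obtain ⟨φ, h1, h2⟩ := hloc v
    obtain ⟨a, c, β, hp⟩ := exists_par hn φ h1
    exact ⟨φ, a, c, β, h1, hp, h2⟩
  obtain ⟨φ, a, c, β, hφ, P, h12⟩ := hl (E n 1 + E n 2)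
  obtain ⟨φ1, a1, c1, β1, -, P1, h1⟩ := hl (E n 1)
  obtain ⟨φ2, a2, c2, β2, -, P2, h2⟩ := hl (E n 2)
  rw [map_add, map_add, h1, h2, P2.e2, P.e2] at h12
  have C12 : ∀ j, j ≤ n + 1 → co (φ1 (E n 1)) j + β2 * (if j = 2 then 1 else 0)
      = co (φ (E n 1)) j + β * (if j = 2 then 1 else 0) := by
    intro j hj
    have := congrArg (fun w => co w j) h12
    simpa only [co_add, co_smul, co_E j hj] using this
  have hβ : β2 = β := by
    have := C12 2 (by omega)
    rw [P1.p2, P.p2] at this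
    simpa using this
  have E2 : Φ (E n 2) = φ (E n 2) := by rw [h2, P2.e2, P.e2, hβ]
  have E1 : Φ (E n 1) = φ (E n 1) := by
    rw [h1]; rw [hβ] at h12; exact add_right_cancel h12
  have Ey : Φ (E n (n + 1)) = φ (E n (n + 1)) := by
    obtain ⟨ψ, _, _, _, -, Q, h⟩ := hl (E n (n + 1))
    rw [h, Q.y, P.y]
  have ha := P.ha
  -- the vector x
  obtain ⟨φ0, a0, c0, β0, -, P0, h0⟩ := hl (E n 0)
  have hc : c0 = c := by
    by_contra hne
    set t := 2 * (c - c0) / a with ht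
    have ht0 : t ≠ 0 := by
      rw [ht]
      exact div_ne_zero (mul_ne_zero two_ne_zero (sub_ne_zero.mpr (Ne.symm hne))) ha
    have hta : t * a = 2 * (c - c0) := by rw [ht]; field_simp
    obtain ⟨ψ, a', c', _, -, Q, h⟩ := hl (E n 0 + t • E n 1)
    rw [map_add, map_add, map_smul, map_smul, h0, E1] at h
    have C1 := congrArg (fun w => co w 1) h
    have C3 := congrArg (fun w => co w (0 + 3)) h
    simp only [co_add, co_smul] at C1 C3
    rw [P0.q1, Q.q1, P.p1, Q.p1] at C1
    rw [P0.qj 0 (by omega), Q.qj 0 (by omega), P.pj 0 (by omega), Q.pj 0 (by omega)] at C3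
    simp only [Nat.zero_add, Nat.factorial_two, Nat.cast_ofNat, pow_one, Nat.factorial_one,
      Nat.cast_one, div_one] at C3
    have : (t * a') ^ 2 = 0 := by
      have hc' : c' = c0 + t * a - t * a' := by linear_combination -C1
      rw [hc', hta] at C3
      have C3' : -((-c0) ^ 2 / 2) + (t * a) * (-c) = -((-(c0 + 2 * (c - c0) - t * a')) ^ 2 / 2) + (t * a') * (-(c0 + 2 * (c - c0) - t * a')) := by
        linear_combination C3
      rw [hta] at C3'
      linear_combination -2 * C3'
    exact mul_ne_zero ht0 Q.ha (pow_eq_zero_iff (two_ne_zero) |>.mp this)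
  have E0 : Φ (E n 0) = φ (E n 0) := by
    rw [h0]
    apply co_ext
    apply cases_idx
    · rw [P0.q0, P.q0]
    · rw [P0.q1, P.q1, hc]
    · rw [P0.q2, P.q2]
    · rw [P0.qj 0 (by omega), P.qj 0 (by omega), hc]
    · intro j h3 hj
      obtain ⟨i, rfl⟩ : ∃ i, j = i + 2 := ⟨j - 2, by omega⟩
      rw [P0.qj i (by omega), P.qj i (by omega), hc]
    · rw [P0.ql, P.ql]
  have Ek : ∀ k, k + 3 ≤ n → Φ (E n (k + 3)) = φ (E n (k + 3)) := by
    intro k hk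
    obtain ⟨φk, b, d, βk, -, Pk, hk'⟩ := hl (E n (k + 3))
    have hd : k + 4 ≤ n → d = c := by
      intro hk4
      obtain ⟨ψ, a', c', _, -, Q, h⟩ := hl (E n 0 + E n (k + 3))
      rw [map_add, map_add, hk', E0] at h
      have C : ∀ j, co (φ (E n 0)) j + co (φk (E n (k + 3))) j
          = co (ψ (E n 0)) j + co (ψ (E n (k + 3))) j := by
        intro j
        have := congrArg (fun w => co w j) h
        simpa only [co_add] using this
      have C1 := C 1
      rw [P.q1, Q.q1, Pk.r1 k hk, Q.r1 k hk, add_zero, add_zero] at C1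
      subst C1
      have C2 := C (k + 3)
      have C3 := C (k + 1 + 3)
      rw [P.qj k hk, Q.qj k hk, Pk.rj k k hk hk, Q.rj k k hk hk] at C2
      rw [P.qj (k+1) (by omega), Q.qj (k+1) (by omega), Pk.rj k (k+1) hk (by omega),
        Q.rj k (k+1) hk (by omega)] at C3
      simp at C2 C3
      rw [C2] at C3
      have := pow_ne_zero (k + 2) Q.ha
      simpa [Q.ha] using C3
    have hb : b ^ (k + 2) = a ^ (k + 2) := by
      obtain ⟨ψ, a', c', _, -, Q, h⟩ := hl (E n 1 + E n (k + 3))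
      rw [map_add, map_add, hk', E1] at h
      have C : ∀ j, co (φ (E n 1)) j + co (φk (E n (k + 3))) j
          = co (ψ (E n 1)) j + co (ψ (E n (k + 3))) j := by
        intro j
        have := congrArg (fun w => co w j) h
        simpa only [co_add] using this
      have C1 := C 1
      rw [P.p1, Q.p1, Pk.r1 k hk, Q.r1 k hk, add_zero, add_zero] at C1
      subst C1
      have C3 := C (0 + 3)
      rw [P.pj 0 (by omega), Q.pj 0 (by omega), Pk.rj k 0 hk (by omega),
        Q.rj k 0 hk (by omega)] at C3
      rcases Nat.eq_zero_or_pos k with rfl | hk0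
      · have hd := hd (by omega)
        subst hd
        have C4 := C (1 + 3)
        have C5 := C (2 + 3)
        rw [P.pj 1 (by omega), Q.pj 1 (by omega), Pk.rj 0 1 hk (by omega),
          Q.rj 0 1 hk (by omega)] at C4
        rw [P.pj 2 (by omega), Q.pj 2 (by omega), Pk.rj 0 2 hk (by omega),
          Q.rj 0 2 hk (by omega)] at C5
        norm_num [Nat.factorial] at C3 C4 C5
        norm_num
        generalize b ^ 2 = B at *
        obtain ⟨s, rfl⟩ : ∃ s, c' = d + s := ⟨c' - d, by ring⟩
        have hB : B = a ^ 2 - a * s := by linear_combination C3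
        subst hB
        have h4 : a * s * (s - 2 * a) = 0 := by linear_combination -2 * C4
        rcases mul_eq_zero.mp h4 with h4 | h4
        · linear_combination -h4
        · exfalso
          have hs : s = 2 * a := by linear_combination h4
          subst hs
          have : a ^ 4 = 0 := by linear_combination (-3/2 : ℂ) * C5
          exact ha (pow_eq_zero_iff (by norm_num) |>.mp this)
      · simp only [hk0, if_true, add_zero] at C3
        have hcc : c = c' := by
          have := mul_left_cancel₀ ha C3
          simpa using this
        subst hcc
        have C4 := C (k + 3)
        rw [P.pj k (by omega), Q.pj k (by omega), Pk.rj k k hk (by omega),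
          Q.rj k k hk (by omega)] at C4
        simpa using C4
    rw [hk']
    apply co_ext
    have hmid : ∀ i, i + 3 ≤ n → co (φk (E n (k + 3))) (i + 3) = co (φ (E n (k + 3))) (i + 3) := by
      intro i hi
      rw [Pk.rj k i hk hi, P.rj k i hk hi, hb]
      by_cases hik : i < k
      · simp [hik]
      · by_cases hk4 : k + 4 ≤ n
        · rw [hd hk4]
        · have : i - k = 0 := by omega
          simp [this]
    apply cases_idx
    · rw [Pk.r0 k hk, P.r0 k hk]
    · rw [Pk.r1 k hk, P.r1 k hk]
    · rw [Pk.r2 k hk, P.r2 k hk]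
    · exact hmid 0 (by omega)
    · intro j h3 hj
      obtain ⟨i, rfl⟩ : ∃ i, j = i + 2 := ⟨j - 2, by omega⟩
      exact hmid i (by omega)
    · rw [Pk.rl k hk, P.rl k hk]
  have : Φ = φ := by
    apply lin_ext
    refine cases_idx (n := n) (P := fun k => Φ (E n k) = φ (E n k)) E0 E1 E2 (Ek 0 (by omega)) ?_ Ey
    intro j h3 hj
    obtain ⟨i, rfl⟩ : ∃ i, j = i + 2 := ⟨j - 2, by omega⟩
    exact Ek i (by omega)
  rw [this]
  exact hφ
end

section
/- Let n ≥ 5. Every 2-local automorphism of the (n+1)-dimensional complex solvable Leibniz algebra R_0 is an automorphism of R_0 (in particular, it is linear). -/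
/-- An automorphism fixing `e_1` is the identity. -/
theorem aut_fix_e1 (n : ℕ) (hn : 5 ≤ n) (χ : (Fin (n + 1) → ℂ) →ₗ[ℂ] (Fin (n + 1) → ℂ))
    (hχ : ∀ u v, χ (bracketR0 n u v) = bracketR0 n (χ u) (χ v))
    (h1 : χ (Pi.single 1 1) = Pi.single 1 1) : χ = LinearMap.id := by
  have hv1 : (1 : Fin (n + 1)).val = 1 := by
    rw [Fin.val_one']; exact Nat.mod_eq_of_lt (by omega)
  have h01 : (0 : Fin (n + 1)) ≠ 1 := by
    intro h; have := congrArg Fin.val h; rw [hv1] at this; simp at this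
  -- products of basis vectors
  have hb (i : ℕ) (hi : i + 1 < n + 1) :
      bracketR0 n (Pi.single ⟨i, by omega⟩ 1) (Pi.single 1 1) = Pi.single ⟨i + 1, hi⟩ 1 := by
    funext k
    simp only [bracketR0, Pi.single_apply, Fin.ext_iff, hv1]
    rcases k with ⟨k, hk⟩
    rcases k with _ | k <;> simp
  have hb00 : bracketR0 n (Pi.single 0 1) (Pi.single 0 1) = 0 := by
    funext k
    simp only [bracketR0, Pi.single_apply, Fin.ext_iff, hv1]
    rcases k with ⟨k, hk⟩
    rcases k with _ | k <;> simp
  have hone : (⟨0 + 1, by omega⟩ : Fin (n + 1)) = 1 := Fin.ext (by rw [hv1])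
  have h0 : χ (Pi.single 0 1) = Pi.single 0 1 := by
    have e1 := hχ (Pi.single 0 1) (Pi.single 1 1)
    have hb0 := hb 0 (by omega)
    rw [hone] at hb0
    have hz : (⟨0, by omega⟩ : Fin (n + 1)) = 0 := rfl
    rw [hz] at hb0
    rw [hb0, h1] at e1
    have e0 := hχ (Pi.single 0 1) (Pi.single 0 1)
    rw [hb00, map_zero] at e0
    generalize χ (Pi.single 0 1) = a at e1 e0
    have key (i : ℕ) (hi : i < n) :
        a ⟨i, by omega⟩ = if i = 0 then 1 else 0 := by
      have := congrFun e1 ⟨i + 1, by omega⟩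
      simp only [bracketR0, Pi.single_apply, Fin.ext_iff, hv1] at this
      simpa using this.symm
    have k0 : a 0 = 1 := by simpa using key 0 (by omega)
    have k1 : a 1 = 0 := by
      have := key 1 (by omega)
      rw [← hone]; simpa using this
    have kn : a ⟨n, by omega⟩ = 0 := by
      have := congrFun e0 ⟨n, by omega⟩
      simp only [bracketR0, k0, k1] at this
      have hn0 : n ≠ 0 := by omega
      simpa [hn0] using this
    funext ⟨k, hk⟩
    rcases Nat.lt_succ_iff_lt_or_eq.mp hk with h | rfl
    · rw [key k h]; simp [Pi.single_apply, Fin.ext_iff]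
    · rw [kn]; simp only [Pi.single_apply, Fin.ext_iff, Fin.val_zero]
      rw [if_neg (by omega)]
  have hall (i : ℕ) (hi : i < n + 1) : χ (Pi.single ⟨i, hi⟩ 1) = Pi.single ⟨i, hi⟩ 1 := by
    induction i with
    | zero => exact h0
    | succ i ih => rw [← hb i hi, hχ, ih (by omega), h1]
  refine LinearMap.pi_ext' fun i => LinearMap.ext_ring ?_
  simpa using hall i.val i.isLt

/-- Every 2-local automorphism of `R₀` (a not necessarily linear map which agrees with
some automorphism on each pair of points) is an automorphism; in particular it is linear. -/
theorem every_two_local_automorphism_of_R0_is_automorphism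
    (n : ℕ) (hn : 5 ≤ n)
    (φ : (Fin (n + 1) → ℂ) → (Fin (n + 1) → ℂ))
    (h2loc : ∀ a b : Fin (n + 1) → ℂ, ∃ ψ, IsAutR0 n ψ ∧ φ a = ψ a ∧ φ b = ψ b) :
    ∃ ψ, IsAutR0 n ψ ∧ ∀ a, φ a = ψ a := by
  obtain ⟨ψ, hψ, hψ1, -⟩ := h2loc (Pi.single 1 1) (Pi.single 1 1)
  refine ⟨ψ, hψ, fun a => ?_⟩
  obtain ⟨θ, hθ, hθ1, hθa⟩ := h2loc (Pi.single 1 1) a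
  let E := LinearEquiv.ofBijective ψ hψ.1
  have hE (x) : E x = ψ x := rfl
  have := aut_fix_e1 n hn (E.symm.toLinearMap ∘ₗ θ) (fun u v => by
      simp only [LinearMap.comp_apply, LinearEquiv.coe_coe]
      rw [LinearEquiv.symm_apply_eq, hE, hψ.2, ← hE, ← hE, E.apply_symm_apply,
        E.apply_symm_apply, hθ.2]) (by
      simp only [LinearMap.comp_apply, LinearEquiv.coe_coe]
      rw [LinearEquiv.symm_apply_eq, hE, ← hψ1, hθ1])
  have h := LinearMap.congr_fun this a
  simp only [LinearMap.comp_apply, LinearEquiv.coe_coe, LinearMap.id_apply] at h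
  rw [LinearEquiv.symm_apply_eq, hE] at h
  rw [hθa, h]
end

section
/- Let n ≥ 5. Every 2-local automorphism of the (n+2)-dimensional complex solvable Leibniz algebra R_1 is an automorphism of R_1 (in particular, it is linear). -/
/-- Basis vectors indexed by naturals. -/
def basR1 (n k : ℕ) : Fin (n + 2) → ℂ := fun j => if j.val = k then 1 else 0

theorem basR1_at0 (n k : ℕ) : basR1 n k 0 = if k = 0 then 1 else 0 := by
  simp [basR1, eq_comm]

theorem basR1_at1 (n k : ℕ) : basR1 n k 1 = if k = 1 then 1 else 0 := by
  simp [basR1, eq_comm]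

theorem basR1_atl (n k : ℕ) : basR1 n k (Fin.last (n + 1)) = if k = n + 1 then 1 else 0 := by
  simp [basR1, eq_comm]

theorem basR1_at (n k : ℕ) (j : Fin (n + 2)) : basR1 n k j = if j.val = k then 1 else 0 := rfl

theorem basR1_shift (n k : ℕ) (hk : 2 ≤ k) (hkn : k + 1 ≤ n) :
    bracketR1 n (basR1 n k) (basR1 n 1) = basR1 n (k + 1) := by
  funext j
  simp only [bracketR1, basR1_at0, basR1_at1, basR1_atl]
  try simp only [basR1_at]
  split_ifs <;> first | contradiction | (exfalso; omega) | simp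

theorem basR1_x (n k : ℕ) (hk : 2 ≤ k) (hkn : k ≤ n) :
    bracketR1 n (basR1 n k) (basR1 n 0) = ((k : ℂ) - 1) • basR1 n k := by
  funext j
  simp only [bracketR1, basR1_at0, basR1_at1, basR1_atl, Pi.smul_apply]
  try simp only [basR1_at]
  split_ifs <;> first | contradiction | (exfalso; omega) | simp_all

theorem basR1_y (n k : ℕ) (hk : 2 ≤ k) (hkn : k ≤ n) :
    bracketR1 n (basR1 n k) (basR1 n (n + 1)) = basR1 n k := by
  funext j
  simp only [bracketR1, basR1_at0, basR1_at1, basR1_atl]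
  try simp only [basR1_at]
  split_ifs <;> first | contradiction | (exfalso; omega) | simp

theorem basR1_one_y (n : ℕ) (hn : 5 ≤ n) :
    bracketR1 n (basR1 n 1) (basR1 n (n + 1)) = 0 := by
  funext j
  simp only [bracketR1, basR1_at0, basR1_at1, basR1_atl, Pi.zero_apply]
  try simp only [basR1_at]
  split_ifs <;> first | contradiction | (exfalso; omega) | simp

theorem basR1_x_y (n : ℕ) (hn : 5 ≤ n) :
    bracketR1 n (basR1 n 0) (basR1 n (n + 1)) = 0 := by
  funext j
  simp only [bracketR1, basR1_at0, basR1_at1, basR1_atl, Pi.zero_apply]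
  try simp only [basR1_at]
  split_ifs <;> first | contradiction | (exfalso; omega) | simp

theorem basR1_y_left (n : ℕ) (hn : 5 ≤ n) (u : Fin (n + 2) → ℂ) :
    bracketR1 n (basR1 n (n + 1)) u = 0 := by
  funext j
  simp only [bracketR1, basR1_at0, basR1_at1, basR1_atl, Pi.zero_apply]
  try simp only [basR1_at]
  split_ifs <;> first | contradiction | (exfalso; omega) | simp

theorem bracketR1_add_left (n : ℕ) (u v w : Fin (n + 2) → ℂ) :
    bracketR1 n (u + v) w = bracketR1 n u w + bracketR1 n v w := by
  funext j
  simp only [bracketR1, Pi.add_apply]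
  split_ifs <;> ring

theorem bracketR1_smul_left (n : ℕ) (c : ℂ) (u w : Fin (n + 2) → ℂ) :
    bracketR1 n (c • u) w = c • bracketR1 n u w := by
  funext j
  simp only [bracketR1, Pi.smul_apply, smul_eq_mul]
  split_ifs <;> ring

theorem bracketR1_smul_right (n : ℕ) (c : ℂ) (u w : Fin (n + 2) → ℂ) :
    bracketR1 n u (c • w) = c • bracketR1 n u w := by
  funext j
  simp only [bracketR1, Pi.smul_apply, smul_eq_mul]
  split_ifs <;> ring

/-- Right multiplication by `y` kills only vectors without component in the ideal. -/
theorem coord_zero_of_bracket_y (n : ℕ) (hn : 5 ≤ n) (z : Fin (n + 2) → ℂ)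
    (h : bracketR1 n z (basR1 n (n + 1)) = 0) (j : Fin (n + 2)) (h2 : 2 ≤ j.val)
    (hj : j.val ≤ n) : z j = 0 := by
  have := congrFun h j
  simp only [bracketR1, basR1_at0, basR1_at1, basR1_atl, Pi.zero_apply] at this
  try simp only [basR1_at] at this
  split_ifs at this <;> first | contradiction | (exfalso; omega) | simpa using this

theorem left_ann (n : ℕ) (hn : 5 ≤ n) (z : Fin (n + 2) → ℂ)
    (h : ∀ u, bracketR1 n z u = 0) : z = z (Fin.last (n + 1)) • basR1 n (n + 1) := by
  have h0 : z 0 = 0 := by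
    have := congrFun (h (basR1 n 1)) 1
    simpa [bracketR1, basR1] using this
  have h1 : z 1 = 0 := by
    have := congrFun (h (basR1 n 0)) 1
    simpa [bracketR1, basR1] using this
  funext j
  by_cases j0 : j.val = 0
  · have : j = 0 := Fin.ext j0
    subst this
    simp [h0, basR1]
  by_cases j1 : j.val = 1
  · have : j = 1 := Fin.ext (by simpa using j1)
    subst this
    have hb : basR1 n (n + 1) 1 = 0 := if_neg (by omega)
    rw [Pi.smul_apply, hb, h1, smul_zero]
  by_cases jl : j.val = n + 1
  · have : j = Fin.last (n + 1) := Fin.ext (by simpa using jl)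
    subst this
    simp [basR1]
  have := coord_zero_of_bracket_y n hn z (h _) j (by omega) (by omega)
  simp [basR1, jl, this]

theorem basR1_ne_zero (n k : ℕ) (hk : k ≤ n + 1) : basR1 n k ≠ 0 := by
  intro h
  have := congrFun h ⟨k, by omega⟩
  simp [basR1] at this

/-- An automorphism fixing `e₁ + e₂` is the identity. -/
theorem aut_rigid (n : ℕ) (hn : 5 ≤ n) (θ : (Fin (n + 2) → ℂ) →ₗ[ℂ] (Fin (n + 2) → ℂ))
    (hθ : IsAutR1 n θ) (hw : θ (basR1 n 1 + basR1 n 2) = basR1 n 1 + basR1 n 2) :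
    ∀ a, θ a = a := by
  obtain ⟨⟨hinj, hsurj⟩, hbr⟩ := hθ
  have hz : ∀ u, bracketR1 n (θ (basR1 n (n + 1))) u = 0 := by
    intro u
    obtain ⟨v, rfl⟩ := hsurj u
    rw [← hbr, basR1_y_left n hn, map_zero]
  have hy := left_ann n hn _ hz
  set g := θ (basR1 n (n + 1)) (Fin.last (n + 1)) with hg
  have hwy : bracketR1 n (basR1 n 1 + basR1 n 2) (basR1 n (n + 1)) = basR1 n 2 := by
    rw [bracketR1_add_left, basR1_one_y n hn, basR1_y n 2 le_rfl (by omega), zero_add]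
  have he2 : θ (basR1 n 2) = g • basR1 n 2 := by
    have := hbr (basR1 n 1 + basR1 n 2) (basR1 n (n + 1))
    rwa [hw, hy, bracketR1_smul_right, hwy] at this
  have hgg : g = 1 := by
    have h := hbr (basR1 n 2) (basR1 n (n + 1))
    rw [hy, he2, bracketR1_smul_right, bracketR1_smul_left, basR1_y n 2 le_rfl (by omega), he2]
      at h
    have h' := congrFun h ⟨2, by omega⟩
    simp [basR1] at h'
    by_cases hg0 : g = 0
    · exfalso
      rw [hg0, zero_smul] at hy
      exact basR1_ne_zero n (n + 1) le_rfl (hinj (by rw [hy, map_zero]))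
    · exact mul_left_cancel₀ hg0 (by linear_combination -h')
  rw [hgg, one_smul] at hy he2
  have he1 : θ (basR1 n 1) = basR1 n 1 := by
    rw [map_add, he2] at hw
    exact add_right_cancel hw
  have hek : ∀ k, 2 ≤ k → k ≤ n → θ (basR1 n k) = basR1 n k := by
    intro k hk
    induction k, hk using Nat.le_induction with
    | base => intro _; exact he2
    | succ k hk ih =>
      intro hkn
      rw [← basR1_shift n k hk hkn, hbr, ih (by omega), he1]
  have hx : θ (basR1 n 0) = basR1 n 0 := by
    set z := θ (basR1 n 0) with hzdef
    have hI := coord_zero_of_bracket_y n hn z (by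
      have := hbr (basR1 n 0) (basR1 n (n + 1))
      rwa [basR1_x_y n hn, map_zero, hy, eq_comm] at this)
    have A2 := hbr (basR1 n 2) (basR1 n 0)
    rw [basR1_x n 2 le_rfl (by omega), map_smul, he2, ← hzdef] at A2
    have A3 := hbr (basR1 n 3) (basR1 n 0)
    rw [basR1_x n 3 (by omega) (by omega), map_smul, hek 3 (by omega) (by omega), ← hzdef] at A3
    have a22 := congrFun A2 ⟨2, by omega⟩
    have a23 := congrFun A2 ⟨3, by omega⟩
    have a33 := congrFun A3 ⟨3, by omega⟩
    simp [bracketR1, basR1, show 2 ≤ n by omega, show 3 ≤ n by omega] at a22 a23 a33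
    have z0 : z 0 = 1 := by linear_combination a22 - a33
    have zl : z (Fin.last (n + 1)) = 0 := by linear_combination a33 - 2 * a22
    funext j
    by_cases j0 : j.val = 0
    · have : j = 0 := Fin.ext j0
      subst this
      simp [z0, basR1]
    by_cases j1 : j.val = 1
    · have : j = 1 := Fin.ext (by simpa using j1)
      subst this
      simp [a23, basR1]
    by_cases jl : j.val = n + 1
    · have : j = Fin.last (n + 1) := Fin.ext (by simpa using jl)
      subst this
      simp [basR1, zl]
    rw [hI j (by omega) (by omega)]
    simp only [basR1, if_neg j0]
  have hall : ∀ k, k ≤ n + 1 → θ (basR1 n k) = basR1 n k := by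
    intro k hk
    by_cases k0 : k = 0
    · rw [k0, hx]
    by_cases k1 : k = 1
    · rw [k1, he1]
    by_cases kl : k = n + 1
    · rw [kl, hy]
    exact hek k (by omega) (by omega)
  have hid : θ = LinearMap.id := by
    refine (Pi.basisFun ℂ (Fin (n + 2))).ext fun i => ?_
    have : (Pi.basisFun ℂ (Fin (n + 2))) i = basR1 n i.val := by
      funext j
      simp [basR1, Pi.single_apply, Fin.ext_iff]
    rw [this, hall _ (by omega)]
    rfl
  intro a
  rw [hid]
  rfl

theorem aut_unique (n : ℕ) (hn : 5 ≤ n) (ψ₁ ψ₂ : (Fin (n + 2) → ℂ) →ₗ[ℂ] (Fin (n + 2) → ℂ))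
    (h₁ : IsAutR1 n ψ₁) (h₂ : IsAutR1 n ψ₂)
    (hw : ψ₁ (basR1 n 1 + basR1 n 2) = ψ₂ (basR1 n 1 + basR1 n 2)) :
    ∀ a, ψ₁ a = ψ₂ a := by
  let e := LinearEquiv.ofBijective ψ₁ h₁.1
  have he : ∀ a, e a = ψ₁ a := fun a => rfl
  have key := aut_rigid n hn (e.symm.toLinearMap ∘ₗ ψ₂) ⟨?_, ?_⟩ ?_
  · intro a
    have := key a
    simp only [LinearMap.comp_apply, LinearEquiv.coe_coe, LinearEquiv.symm_apply_eq, he] at this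
    exact this.symm
  · exact e.symm.bijective.comp h₂.1
  · intro u v
    simp only [LinearMap.comp_apply, LinearEquiv.coe_coe]
    rw [LinearEquiv.symm_apply_eq, he, h₁.2, h₂.2, ← he, ← he, e.apply_symm_apply,
      e.apply_symm_apply]
  · simp only [LinearMap.comp_apply, LinearEquiv.coe_coe]
    rw [LinearEquiv.symm_apply_eq, he, hw]

/-- Every 2-local automorphism of `R1` (a not necessarily linear map which agrees with
some automorphism on each pair of points) is an automorphism; in particular it is linear. -/
theorem every_two_local_automorphism_of_R1_is_automorphism
    (n : ℕ) (hn : 5 ≤ n)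
    (φ : (Fin (n + 2) → ℂ) → (Fin (n + 2) → ℂ))
    (h2loc : ∀ a b : Fin (n + 2) → ℂ, ∃ ψ, IsAutR1 n ψ ∧ φ a = ψ a ∧ φ b = ψ b) :
    ∃ ψ, IsAutR1 n ψ ∧ ∀ a, φ a = ψ a := by
  obtain ⟨ψ, hψ, hw, -⟩ := h2loc (basR1 n 1 + basR1 n 2) 0
  refine ⟨ψ, hψ, fun a => ?_⟩
  obtain ⟨χ, hχ, hw', ha⟩ := h2loc (basR1 n 1 + basR1 n 2) a
  rw [ha]
  exact aut_unique n hn χ ψ hχ hψ (by rw [← hw', hw]) a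
end

section
/- Let n ≥ 5. Every 2-local automorphism of the (n+2)-dimensional complex solvable Leibniz algebra R_3 is an automorphism of R_3 (in particular, it is linear). -/
/-- The basis vector with index `i`. -/
def basR3 (n : ℕ) (i : ℕ) : Fin (n + 2) → ℂ := fun k => if k.val = i then 1 else 0

theorem val_two_R3 (n : ℕ) (hn : 5 ≤ n) : ((2 : Fin (n + 2)) : ℕ) = 2 := by
  change 2 % (n + 2) = 2
  exact Nat.mod_eq_of_lt (by omega)

set_option maxHeartbeats 2000000 in
/-- An automorphism fixing `e₁ + e₂` is the identity on basis vectors. -/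
theorem fix_basis_R3 (n : ℕ) (hn : 5 ≤ n)
    (χ : (Fin (n + 2) → ℂ) →ₗ[ℂ] (Fin (n + 2) → ℂ))
    (hχ : ∀ u v, χ (bracketR3 n u v) = bracketR3 n (χ u) (χ v))
    (hq : χ (basR3 n 1 + basR3 n 2) = basR3 n 1 + basR3 n 2) :
    ∀ i, i < n + 2 → χ (basR3 n i) = basR3 n i := by
  have v2 := val_two_R3 n hn
  have v1 : ((1 : Fin (n + 2)) : ℕ) = 1 := by simp
  have v0 : ((0 : Fin (n + 2)) : ℕ) = 0 := by simp
  have vl : ((Fin.last (n + 1) : Fin (n + 2)) : ℕ) = n + 1 := by simp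
  set q := basR3 n 1 + basR3 n 2 with hqd
  have bqq : bracketR3 n q q = basR3 n 3 := by
    funext k
    simp only [bracketR3, basR3, hqd, Pi.add_apply, v0, v1, v2, vl]
    grind
  have biq : ∀ i, 3 ≤ i → i < n → bracketR3 n (basR3 n i) q = basR3 n (i + 1) := by
    intro i h3 hi
    funext k
    simp only [bracketR3, basR3, hqd, Pi.add_apply, v0, v1, v2, vl]
    grind
  have f : ∀ i, 3 ≤ i → i ≤ n → χ (basR3 n i) = basR3 n i := by
    intro i h3
    induction i, h3 using Nat.le_induction with
    | base => intro _; rw [← bqq, hχ, hq]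
    | succ i h3 ih =>
      intro hi
      rw [← biq i h3 (by omega), hχ, hq, ih (by omega)]
  have f3 := f 3 le_rfl (by omega)
  -- general brackets
  have b3 : ∀ v, bracketR3 n (basR3 n 3) v = v 1 • basR3 n 4 + (2 * v 0) • basR3 n 3 := by
    intro v
    funext k
    simp only [bracketR3, basR3, Pi.add_apply, Pi.smul_apply, smul_eq_mul, v0, v1, v2, vl]
    clear biq bqq f3 f hq hχ
    by_cases hk : k.val = 3
    · have h3n : 3 ≤ n := by omega
      norm_num [hk, h3n]
    · grind
  have bq : ∀ v, bracketR3 n q v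
      = v 0 • basR3 n 1 + v 1 • basR3 n 3 + v (Fin.last (n + 1)) • basR3 n 2 := by
    intro v
    funext k
    simp only [bracketR3, basR3, hqd, Pi.add_apply, Pi.smul_apply, smul_eq_mul, v0, v1, v2, vl]
    grind
  have b2 : ∀ v, bracketR3 n (basR3 n 2) v = v (Fin.last (n + 1)) • basR3 n 2 := by
    intro v
    funext k
    simp only [bracketR3, basR3, Pi.smul_apply, smul_eq_mul, v0, v1, v2, vl]
    grind
  have bz : ∀ (u v : Fin (n + 2) → ℂ), bracketR3 n u v 1 = u 1 * v 0 - u 0 * v 1 := by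
    intro u v
    simp only [bracketR3, v1, if_true]
  have bt : ∀ (u v : Fin (n + 2) → ℂ),
      bracketR3 n u v 2 = u 2 * v (Fin.last (n + 1)) := by
    intro u v
    simp only [bracketR3, v2]
    grind
  have bk : ∀ (u v : Fin (n + 2) → ℂ) (k : Fin (n + 2)), 3 ≤ k.val → k.val ≤ n → v 1 = 0 →
      v 0 = 1 → bracketR3 n u v k = ((k.val : ℂ) - 1) * u k := by
    intro u v k h1 h2 h3 h4
    simp only [bracketR3, h3, h4]
    grind
  have kne : ∀ k : Fin (n + 2), 3 ≤ k.val → ((k.val : ℂ) - 1) ≠ 0 := by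
    intro k hk h
    have : (k.val : ℂ) = ((1 : ℕ) : ℂ) := by push_cast; linear_combination h
    have := Nat.cast_injective this
    omega
  have l1 : ∀ i, basR3 n i 1 = if i = 1 then 1 else 0 := by
    intro i; simp only [basR3, v1]; grind
  have l0 : ∀ i, basR3 n i 0 = if i = 0 then 1 else 0 := by
    intro i; simp only [basR3, v0]; grind
  have l2 : ∀ i, basR3 n i 2 = if i = 2 then 1 else 0 := by
    intro i; simp only [basR3, v2]; grind
  have ll : ∀ i, basR3 n i (Fin.last (n + 1)) = if i = n + 1 then 1 else 0 := by
    intro i; simp only [basR3, vl]; grind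
  have e3 : ∀ a b : ℂ, ∀ c d : ℂ, a • basR3 n 4 + b • basR3 n 3 = c • basR3 n 4 + d • basR3 n 3 →
      a = c ∧ b = d := by
    intro a b c d h
    have h4 := congrFun h ⟨4, by omega⟩
    have h3 := congrFun h ⟨3, by omega⟩
    simp [basR3] at h4 h3
    exact ⟨h4, h3⟩
  set X := χ (basR3 n 0) with hX
  set Y := χ (basR3 n (n + 1)) with hY
  have f4 := f 4 (by omega) (by omega)
  -- [e3, x] and [e3, y]
  have hX3 := hχ (basR3 n 3) (basR3 n 0)
  rw [b3, f3, b3, map_add, map_smul, map_smul, f3, f4, l1, l0] at hX3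
  have hX3 := e3 _ _ _ _ hX3
  have X1 : X 1 = 0 := by simpa using hX3.1.symm
  have X0 : X 0 = 1 := by
    have := hX3.2
    simp only [if_true] at this
    linear_combination (-1 / 2) * this
  have hY3 := hχ (basR3 n 3) (basR3 n (n + 1))
  rw [b3, f3, b3, map_add, map_smul, map_smul, f3, f4, l1, l0] at hY3
  have hY3 := e3 _ _ _ _ hY3
  have Y1 : Y 1 = 0 := by
    have := hY3.1
    rw [if_neg (by omega)] at this
    exact this.symm
  have Y0 : Y 0 = 0 := by
    have := hY3.2
    rw [if_neg (by omega)] at this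
    linear_combination (-1 / 2) * this
  -- [q, x] = e1
  have hq1 : χ (basR3 n 1) = basR3 n 1 + X (Fin.last (n + 1)) • basR3 n 2 := by
    have h := hχ q (basR3 n 0)
    rw [hq, bq, bq, ← hX, X0, X1, l0, l1, ll, if_pos rfl, if_neg (by omega),
      if_neg (by omega)] at h
    simpa using h
  have bxq : bracketR3 n (basR3 n 0) q = -basR3 n 1 := by
    funext k
    simp only [bracketR3, basR3, hqd, Pi.add_apply, Pi.neg_apply, v0, v1, v2, vl]
    grind
  have Xl : X (Fin.last (n + 1)) = 0 := by
    have h := congrFun (hχ (basR3 n 0) q) 2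
    rw [bxq, hq, bt, map_neg, hq1] at h
    simp only [hqd, Pi.neg_apply, Pi.add_apply, Pi.smul_apply, l2, ll, smul_eq_mul] at h
    rw [if_neg (by omega : ¬ 1 = n + 1), if_neg (by omega : ¬ 2 = n + 1)] at h
    simpa using h
  have g1 : χ (basR3 n 1) = basR3 n 1 := by rw [hq1, Xl]; simp
  have g2 : χ (basR3 n 2) = basR3 n 2 := by
    rw [hqd, map_add, g1] at hq
    exact add_left_cancel hq
  have Yl : Y (Fin.last (n + 1)) = 1 := by
    have h := congrFun (hχ (basR3 n 2) (basR3 n (n + 1))) 2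
    rw [g2, b2, b2, map_smul, g2, ← hY, ll] at h
    simpa [l2] using h.symm
  have bxx : bracketR3 n (basR3 n 0) (basR3 n 0) = 0 := by
    funext k
    simp only [bracketR3, basR3, Pi.zero_apply, v0, v1, v2, vl]
    grind
  have bxy : bracketR3 n (basR3 n 0) (basR3 n (n + 1)) = 0 := by
    funext k
    simp only [bracketR3, basR3, Pi.zero_apply, v0, v1, v2, vl]
    grind
  have byx : bracketR3 n (basR3 n (n + 1)) (basR3 n 0) = 0 := by
    funext k
    simp only [bracketR3, basR3, Pi.zero_apply, v0, v1, v2, vl]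
    grind
  have byy : bracketR3 n (basR3 n (n + 1)) (basR3 n (n + 1)) = 0 := by
    funext k
    simp only [bracketR3, basR3, Pi.zero_apply, v0, v1, v2, vl]
    grind
  have cxx : bracketR3 n X X = 0 := by rw [hX, ← hχ, bxx, map_zero]
  have cxy : bracketR3 n X Y = 0 := by rw [hX, hY, ← hχ, bxy, map_zero]
  have cyx : bracketR3 n Y X = 0 := by rw [hX, hY, ← hχ, byx, map_zero]
  have cyy : bracketR3 n Y Y = 0 := by rw [hY, ← hχ, byy, map_zero]
  have X2 : X 2 = 0 := by
    have h := congrFun cxy 2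
    rw [bt, Yl] at h
    simpa using h
  have Y2 : Y 2 = 0 := by
    have h := congrFun cyy 2
    rw [bt, Yl] at h
    simpa using h
  have Xk : ∀ k : Fin (n + 2), 3 ≤ k.val → k.val ≤ n → X k = 0 := by
    intro k h1 h2
    have h := congrFun cxx k
    rw [bk _ _ k h1 h2 X1 X0] at h
    exact (mul_eq_zero.mp h).resolve_left (kne k h1)
  have Yk : ∀ k : Fin (n + 2), 3 ≤ k.val → k.val ≤ n → Y k = 0 := by
    intro k h1 h2
    have h := congrFun cyx k
    rw [bk _ _ k h1 h2 X1 X0] at h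
    exact (mul_eq_zero.mp h).resolve_left (kne k h1)
  have cases5 : ∀ k : Fin (n + 2), k = 0 ∨ k = 1 ∨ k = 2 ∨ k = Fin.last (n + 1) ∨
      (3 ≤ k.val ∧ k.val ≤ n) := by
    intro k
    simp only [Fin.ext_iff, v0, v1, v2, vl]
    omega
  have g0 : X = basR3 n 0 := by
    funext k
    rcases cases5 k with rfl | rfl | rfl | rfl | ⟨h1, h2⟩
    · rw [X0, l0]; simp
    · rw [X1, l1]; simp
    · rw [X2, l2]; simp
    · rw [Xl, ll]; simp
    · rw [Xk k h1 h2]; simp only [basR3]; rw [if_neg (by omega)]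
  have gl : Y = basR3 n (n + 1) := by
    funext k
    rcases cases5 k with rfl | rfl | rfl | rfl | ⟨h1, h2⟩
    · rw [Y0, l0]; simp
    · rw [Y1, l1, if_neg (by omega)]
    · rw [Y2, l2, if_neg (by omega)]
    · rw [Yl, ll]; simp
    · rw [Yk k h1 h2]; simp only [basR3]; rw [if_neg (by omega)]
  intro i hi
  rcases (by omega : i = 0 ∨ i = 1 ∨ i = 2 ∨ i = n + 1 ∨ (3 ≤ i ∧ i ≤ n)) with
    rfl | rfl | rfl | rfl | ⟨h1, h2⟩
  · exact g0
  · exact g1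
  · exact g2
  · exact gl
  · exact f i h1 h2

/-- An automorphism is determined by its value on `e₁ + e₂`. -/
theorem aut_eq_R3 (n : ℕ) (hn : 5 ≤ n)
    (ψ₁ ψ₂ : (Fin (n + 2) → ℂ) →ₗ[ℂ] (Fin (n + 2) → ℂ))
    (h₁ : IsAutR3 n ψ₁) (h₂ : IsAutR3 n ψ₂)
    (hq : ψ₁ (basR3 n 1 + basR3 n 2) = ψ₂ (basR3 n 1 + basR3 n 2)) : ψ₁ = ψ₂ := by
  let e := LinearEquiv.ofBijective ψ₂ h₂.1
  have he : ∀ u, e u = ψ₂ u := fun u => rfl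
  have hs : ∀ u, ψ₂ (e.symm u) = u := fun u => by rw [← he]; simp
  have key := fix_basis_R3 n hn (e.symm.toLinearMap ∘ₗ ψ₁)
    (by
      intro u v
      apply h₂.1.1
      simp only [LinearMap.comp_apply, LinearEquiv.coe_coe]
      rw [hs, h₂.2, hs, hs, h₁.2])
    (by
      apply h₂.1.1
      simp only [LinearMap.comp_apply, LinearEquiv.coe_coe]
      rw [hs, hq])
  apply (Pi.basisFun ℂ (Fin (n + 2))).ext
  intro i
  have hb : (Pi.basisFun ℂ (Fin (n + 2))) i = basR3 n i.val := by
    funext k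
    simp [basR3, Pi.single_apply, Fin.ext_iff]
  rw [hb]
  have h := congrArg ψ₂ (key i.val i.isLt)
  simp only [LinearMap.comp_apply, LinearEquiv.coe_coe] at h
  rwa [hs] at h

/-- Every 2-local automorphism of `R3` (a not necessarily linear map which agrees with
some automorphism on each pair of points) is an automorphism; in particular it is linear. -/
theorem every_two_local_automorphism_of_R3_is_automorphism
    (n : ℕ) (hn : 5 ≤ n)
    (φ : (Fin (n + 2) → ℂ) → (Fin (n + 2) → ℂ))
    (h2loc : ∀ a b : Fin (n + 2) → ℂ, ∃ ψ, IsAutR3 n ψ ∧ φ a = ψ a ∧ φ b = ψ b) :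
    ∃ ψ, IsAutR3 n ψ ∧ ∀ a, φ a = ψ a := by
  obtain ⟨ψ, hψ, hq, -⟩ := h2loc (basR3 n 1 + basR3 n 2) 0
  refine ⟨ψ, hψ, fun a => ?_⟩
  obtain ⟨ψ', hψ', hq', ha⟩ := h2loc (basR3 n 1 + basR3 n 2) a
  rw [ha, aut_eq_R3 n hn ψ' ψ hψ' hψ (hq'.symm.trans hq)]
end

section
/- Let n ≥ 2 and let R be a finite-dimensional complex solvable Leibniz algebra that is not nilpotent and whose nilradical N is a null-filiform Leibniz algebra of dimension n. Then dim R = n + 1 and R is isomorphic to R_0; equivalently, R admits a basis e_0, e_1, …, e_n in which the only nonzero products of basis elements are [e_i,e_1] = e_{i+1} for 0 ≤ i ≤ n−1 and [e_i,e_0] = −i·e_i for 1 ≤ i ≤ n. -/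
section LeibnizGeneralities

variable {L : Type*} [AddCommGroup L] [Module ℂ L]

/-- The Leibniz identity `[[a,b],c] = [[a,c],b] + [a,[b,c]]` for a bilinear bracket. -/
def IsLeibnizBracket (b : L →ₗ[ℂ] L →ₗ[ℂ] L) : Prop :=
  ∀ u v w : L, b (b u v) w = b (b u w) v + b u (b v w)

/-- The subspace spanned by all brackets of elements of `A` with elements of `B`. -/
def bracketSpan (b : L →ₗ[ℂ] L →ₗ[ℂ] L) (A B : Submodule ℂ L) : Submodule ℂ L :=
  Submodule.span ℂ {z | ∃ u ∈ A, ∃ v ∈ B, z = b u v}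

/-- The lower central series of the subalgebra `N`:
`N^1 = N`, `N^{k+1} = [N^k, N]` (here `lowerCentral b N k` is `N^{k+1}`). -/
def lowerCentral (b : L →ₗ[ℂ] L →ₗ[ℂ] L) (N : Submodule ℂ L) : ℕ → Submodule ℂ L
  | 0 => N
  | k + 1 => bracketSpan b (lowerCentral b N k) N

/-- The derived series of the algebra:
`L^{(1)} = L`, `L^{(s+1)} = [L^{(s)}, L^{(s)}]` (here `leibnizDerivedSeries b s` is `L^{(s+1)}`). -/
def leibnizDerivedSeries (b : L →ₗ[ℂ] L →ₗ[ℂ] L) : ℕ → Submodule ℂ L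
  | 0 => ⊤
  | s + 1 => bracketSpan b (leibnizDerivedSeries b s) (leibnizDerivedSeries b s)

/-- The subalgebra `N` is nilpotent: some term of its lower central series vanishes. -/
def IsNilpotentOn (b : L →ₗ[ℂ] L →ₗ[ℂ] L) (N : Submodule ℂ L) : Prop :=
  ∃ k, lowerCentral b N k = ⊥

/-- The algebra is solvable: some term of its derived series vanishes. -/
def IsSolvableBracket (b : L →ₗ[ℂ] L →ₗ[ℂ] L) : Prop :=
  ∃ s, leibnizDerivedSeries b s = ⊥

/-- A (two-sided) ideal of the Leibniz algebra. -/
def IsLeibnizIdeal (b : L →ₗ[ℂ] L →ₗ[ℂ] L) (I : Submodule ℂ L) : Prop :=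
  bracketSpan b I ⊤ ≤ I ∧ bracketSpan b ⊤ I ≤ I

/-- `N` is the nilradical: a nilpotent ideal containing every nilpotent ideal. -/
def IsNilradical (b : L →ₗ[ℂ] L →ₗ[ℂ] L) (N : Submodule ℂ L) : Prop :=
  IsLeibnizIdeal b N ∧ IsNilpotentOn b N ∧
    ∀ J : Submodule ℂ L, IsLeibnizIdeal b J → IsNilpotentOn b J → J ≤ N

/-- `N` is null-filiform of dimension `n`: `dim N^i = n + 1 - i` for `1 ≤ i ≤ n + 1`. -/
def IsNullFiliform (b : L →ₗ[ℂ] L →ₗ[ℂ] L) (N : Submodule ℂ L) (n : ℕ) : Prop :=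
  Module.finrank ℂ N = n ∧
    ∀ i : ℕ, 1 ≤ i → i ≤ n + 1 →
      Module.finrank ℂ (lowerCentral b N (i - 1)) = n + 1 - i

end LeibnizGeneralities

section Helpers

variable {L : Type*} [AddCommGroup L] [Module ℂ L]

lemma mem_bracketSpan {b : L →ₗ[ℂ] L →ₗ[ℂ] L} {A B : Submodule ℂ L} {u v : L}
    (hu : u ∈ A) (hv : v ∈ B) : b u v ∈ bracketSpan b A B :=
  Submodule.subset_span ⟨u, hu, v, hv, rfl⟩

lemma bracketSpan_le {b : L →ₗ[ℂ] L →ₗ[ℂ] L} {A B C : Submodule ℂ L}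
    (h : ∀ u ∈ A, ∀ v ∈ B, b u v ∈ C) : bracketSpan b A B ≤ C := by
  refine Submodule.span_le.2 ?_
  rintro z ⟨u, hu, v, hv, rfl⟩
  exact h u hu v hv

lemma leib_right {b : L →ₗ[ℂ] L →ₗ[ℂ] L} (h : IsLeibnizBracket b) (u v w : L) :
    b u (b v w) = b (b u v) w - b (b u w) v := by
  rw [h u v w]; abel

lemma ideal_left {b : L →ₗ[ℂ] L →ₗ[ℂ] L} {N : Submodule ℂ L} (h : IsLeibnizIdeal b N)
    {u : L} (hu : u ∈ N) (v : L) : b u v ∈ N := h.1 (mem_bracketSpan hu trivial)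

lemma ideal_right {b : L →ₗ[ℂ] L →ₗ[ℂ] L} {N : Submodule ℂ L} (h : IsLeibnizIdeal b N)
    {u : L} (hu : u ∈ N) (v : L) : b v u ∈ N := h.2 (mem_bracketSpan trivial hu)

lemma lc_succ_le {b : L →ₗ[ℂ] L →ₗ[ℂ] L} {N : Submodule ℂ L} (h : IsLeibnizIdeal b N) (k : ℕ) :
    lowerCentral b N (k + 1) ≤ lowerCentral b N k := by
  induction k with
  | zero => exact bracketSpan_le fun u hu v _ => ideal_left h hu v
  | succ k ih => exact bracketSpan_le fun u hu v hv => mem_bracketSpan (ih hu) hv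

lemma lc_le {b : L →ₗ[ℂ] L →ₗ[ℂ] L} {N : Submodule ℂ L} (h : IsLeibnizIdeal b N) (k : ℕ) :
    lowerCentral b N k ≤ N := by
  induction k with
  | zero => exact le_rfl
  | succ k ih => exact (lc_succ_le h k).trans ih

/-- `[N^k, N^2] ⊆ N^{k+2}`. -/
lemma lc_sq {b : L →ₗ[ℂ] L →ₗ[ℂ] L} (hL : IsLeibnizBracket b) {N : Submodule ℂ L} (k : ℕ)
    {u v : L} (hu : u ∈ lowerCentral b N k) (hv : v ∈ lowerCentral b N 1) :
    b u v ∈ lowerCentral b N (k + 2) := by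
  have : lowerCentral b N 1 ≤ (lowerCentral b N (k + 2)).comap (b u) := by
    refine bracketSpan_le fun p hp q hq => ?_
    rw [Submodule.mem_comap, leib_right hL]
    exact sub_mem (mem_bracketSpan (mem_bracketSpan hu hp) hq)
      (mem_bracketSpan (mem_bracketSpan hu hq) hp)
  exact this hv

/-- graded action of right multiplications. -/
lemma lc_graded {b : L →ₗ[ℂ] L →ₗ[ℂ] L} (hL : IsLeibnizBracket b) {N : Submodule ℂ L}
    (h : IsLeibnizIdeal b N) (x : L) (a : ℂ)
    (h0 : ∀ u ∈ N, b u x - a • u ∈ lowerCentral b N 1) (k : ℕ) :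
    ∀ u ∈ lowerCentral b N k, b u x - ((k + 1 : ℂ) * a) • u ∈ lowerCentral b N (k + 1) := by
  induction k with
  | zero =>
    intro u hu
    simpa using h0 u hu
  | succ k ih =>
    intro u hu
    have : lowerCentral b N (k + 1) ≤ (lowerCentral b N (k + 2)).comap
        (b.flip x - (((k + 1 : ℕ) + 1 : ℂ) * a) • LinearMap.id) := by
      refine bracketSpan_le fun p hp q hq => ?_
      have h1 : b (b p x - ((k + 1 : ℂ) * a) • p) q ∈ lowerCentral b N (k + 2) :=
        mem_bracketSpan (ih p hp) hq
      have h2 := lc_sq hL k hp (h0 q hq)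
      have h3 := add_mem h1 h2
      rw [Submodule.mem_comap]
      convert h3 using 1
      simp only [LinearMap.sub_apply, LinearMap.flip_apply, LinearMap.smul_apply,
        LinearMap.id_apply, map_sub, map_smul]
      rw [hL p q x]
      push_cast
      module
    simpa using this hu

lemma nilp_of {b : L →ₗ[ℂ] L →ₗ[ℂ] L} {N I : Submodule ℂ L}
    (hN : IsNilpotentOn b N) (h2 : bracketSpan b I I ≤ N)
    (h3 : ∀ k, ∀ u ∈ lowerCentral b N k, ∀ x ∈ I, b u x ∈ lowerCentral b N (k + 1)) :
    IsNilpotentOn b I := by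
  obtain ⟨m, hm⟩ := hN
  refine ⟨m + 1, le_bot_iff.1 ?_⟩
  rw [← hm]
  clear hm
  induction m with
  | zero => exact h2
  | succ m ih => exact bracketSpan_le fun u hu v hv => h3 m u (ih hu) v hv

lemma derived_ideal {b : L →ₗ[ℂ] L →ₗ[ℂ] L} (hL : IsLeibnizBracket b) (s : ℕ) :
    IsLeibnizIdeal b (leibnizDerivedSeries b s) := by
  induction s with
  | zero => exact ⟨le_top, le_top⟩
  | succ s ih =>
    constructor
    · refine bracketSpan_le fun u hu x _ => ?_
      have : leibnizDerivedSeries b (s + 1) ≤ (leibnizDerivedSeries b (s + 1)).comap (b.flip x) := by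
        refine bracketSpan_le fun p hp q hq => ?_
        rw [Submodule.mem_comap, LinearMap.flip_apply, hL]
        exact add_mem (mem_bracketSpan (ideal_left ih hp x) hq)
          (mem_bracketSpan hp (ideal_left ih hq x))
      exact this hu
    · refine bracketSpan_le fun x _ u hu => ?_
      have : leibnizDerivedSeries b (s + 1) ≤ (leibnizDerivedSeries b (s + 1)).comap (b x) := by
        refine bracketSpan_le fun p hp q hq => ?_
        rw [Submodule.mem_comap, leib_right hL]
        exact sub_mem (mem_bracketSpan (ideal_right ih hp x) hq)
          (mem_bracketSpan (ideal_right ih hq x) hp)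
      exact this hu

/-- If `J` is a subspace containing `[L,L]`, acting nilpotently on the nilradical, then `J ≤ N`. -/
lemma ker_le_nilradical {b : L →ₗ[ℂ] L →ₗ[ℂ] L} (hL : IsLeibnizBracket b)
    (hsolv : IsSolvableBracket b) {N J : Submodule ℂ L} (hN : IsNilradical b N)
    (hJ : ∀ x y, b x y ∈ J)
    (h3 : ∀ k, ∀ u ∈ lowerCentral b N k, ∀ x ∈ J, b u x ∈ lowerCentral b N (k + 1)) :
    (∀ x y, b x y ∈ N) ∧ J ≤ N := by
  have key : ∀ s, leibnizDerivedSeries b (s + 1) ≤ N → leibnizDerivedSeries b 1 ≤ N := by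
    intro s
    induction s with
    | zero => exact id
    | succ s ih =>
      intro h
      refine ih (hN.2.2 _ (derived_ideal hL _) (nilp_of hN.2.1 h ?_))
      intro k u hu x hx
      refine h3 k u hu x ?_
      have : leibnizDerivedSeries b (s + 1) ≤ J := bracketSpan_le fun p _ q _ => hJ p q
      exact this hx
  obtain ⟨s, hs⟩ := hsolv
  have h1 : leibnizDerivedSeries b 1 ≤ N := by
    refine key s ?_
    refine bracketSpan_le fun p hp q _ => ?_
    rw [hs, Submodule.mem_bot] at hp
    simp [hp]
  have h2 : ∀ x y, b x y ∈ N := fun x y => h1 (mem_bracketSpan trivial trivial)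
  refine ⟨h2, hN.2.2 J ⟨bracketSpan_le fun p _ q _ => hJ p q, bracketSpan_le fun p _ q _ => hJ p q⟩ 
    (nilp_of hN.2.1 (bracketSpan_le fun p _ q _ => h2 p q) h3)⟩

/-- iterated right multiplication by `v`. -/
def fil (b : L →ₗ[ℂ] L →ₗ[ℂ] L) (v : L) : ℕ → L
  | 0 => v
  | k + 1 => b (fil b v k) v

lemma fil_mem {b : L →ₗ[ℂ] L →ₗ[ℂ] L} {N : Submodule ℂ L} {v : L} (hv : v ∈ N) (k : ℕ) :
    fil b v k ∈ lowerCentral b N k := by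
  induction k with
  | zero => exact hv
  | succ k ih => exact mem_bracketSpan ih hv

lemma fil_ann {b : L →ₗ[ℂ] L →ₗ[ℂ] L} (hL : IsLeibnizBracket b) (v u : L) (k : ℕ) :
    b u (fil b v (k + 1)) = 0 := by
  induction k generalizing u with
  | zero => simp [fil, leib_right hL]
  | succ k ih =>
    have : fil b v (k + 1 + 1) = b (fil b v (k + 1)) v := rfl
    rw [this, leib_right hL, ih, ih]; simp

lemma lc_decomp {b : L →ₗ[ℂ] L →ₗ[ℂ] L} (hL : IsLeibnizBracket b) {N : Submodule ℂ L} {v : L}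
    (hv : v ∈ N)
    (h0 : ∀ u ∈ N, ∃ c : ℂ, u - c • v ∈ lowerCentral b N 1) (k : ℕ) :
    ∀ u ∈ lowerCentral b N k, ∃ c : ℂ, u - c • fil b v k ∈ lowerCentral b N (k + 1) := by
  induction k with
  | zero => exact h0
  | succ k ih =>
    intro u hu
    have : lowerCentral b N (k + 1) ≤ Submodule.span ℂ {fil b v (k + 1)} ⊔ lowerCentral b N (k + 2) := by
      refine bracketSpan_le fun p hp q hq => ?_
      obtain ⟨c, hc⟩ := ih p hp
      obtain ⟨d, hd⟩ := h0 q hq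
      have h1 := mem_bracketSpan (b := b) hc hq
      have h2 := lc_sq hL k (fil_mem (b := b) hv k) hd
      have h3 : b p q = (c * d) • fil b v (k + 1) +
          (b (p - c • fil b v k) q + c • b (fil b v k) (q - d • v)) := by
        simp only [fil, map_sub, map_smul, LinearMap.sub_apply, LinearMap.smul_apply]
        module
      rw [h3]
      exact Submodule.add_mem_sup (Submodule.smul_mem _ _ (Submodule.mem_span_singleton_self _))
        (add_mem h1 (Submodule.smul_mem _ _ h2))
    obtain ⟨y, hy, z, hz, rfl⟩ := Submodule.mem_sup.1 (this hu)
    obtain ⟨c, rfl⟩ := Submodule.mem_span_singleton.1 hy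
    exact ⟨c, by simpa using hz⟩

/-- Elements of `N` expand in the `fil` sequence. -/
lemma fil_expand {b : L →ₗ[ℂ] L →ₗ[ℂ] L} (hL : IsLeibnizBracket b) {N : Submodule ℂ L} {v : L}
    (hv : v ∈ N)
    (h0 : ∀ u ∈ N, ∃ c : ℂ, u - c • v ∈ lowerCentral b N 1) (k : ℕ) :
    ∀ u ∈ N, ∃ c : ℕ → ℂ, u - ∑ i ∈ Finset.range k, c i • fil b v i ∈ lowerCentral b N k := by
  induction k with
  | zero => intro u hu; exact ⟨0, by simpa [lowerCentral] using hu⟩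
  | succ k ih =>
    intro u hu
    obtain ⟨c, hc⟩ := ih u hu
    obtain ⟨d, hd⟩ := lc_decomp hL hv h0 k _ hc
    refine ⟨fun i => if i = k then d else c i, ?_⟩
    convert hd using 1
    rw [Finset.sum_range_succ, ← sub_sub]
    simp only [if_true]
    congr 2
    refine Finset.sum_congr rfl fun i hi => ?_
    rw [if_neg (Finset.mem_range.1 hi).ne]

/-- The model bracket as a bilinear map. -/
noncomputable def bilR0 (n : ℕ) :
    (Fin (n + 1) → ℂ) →ₗ[ℂ] (Fin (n + 1) → ℂ) →ₗ[ℂ] (Fin (n + 1) → ℂ) :=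
  LinearMap.mk₂ ℂ (bracketR0 n)
    (by intros; ext k; simp only [bracketR0, Pi.add_apply]; split_ifs <;> ring)
    (by intros; ext k; simp only [bracketR0, Pi.smul_apply, smul_eq_mul]; split_ifs <;> ring)
    (by intros; ext k; simp only [bracketR0, Pi.add_apply]; split_ifs <;> ring)
    (by intros; ext k; simp only [bracketR0, Pi.smul_apply, smul_eq_mul]; split_ifs <;> ring)

lemma final_iso {n : ℕ} (hn : 2 ≤ n) {b : L →ₗ[ℂ] L →ₗ[ℂ] L} (E : ℕ → L)
    (hE : LinearIndependent ℂ fun i : Fin (n + 1) => E i)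
    (hs : ⊤ ≤ Submodule.span ℂ (Set.range fun i : Fin (n + 1) => E i))
    (hz : E (n + 1) = 0)
    (h0 : ∀ i, b (E i) (E 0) = (-(i : ℂ)) • E i)
    (h1 : ∀ i, b (E i) (E 1) = E (i + 1))
    (h2 : ∀ i j, b (E i) (E (j + 2)) = 0) :
    ∃ φ : L ≃ₗ[ℂ] (Fin (n + 1) → ℂ), ∀ u v : L, φ (b u v) = bracketR0 n (φ u) (φ v) := by
  let B := Module.Basis.mk hE hs
  have hB : ∀ i : Fin (n + 1), B i = E i := fun i => by simp [B]
  have hφ : ∀ i : Fin (n + 1), B.equivFun (E i) = Pi.single i 1 := by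
    intro i; rw [← hB]; ext j
    simp [Pi.single_apply, eq_comm]
  refine ⟨B.equivFun, ?_⟩
  have one_val : ((1 : Fin (n + 1)) : ℕ) = 1 := by
    rw [Fin.val_one']; exact Nat.mod_eq_of_lt (by omega)
  have key : b.compr₂ (B.equivFun : L →ₗ[ℂ] (Fin (n + 1) → ℂ)) =
      (bilR0 n).compl₁₂ (B.equivFun : L →ₗ[ℂ] (Fin (n + 1) → ℂ))
        (B.equivFun : L →ₗ[ℂ] (Fin (n + 1) → ℂ)) := by
    refine B.ext fun i => B.ext fun j => ?_
    simp only [LinearMap.compr₂_apply, LinearMap.compl₁₂_apply, LinearEquiv.coe_coe, bilR0,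
      LinearMap.mk₂_apply, hB, hφ]
    obtain ⟨i, hi⟩ := i
    obtain ⟨j, hj⟩ := j
    rcases j with _ | _ | j
    · rw [h0, map_smul, hφ ⟨i, hi⟩]
      ext ⟨k, hk⟩
      simp only [bracketR0, Pi.smul_apply, Pi.single_apply, Fin.ext_iff, one_val, Fin.val_zero,
        smul_eq_mul]
      by_cases hki : k = i <;> simp [hki]
    · rw [h1]
      ext ⟨k, hk⟩
      by_cases hin : i = n
      · subst hin
        rw [hz]
        simp only [bracketR0, Pi.single_apply, Fin.ext_iff, one_val, Fin.val_zero, map_zero,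
          Pi.zero_apply]
        have : k - 1 ≠ i := by omega
        simp [this]
      · rw [hφ ⟨i + 1, by omega⟩]
        simp only [bracketR0, Pi.single_apply, Fin.ext_iff, one_val, Fin.val_zero]
        by_cases hk1 : 1 ≤ k
        · have : (k - 1 = i) ↔ (k = i + 1) := by omega
          simp [hk1, this]
        · have : k ≠ i + 1 := by omega
          simp [hk1, this]
    · rw [h2]
      ext ⟨k, hk⟩
      simp only [bracketR0, Pi.single_apply, Fin.ext_iff, one_val, Fin.val_zero, map_zero,
          Pi.zero_apply]
      simp
  intro u v
  exact LinearMap.congr_fun (LinearMap.congr_fun key u) v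

/-- `[N^2, L] ⊆ N^2`. -/
lemma lc_one_right {b : L →ₗ[ℂ] L →ₗ[ℂ] L} (hL : IsLeibnizBracket b) {N : Submodule ℂ L}
    (h : IsLeibnizIdeal b N) {u : L} (hu : u ∈ lowerCentral b N 1) (x : L) :
    b u x ∈ lowerCentral b N 1 := by
  have : lowerCentral b N 1 ≤ (lowerCentral b N 1).comap (b.flip x) := by
    refine bracketSpan_le fun p hp q hq => ?_
    rw [Submodule.mem_comap, LinearMap.flip_apply, hL]
    exact add_mem (mem_bracketSpan (ideal_left h hp x) hq)
      (mem_bracketSpan hp (ideal_left h hq x))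
  exact this hu

/-- `R_x` has no eigenvalue `-1` on `N^2`. -/
lemma no_eig {b : L →ₗ[ℂ] L →ₗ[ℂ] L} (hL : IsLeibnizBracket b) {N : Submodule ℂ L}
    (h : IsLeibnizIdeal b N) {x : L} {n : ℕ} (hn : lowerCentral b N n = ⊥)
    (h0 : ∀ u ∈ N, b u x - (-1 : ℂ) • u ∈ lowerCentral b N 1)
    {w : L} (hw : w ∈ lowerCentral b N 1) (hwx : b w x = -w) : w = 0 := by
  have key : ∀ k, w ∈ lowerCentral b N (k + 1) := by
    intro k
    induction k with
    | zero => exact hw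
    | succ k ih =>
      have h1 := lc_graded hL h x (-1) h0 (k + 1) w ih
      have h2 : b w x - ((((k + 1 : ℕ) : ℂ) + 1) * (-1)) • w = ((k : ℂ) + 1) • w := by
        rw [hwx]; push_cast; module
      rw [h2] at h1
      exact (Submodule.smul_mem_iff _ (Nat.cast_add_one_ne_zero k)).1 h1
  have := lc_succ_le h n (key n)
  rwa [hn, Submodule.mem_bot] at this

end Helpers

/-- Any finite-dimensional complex solvable non-nilpotent Leibniz algebra whose nilradical is
null-filiform of dimension `n ≥ 2` has dimension `n + 1` and is isomorphic to `R₀`. -/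
theorem solvable_leibniz_with_nullfiliform_nilradical
    (n : ℕ) (hn : 2 ≤ n)
    (L : Type) [AddCommGroup L] [Module ℂ L] [FiniteDimensional ℂ L]
    (b : L →ₗ[ℂ] L →ₗ[ℂ] L) (hLeib : IsLeibnizBracket b)
    (hsolv : IsSolvableBracket b)
    (hnotnilp : ¬ IsNilpotentOn b (⊤ : Submodule ℂ L))
    (N : Submodule ℂ L) (hNrad : IsNilradical b N)
    (hNF : IsNullFiliform b N n) :
    Module.finrank ℂ L = n + 1 ∧
      ∃ φ : L ≃ₗ[ℂ] (Fin (n + 1) → ℂ),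
        ∀ u v : L, φ (b u v) = bracketR0 n (φ u) (φ v) := by
  have hI := hNrad.1
  have hd : ∀ k, k ≤ n → Module.finrank ℂ (lowerCentral b N k) = n - k := by
    intro k hk
    have := hNF.2 (k + 1) (by omega) (by omega)
    rw [show k + 1 - 1 = k by omega] at this
    omega
  have hbot : lowerCentral b N n = ⊥ := by
    apply Submodule.finrank_eq_zero.1
    rw [hd n le_rfl]; omega
  -- every element outside `N^2` generates
  have hgen : ∀ v ∈ N, v ∉ lowerCentral b N 1 →
      ∀ u ∈ N, ∃ c : ℂ, u - c • v ∈ lowerCentral b N 1 := by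
    intro v hv hv1 u hu
    have hlt : lowerCentral b N 1 < lowerCentral b N 1 ⊔ Submodule.span ℂ {v} := by
      refine lt_of_le_of_ne le_sup_left fun h => hv1 ?_
      rw [h]
      exact Submodule.mem_sup_right (Submodule.mem_span_singleton_self v)
    have hle : lowerCentral b N 1 ⊔ Submodule.span ℂ {v} ≤ N :=
      sup_le (lc_le hI 1) (Submodule.span_le.2 (by simpa using hv))
    have hfr := Submodule.finrank_lt_finrank_of_lt hlt
    rw [hd 1 (by omega)] at hfr
    have heq := Submodule.eq_of_le_of_finrank_le hle (by rw [hNF.1]; omega)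
    rw [← heq] at hu
    obtain ⟨y, hy, z, hz, rfl⟩ := Submodule.mem_sup.1 hu
    obtain ⟨c, rfl⟩ := Submodule.mem_span_singleton.1 hz
    exact ⟨c, by simpa using hy⟩
  obtain ⟨e, heN, he1⟩ : ∃ e ∈ N, e ∉ lowerCentral b N 1 := by
    by_contra! hcon
    have := Submodule.finrank_mono (show N ≤ lowerCentral b N 1 from hcon)
    rw [hd 1 (by omega), hNF.1] at this
    omega
  obtain ⟨g, hge, hgk⟩ : ∃ g : L →ₗ[ℂ] ℂ, g e = 1 ∧ ∀ u ∈ lowerCentral b N 1, g u = 0 := by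
    obtain ⟨f, hf, hf2⟩ := Submodule.exists_le_ker_of_notMem he1
    refine ⟨(f e)⁻¹ • f, by simp [hf], fun u hu => ?_⟩
    have := hf2 hu
    rw [LinearMap.mem_ker] at this
    simp [this]
  let α : L →ₗ[ℂ] ℂ := g ∘ₗ b e
  have hα : ∀ x, ∀ u ∈ N, b u x - α x • u ∈ lowerCentral b N 1 := by
    intro x u hu
    obtain ⟨c, hc⟩ := hgen e heN he1 u hu
    obtain ⟨d, hd⟩ := hgen e heN he1 (b e x) (ideal_left hI heN x)
    have hdα : α x = d := by
      have := hgk _ hd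
      simp only [map_sub, map_smul, hge, smul_eq_mul, mul_one] at this
      exact sub_eq_zero.1 this
    have h1 := lc_one_right hLeib hI hc x
    have h2 : b u x - α x • u =
        b (u - c • e) x + c • (b e x - d • e) - d • (u - c • e) := by
      rw [hdα]
      simp only [map_sub, map_smul, LinearMap.sub_apply, LinearMap.smul_apply]
      module
    rw [h2]
    exact sub_mem (add_mem h1 (Submodule.smul_mem _ _ hd)) (Submodule.smul_mem _ _ hc)
  have hαb : ∀ x y, b x y ∈ LinearMap.ker α := by
    intro x y
    have h1 := hgk _ (hα y (b e x) (ideal_left hI heN x))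
    have h2 := hgk _ (hα x (b e y) (ideal_left hI heN y))
    simp only [map_sub, map_smul, smul_eq_mul] at h1 h2
    have e1 : α x = g (b e x) := rfl
    have e2 : α y = g (b e y) := rfl
    rw [LinearMap.mem_ker]
    change g (b e (b x y)) = 0
    rw [leib_right hLeib, map_sub]
    rw [e2] at h1
    rw [e1] at h2
    linear_combination h1 - h2
  obtain ⟨hLN, hkerN⟩ := ker_le_nilradical hLeib hsolv hNrad hαb (by
    intro k u hu x hx
    have := lc_graded hLeib hI x (α x) (hα x) k u hu
    rw [LinearMap.mem_ker.1 hx] at this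
    simpa using this)
  have hNker : N ≤ LinearMap.ker α := fun u hu => LinearMap.mem_ker.2 (hgk _ (mem_bracketSpan heN hu))
  have hker : LinearMap.ker α = N := le_antisymm hkerN hNker
  have hα0 : α ≠ 0 := by
    intro h
    apply hnotnilp
    have : N = ⊤ := by rw [← hker, h, LinearMap.ker_zero]
    rw [← this]; exact hNrad.2.1
  have hdim : Module.finrank ℂ L = n + 1 := by
    rw [← Module.Dual.finrank_ker_add_one_of_ne_zero (f := α) hα0, hker, hNF.1]
  refine ⟨hdim, ?_⟩
  obtain ⟨x, hx⟩ : ∃ x, α x = -1 := by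
    obtain ⟨y, hy⟩ : ∃ y, α y ≠ 0 := by
      by_contra! h
      exact hα0 (LinearMap.ext h)
    exact ⟨(-(α y)⁻¹) • y, by simp [hy]⟩
  -- eigenvector
  have hαx : ∀ u ∈ N, b u x - (-1 : ℂ) • u ∈ lowerCentral b N 1 := by
    rw [← hx]; exact hα x
  obtain ⟨v, hvN, hv0, hvx⟩ : ∃ v ∈ N, v ≠ 0 ∧ b v x = -v := by
    let T : N →ₗ[ℂ] lowerCentral b N 1 :=
      ((b.flip x - (-1 : ℂ) • LinearMap.id).comp N.subtype).codRestrict _ (by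
        intro u
        simpa using hαx u u.2)
    have hT : LinearMap.ker T ≠ ⊥ := LinearMap.ker_ne_bot_of_finrank_lt (by
      rw [hd 1 (by omega), hNF.1]; omega)
    obtain ⟨u, hu, hu0⟩ := Submodule.exists_mem_ne_zero_of_ne_bot hT
    refine ⟨u, u.2, by simpa using hu0, ?_⟩
    have := congrArg Subtype.val (LinearMap.mem_ker.1 hu)
    simp [T] at this
    exact eq_neg_of_add_eq_zero_left this
  have hv1 : v ∉ lowerCentral b N 1 := fun h => hv0 (no_eig hLeib hI hbot hαx h hvx)
  have hv := hgen v hvN hv1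
  have hfx : ∀ k, b (fil b v k) x = (-((k : ℂ) + 1)) • fil b v k := by
    intro k
    induction k with
    | zero => simp [fil, hvx]
    | succ k ih =>
      have : fil b v (k + 1) = b (fil b v k) v := rfl
      rw [this, hLeib, ih, hvx]
      simp only [map_smul, map_neg, LinearMap.smul_apply]
      push_cast
      module
  have hexp : ∀ u ∈ N, ∃ c : ℕ → ℂ, u = ∑ i ∈ Finset.range n, c i • fil b v i := by
    intro u hu
    obtain ⟨c, hc⟩ := fil_expand hLeib hvN hv n u hu
    rw [hbot, Submodule.mem_bot] at hc
    exact ⟨c, sub_eq_zero.1 hc⟩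
  have hf1 : fil b v 1 ≠ 0 := by
    intro h
    have hle : lowerCentral b N 1 ≤ lowerCentral b N 2 := by
      intro u hu
      obtain ⟨c, hc⟩ := lc_decomp hLeib hvN hv 1 u hu
      simpa [h] using hc
    have := Submodule.finrank_mono hle
    rw [hd 1 (by omega), hd 2 hn] at this
    omega
  have hsumann : ∀ (c : ℕ → ℂ) (u : L), b u (∑ i ∈ Finset.range n, c i • fil b v i) = c 0 • b u v := by
    intro c u
    obtain ⟨m, rfl⟩ : ∃ m, n = m + 1 := ⟨n - 1, by omega⟩
    rw [Finset.sum_range_succ', map_add, map_sum]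
    simp only [map_smul, fil_ann hLeib, smul_zero, Finset.sum_const_zero, zero_add]
    rfl
  -- correct `x`
  obtain ⟨y, hyN, hyx, hyann⟩ : ∃ y ∈ N, b y x = - b x x ∧ ∀ u, b u y = 0 := by
    obtain ⟨c, hc⟩ := hexp (b x x) (hLN x x)
    have hc0 : c 0 = 0 := by
      have h1 := hsumann c v
      rw [← hc, leib_right hLeib, sub_self] at h1
      exact (smul_eq_zero.1 h1.symm).resolve_right hf1
    refine ⟨∑ i ∈ Finset.range n, (c i / ((i : ℂ) + 1)) • fil b v i, ?_, ?_, ?_⟩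
    · exact sum_mem fun i _ => Submodule.smul_mem _ _ (lc_le hI i (fil_mem hvN i))
    · rw [hc, map_sum, LinearMap.sum_apply, ← Finset.sum_neg_distrib]
      refine Finset.sum_congr rfl fun i _ => ?_
      rw [map_smul, LinearMap.smul_apply, hfx, smul_smul, ← neg_smul]
      congr 1
      have : (i : ℂ) + 1 ≠ 0 := Nat.cast_add_one_ne_zero i
      field_simp
    · intro u
      rw [hsumann (fun i => c i / ((i : ℂ) + 1))]
      simp [hc0]
  let x' := x + y
  have hbx' : ∀ u, b u x' = b u x := fun u => by simp [x', hyann]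
  have hx'x' : b x' x' = 0 := by
    rw [hbx']; simp [x', hyx]
  have hx'α : α x' = -1 := by
    simp only [x', map_add, hx, LinearMap.mem_ker.1 (hNker hyN), add_zero]
  have hx'v : b x' v = v := by
    have h1 : b (b x' v) x = - b x' v := by
      rw [← hbx', hLeib, hx'x', hbx' v, hvx]; simp
    obtain ⟨c, hc⟩ := hv (b x' v) (hLN _ _)
    have h2 := no_eig hLeib hI hbot hαx hc (by
      simp only [map_sub, map_smul, LinearMap.sub_apply, LinearMap.smul_apply, h1, hvx]
      module)
    have h3 : b x' v = c • v := sub_eq_zero.1 h2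
    have h4 : b v (b x' v) + b v (b v x') = 0 := by
      rw [leib_right hLeib, leib_right hLeib]; abel
    rw [h3, hbx' v, hvx] at h4
    have h5 : (c - 1) • fil b v 1 = 0 := by
      rw [← h4]; simp only [fil, map_smul, map_neg]; module
    have h6 : c = 1 := sub_eq_zero.1 ((smul_eq_zero.1 h5).resolve_right hf1)
    rw [h3, h6, one_smul]
  -- the basis
  let E : ℕ → L := fun i => Nat.casesOn i x' (fil b v)
  have hspan : ⊤ ≤ Submodule.span ℂ (Set.range fun i : Fin (n + 1) => E i) := by
    intro u _
    have hmem : ∀ i, i < n + 1 → E i ∈ Submodule.span ℂ (Set.range fun i : Fin (n + 1) => E i) :=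
      fun i hi => Submodule.subset_span ⟨⟨i, hi⟩, rfl⟩
    obtain ⟨c, hc⟩ := hexp (u + α u • x') (by
      rw [← hker, LinearMap.mem_ker]; simp [hx'α])
    have hu : u = (∑ i ∈ Finset.range n, c i • fil b v i) - α u • x' := by rw [← hc]; abel
    rw [hu]
    refine sub_mem (sum_mem fun i hi => Submodule.smul_mem _ _ ?_) (Submodule.smul_mem _ _ ?_)
    · exact hmem (i + 1) (by have := Finset.mem_range.1 hi; omega)
    · exact hmem 0 (by omega)
  refine final_iso hn E ?_ hspan ?_ ?_ ?_ ?_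
  · exact linearIndependent_of_top_le_span_of_card_eq_finrank hspan (by simp [hdim])
  · have := fil_mem (b := b) hvN n
    rwa [hbot, Submodule.mem_bot] at this
  · rintro (_ | i)
    · simpa [E] using hx'x'
    · change b (fil b v i) x' = _
      rw [hbx', hfx]
      push_cast
      rfl
  · rintro (_ | i)
    · exact hx'v
    · rfl
  · intro i j
    exact fil_ann hLeib v _ j
end
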